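/- arXiv:0711.4838 — 3 statements merged into one kernel-verified Lean document; each statement's English description precedes it below -/
import Mathlib

section
/- For every prime p there exist finite groups G₁ and G₂ of the same order, this order being a power of p, such that G₁ and G₂ are not isomorphic but for every natural number k the integral cohomology groups Hᵏ(G₁;ℤ) and Hᵏ(G₂;ℤ) are isomorphic as abelian groups. -/
/-!
Let `τ` be an automorphism of a finite abelian group `A` and let `τ` act through the first or
through the second factor of `C_m × C_n`; the two semidirect products are the groups `G₁` and `G₂`.
Tensoring the bar complex of `A` with the periodic resolutions of `C_m` and `C_n` gives a free
resolution over each of them, whose invariant cochains are double sequences of bar cochains of `A`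
with the differential built from `1 - T` and `N = 1 + T + ⋯` in one direction, where `T` is induced
by `τ`, and from `0` and `1 + 1 + ⋯` in the other. The transfer makes `|A|` null-homotopic away
from the projection `e` onto the constants, on which `T` acts trivially. Hence, if `m` and `n` are
divisible by `|A|` times the order of `τ`, both sums are homotopic to `m e` or `n e`, and after an
automorphism of the double sequences the differentials differ only in the direction in which
`1 - T` occurs. As `(1 - T) e = 0`, swapping the two directions on the complement of `e` and
leaving them in place on `e` identifies the two complexes.

If `n = m · orderOf τ` then the generator of `C_n` is central of order `n` in `G₁`, whereas the
center of `G₂` has exponent dividing `m`.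
-/

open CategoryTheory

universe u

section ContractedComplexes

open Finsupp (single)

variable {k X Y : Type*} [CommRing k]

/-- The parity operator, scaling each basis element `x` by `(-1) ^ deg x`. -/
noncomputable def parityOp (k : Type*) [CommRing k] (deg : X → ℕ) : Module.End k (X →₀ k) :=
  Finsupp.linearCombination k fun x => single x ((-1) ^ deg x)

/-- The projection onto the span of `base` which sends every basis element of degree zero to
`base`, that is, the augmentation followed by its section. -/
noncomputable def augmentationProj (k : Type*) [CommRing k] (deg : X → ℕ) (base : X) :
    Module.End k (X →₀ k) :=
  Finsupp.linearCombination k fun x => if deg x = 0 then single base 1 else 0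

/-- A non-negatively graded complex of free `k`-modules with homogeneous basis `X`, together with a
homotopy `s` contracting it onto the line spanned by a basis element `base` of degree zero. -/
structure ContractedComplex (k X : Type*) [CommRing k] where
  deg : X → ℕ
  base : X
  deg_base : deg base = 0
  d : Module.End k (X →₀ k)
  s : Module.End k (X →₀ k)
  deg_of_d_ne_zero : ∀ {x y}, d (single x 1) y ≠ 0 → deg x = deg y + 1
  deg_of_s_ne_zero : ∀ {x y}, s (single x 1) y ≠ 0 → deg y = deg x + 1
  d_mul_d : d * d = 0
  homotopy : d * s + s * d + augmentationProj k deg base = 1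

theorem end_ext_single {F F' : Module.End k (X →₀ k)}
    (h : ∀ x, F (single x 1) = F' (single x 1)) : F = F' :=
  Finsupp.lhom_ext' fun x => LinearMap.ext_ring (h x)

theorem map_mem_supported {F : (X →₀ k) →ₗ[k] (Y →₀ k)} {s : Set X} {t : Set Y}
    (hF : ∀ x ∈ s, ∀ y, F (single x 1) y ≠ 0 → y ∈ t) {v : X →₀ k}
    (hv : v ∈ Finsupp.supported k k s) : F v ∈ Finsupp.supported k k t := by
  suffices Finsupp.supported k k s ≤ (Finsupp.supported k k t).comap F from this hv
  rw [Finsupp.supported_eq_span_single, Submodule.span_le]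
  rintro _ ⟨x, hx, rfl⟩ y hy
  exact hF x hx y (Finsupp.mem_support_iff.1 hy)

theorem parityOp_single (deg : X → ℕ) (x : X) :
    parityOp k deg (single x 1) = (-1 : k) ^ deg x • single x 1 := by
  simp [parityOp]

theorem parityOp_apply (deg : X → ℕ) (v : X →₀ k) (y : X) :
    parityOp k deg v y = (-1) ^ deg y * v y := by
  induction v using Finsupp.induction_linear with
  | zero => simp
  | add v w hv hw => simp [hv, hw, mul_add]
  | single x a =>
    obtain rfl | h := eq_or_ne x y
    · simp [parityOp, mul_comm]
    · simp [parityOp, h]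

theorem augmentationProj_single (deg : X → ℕ) (base x : X) :
    augmentationProj k deg base (single x 1) = if deg x = 0 then single base 1 else 0 := by
  simp [augmentationProj]

theorem parityOp_mul_add_mul_parityOp (deg : X → ℕ) (F : Module.End k (X →₀ k))
    (hF : ∀ x y, F (single x 1) y ≠ 0 → deg x = deg y + 1 ∨ deg y = deg x + 1) :
    parityOp k deg * F + F * parityOp k deg = 0 :=
  end_ext_single fun x => by
    ext y
    simp only [Module.End.mul_apply, LinearMap.add_apply, Finsupp.add_apply, parityOp_apply,
      parityOp_single, map_smul, Finsupp.smul_apply, smul_eq_mul, LinearMap.zero_apply,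
      Finsupp.zero_apply]
    by_cases hy : F (single x 1) y = 0
    · simp [hy]
    · rcases hF x y hy with h | h <;> simp [h, pow_succ]

theorem ne_zero_or_ne_zero_of_add_ne_zero {a b : k} (h : a + b ≠ 0) : a ≠ 0 ∨ b ≠ 0 := by
  contrapose! h
  rw [h.1, h.2, add_zero]

section RingIdentities

variable {R : Type*} [Ring R] {d s π σ d' s' π' : R}

theorem proj_mul_eq_zero (hdd : d * d = 0) (hds : d * s + s * d + π = 1) (hdπ : d * π = 0) :
    π * d = 0 := by
  have hdsd : d * s * d = d := by
    simpa [mul_add, ← mul_assoc, hdd, hdπ] using congrArg (d * ·) hds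
  simpa [add_mul, hdsd, mul_assoc s, hdd] using congrArg (· * d) hds

theorem tensor_d_mul_d (hdd : d * d = 0) (hdd' : d' * d' = 0) (hσd : σ * d + d * σ = 0)
    (hd : Commute d d') (hσ : Commute σ d') : (d + σ * d') * (d + σ * d') = 0 := by
  calc (d + σ * d') * (d + σ * d')
      = d * d + d * σ * d' + σ * (d' * d) + σ * (d' * σ) * d' := by noncomm_ring
    _ = d * d + (σ * d + d * σ) * d' + σ * σ * (d' * d') := by
        rw [← hd.eq, ← hσ.eq]
        noncomm_ring
    _ = 0 := by rw [hdd, hdd', hσd]; simp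

theorem tensor_homotopy (hds : d * s + s * d + π = 1) (hds' : d' * s' + s' * d' + π' = 1)
    (hdπ : d * π = 0) (hπd : π * d = 0) (hσs : σ * s + s * σ = 0) (hσπ : σ * π = π)
    (hπσ : π * σ = π) (hd : Commute d s') (hs : Commute s d') (hπ : Commute π d')
    (hσ : Commute σ s') :
    (d + σ * d') * (s + π * s') + (s + π * s') * (d + σ * d') + π * π' = 1 := by
  calc (d + σ * d') * (s + π * s') + (s + π * s') * (d + σ * d') + π * π'
      = (d * s + s * d) + d * π * s' + π * (s' * d) + σ * (d' * s) + s * σ * d' +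
          σ * (d' * π) * s' + π * (s' * σ) * d' + π * π' := by noncomm_ring
    _ = (d * s + s * d) + d * π * s' + π * d * s' + (σ * s + s * σ) * d' + σ * π * d' * s' +
          π * σ * s' * d' + π * π' := by
        rw [← hd.eq, ← hs.eq, ← hπ.eq, ← hσ.eq]
        noncomm_ring
    _ = (d * s + s * d) + π * (d' * s' + s' * d' + π') := by
        rw [hdπ, hπd, hσs, hσπ, hπσ]
        noncomm_ring
    _ = 1 := by rw [hds', mul_one, hds]

end RingIdentities

/-- The operator `F ⊗ 1` on the tensor product of two free modules. -/
noncomputable def leftOp (k X Y : Type*) [CommRing k] :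
    Module.End k (X →₀ k) →ₐ[k] Module.End k (X × Y →₀ k) :=
  ((finsuppTensorFinsupp' k X Y).conjAlgEquiv k).toAlgHom.comp (Module.End.rTensorAlgHom k _ _)

/-- The operator `1 ⊗ F` on the tensor product of two free modules. -/
noncomputable def rightOp (k X Y : Type*) [CommRing k] :
    Module.End k (Y →₀ k) →ₐ[k] Module.End k (X × Y →₀ k) :=
  ((finsuppTensorFinsupp' k X Y).conjAlgEquiv k).toAlgHom.comp (Module.End.lTensorAlgHom k _ _)

theorem leftOp_tmul (F : Module.End k (X →₀ k)) (v : X →₀ k) (w : Y →₀ k) :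
    leftOp k X Y F (finsuppTensorFinsupp' k X Y (v ⊗ₜ w)) =
      finsuppTensorFinsupp' k X Y (F v ⊗ₜ w) := by
  change finsuppTensorFinsupp' k X Y (LinearMap.rTensor _ F (LinearEquiv.symm _ _)) = _
  rw [LinearEquiv.symm_apply_apply, LinearMap.rTensor_tmul]

theorem rightOp_tmul (F : Module.End k (Y →₀ k)) (v : X →₀ k) (w : Y →₀ k) :
    rightOp k X Y F (finsuppTensorFinsupp' k X Y (v ⊗ₜ w)) =
      finsuppTensorFinsupp' k X Y (v ⊗ₜ F w) := by
  change finsuppTensorFinsupp' k X Y (LinearMap.lTensor _ F (LinearEquiv.symm _ _)) = _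
  rw [LinearEquiv.symm_apply_apply, LinearMap.lTensor_tmul]

theorem single_eq_tmul (z : X × Y) :
    single z (1 : k) = finsuppTensorFinsupp' k X Y (single z.1 1 ⊗ₜ single z.2 1) := by
  simp

theorem commute_leftOp_rightOp (F : Module.End k (X →₀ k)) (F' : Module.End k (Y →₀ k)) :
    Commute (leftOp k X Y F) (rightOp k X Y F') :=
  end_ext_single fun z => by
    simp only [Module.End.mul_apply, single_eq_tmul, leftOp_tmul, rightOp_tmul]

theorem leftOp_lmapDomain_mul_rightOp_lmapDomain (f : X → X) (g : Y → Y) :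
    leftOp k X Y (Finsupp.lmapDomain k k f) * rightOp k X Y (Finsupp.lmapDomain k k g) =
      Finsupp.lmapDomain k k (Prod.map f g) :=
  end_ext_single fun z => by
    rw [Module.End.mul_apply, single_eq_tmul, rightOp_tmul, leftOp_tmul]
    simp [Prod.map]

theorem leftOp_single_apply_ne_zero {F : Module.End k (X →₀ k)} {z z' : X × Y}
    (h : leftOp k X Y F (single z 1) z' ≠ 0) : F (single z.1 1) z'.1 ≠ 0 ∧ z'.2 = z.2 := by
  rw [single_eq_tmul, leftOp_tmul, finsuppTensorFinsupp'_apply_apply] at h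
  exact ⟨left_ne_zero_of_mul h, by_contra fun h' =>
    right_ne_zero_of_mul h (Finsupp.single_eq_of_ne h')⟩

theorem rightOp_single_apply_ne_zero {F : Module.End k (Y →₀ k)} {z z' : X × Y}
    (h : rightOp k X Y F (single z 1) z' ≠ 0) : z'.1 = z.1 ∧ F (single z.2 1) z'.2 ≠ 0 := by
  rw [single_eq_tmul, rightOp_tmul, finsuppTensorFinsupp'_apply_apply] at h
  exact ⟨by_contra fun h' => left_ne_zero_of_mul h (Finsupp.single_eq_of_ne h'),
    right_ne_zero_of_mul h⟩

theorem linearCombination_leftOp_single (f : X × Y → k) (F : Module.End k (X →₀ k)) (z : X × Y) :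
    Finsupp.linearCombination k f (leftOp k X Y F (single z 1)) =
      Finsupp.linearCombination k (fun x => f (x, z.2)) (F (single z.1 1)) := by
  rw [single_eq_tmul, leftOp_tmul]
  induction F (single z.1 1) using Finsupp.induction_linear with
  | zero => simp
  | add v w hv hw => rw [TensorProduct.add_tmul, map_add, map_add, map_add, hv, hw]
  | single x a => simp

theorem linearCombination_rightOp_single (f : X × Y → k) (F : Module.End k (Y →₀ k)) (z : X × Y) :
    Finsupp.linearCombination k f (rightOp k X Y F (single z 1)) =
      Finsupp.linearCombination k (fun y => f (z.1, y)) (F (single z.2 1)) := by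
  rw [single_eq_tmul, rightOp_tmul]
  induction F (single z.2 1) using Finsupp.induction_linear with
  | zero => simp
  | add v w hv hw => rw [TensorProduct.tmul_add, map_add, map_add, map_add, hv, hw]
  | single x a => simp

theorem leftOp_augmentationProj_mul_rightOp (deg : X → ℕ) (deg' : Y → ℕ) (b : X) (b' : Y) :
    leftOp k X Y (augmentationProj k deg b) * rightOp k X Y (augmentationProj k deg' b') =
      augmentationProj k (fun z => deg z.1 + deg' z.2) (b, b') :=
  end_ext_single fun z => by
    rw [Module.End.mul_apply, single_eq_tmul, rightOp_tmul, leftOp_tmul, ← single_eq_tmul]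
    simp only [augmentationProj_single]
    split_ifs <;> simp_all

theorem leftOp_parityOp_mul_single (deg : X → ℕ) (F : Module.End k (Y →₀ k)) (z : X × Y) :
    (leftOp k X Y (parityOp k deg) * rightOp k X Y F) (single z 1) =
      (-1 : k) ^ deg z.1 • rightOp k X Y F (single z 1) := by
  rw [(commute_leftOp_rightOp _ _).eq, Module.End.mul_apply, single_eq_tmul, leftOp_tmul,
    parityOp_single, ← TensorProduct.smul_tmul', map_smul, map_smul]

theorem leftOp_augmentationProj_mul_single (deg : X → ℕ) (b : X) (F : Module.End k (Y →₀ k))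
    (z : X × Y) : (leftOp k X Y (augmentationProj k deg b) * rightOp k X Y F) (single z 1) =
      if deg z.1 = 0 then rightOp k X Y F (single (b, z.2) 1) else 0 := by
  rw [(commute_leftOp_rightOp _ _).eq, Module.End.mul_apply, single_eq_tmul, leftOp_tmul,
    augmentationProj_single]
  split_ifs <;> simp

namespace ContractedComplex

variable (C : ContractedComplex k X)

theorem d_single_of_deg_eq_zero {x : X} (hx : C.deg x = 0) : C.d (single x 1) = 0 := by
  ext y
  by_contra h
  have := C.deg_of_d_ne_zero h
  omega

theorem d_mul_proj : C.d * augmentationProj k C.deg C.base = 0 :=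
  end_ext_single fun x => by
    rw [Module.End.mul_apply, augmentationProj_single]
    split_ifs
    · exact C.d_single_of_deg_eq_zero C.deg_base
    · simp

theorem proj_mul_d : augmentationProj k C.deg C.base * C.d = 0 :=
  proj_mul_eq_zero (R := Module.End k (X →₀ k)) C.d_mul_d C.homotopy C.d_mul_proj

theorem parityOp_d : parityOp k C.deg * C.d + C.d * parityOp k C.deg = 0 :=
  parityOp_mul_add_mul_parityOp _ _ fun _ _ h => .inl (C.deg_of_d_ne_zero h)

theorem parityOp_s : parityOp k C.deg * C.s + C.s * parityOp k C.deg = 0 :=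
  parityOp_mul_add_mul_parityOp _ _ fun _ _ h => .inr (C.deg_of_s_ne_zero h)

theorem parityOp_mul_proj : parityOp k C.deg * augmentationProj k C.deg C.base =
    augmentationProj k C.deg C.base :=
  end_ext_single fun x => by
    rw [Module.End.mul_apply, augmentationProj_single]
    split_ifs <;> simp [parityOp_single, C.deg_base]

theorem proj_mul_parityOp : augmentationProj k C.deg C.base * parityOp k C.deg =
    augmentationProj k C.deg C.base :=
  end_ext_single fun x => by
    rw [Module.End.mul_apply, parityOp_single, map_smul, augmentationProj_single]
    split_ifs with h <;> simp [h]

/-- The coboundary, defined on arbitrary functions on the basis. -/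
noncomputable def coboundary (f : X → k) (x : X) : k :=
  Finsupp.linearCombination k f (C.d (single x 1))

variable (C' : ContractedComplex k Y)

theorem prod_homotopy :
    (leftOp k X Y C.d + leftOp k X Y (parityOp k C.deg) * rightOp k X Y C'.d) *
        (leftOp k X Y C.s + leftOp k X Y (augmentationProj k C.deg C.base) * rightOp k X Y C'.s) +
      (leftOp k X Y C.s + leftOp k X Y (augmentationProj k C.deg C.base) * rightOp k X Y C'.s) *
        (leftOp k X Y C.d + leftOp k X Y (parityOp k C.deg) * rightOp k X Y C'.d) +
      augmentationProj k (fun z => C.deg z.1 + C'.deg z.2) (C.base, C'.base) = 1 := by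
  rw [← leftOp_augmentationProj_mul_rightOp]
  refine tensor_homotopy (R := Module.End k (X × Y →₀ k)) ?_ ?_ ?_ ?_ ?_ ?_ ?_
    (commute_leftOp_rightOp _ _) (commute_leftOp_rightOp _ _) (commute_leftOp_rightOp _ _)
    (commute_leftOp_rightOp _ _)
  · rw [← map_mul, ← map_mul, ← map_add, ← map_add, C.homotopy, map_one]
  · rw [← map_mul, ← map_mul, ← map_add, ← map_add, C'.homotopy, map_one]
  · rw [← map_mul, C.d_mul_proj, map_zero]
  · rw [← map_mul, C.proj_mul_d, map_zero]
  · rw [← map_mul, ← map_mul, ← map_add, C.parityOp_s, map_zero]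
  · rw [← map_mul, C.parityOp_mul_proj]
  · rw [← map_mul, C.proj_mul_parityOp]

/-- The tensor product of two contracted complexes, on the product basis. -/
noncomputable def prod : ContractedComplex k (X × Y) where
  deg z := C.deg z.1 + C'.deg z.2
  base := (C.base, C'.base)
  deg_base := by simp [C.deg_base, C'.deg_base]
  d := leftOp k X Y C.d + leftOp k X Y (parityOp k C.deg) * rightOp k X Y C'.d
  s := leftOp k X Y C.s + leftOp k X Y (augmentationProj k C.deg C.base) * rightOp k X Y C'.s
  deg_of_d_ne_zero {z z'} h := by
    obtain h | h := ne_zero_or_ne_zero_of_add_ne_zero h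
    · obtain ⟨h₁, h₂⟩ := leftOp_single_apply_ne_zero h
      rw [C.deg_of_d_ne_zero h₁, h₂]
      omega
    · obtain ⟨h₁, h₂⟩ := rightOp_single_apply_ne_zero
        (right_ne_zero_of_smul (leftOp_parityOp_mul_single C.deg C'.d z ▸ h))
      rw [C'.deg_of_d_ne_zero h₂, h₁]
      omega
  deg_of_s_ne_zero {z z'} h := by
    obtain h | h := ne_zero_or_ne_zero_of_add_ne_zero h
    · obtain ⟨h₁, h₂⟩ := leftOp_single_apply_ne_zero h
      rw [C.deg_of_s_ne_zero h₁, h₂]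
      omega
    · rw [leftOp_augmentationProj_mul_single] at h
      split_ifs at h with h₀
      · obtain ⟨h₁ : z'.1 = C.base, h₂⟩ := rightOp_single_apply_ne_zero h
        have hdeg : C'.deg z'.2 = C'.deg z.2 + 1 := C'.deg_of_s_ne_zero h₂
        rw [hdeg, h₁, h₀, C.deg_base]
        omega
      · exact absurd rfl h
  d_mul_d := tensor_d_mul_d (R := Module.End k (X × Y →₀ k))
    (by rw [← map_mul, C.d_mul_d, map_zero])
    (by rw [← map_mul, C'.d_mul_d, map_zero])
    (by rw [← map_mul, ← map_mul, ← map_add, C.parityOp_d, map_zero])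
    (commute_leftOp_rightOp _ _) (commute_leftOp_rightOp _ _)
  homotopy := C.prod_homotopy C'

theorem coboundary_prod (f : X × Y → k) (z : X × Y) :
    (C.prod C').coboundary f z = C.coboundary (fun x => f (x, z.2)) z.1 +
      (-1) ^ C.deg z.1 * C'.coboundary (fun y => f (z.1, y)) z.2 := by
  change Finsupp.linearCombination k f (_ + _) = _
  rw [map_add, linearCombination_leftOp_single, leftOp_parityOp_mul_single, map_smul,
    linearCombination_rightOp_single]
  rfl

theorem commute_prod_d {f : X → X} {g : Y → Y}
    (hf : Commute C.d (Finsupp.lmapDomain k k f)) (hg : Commute C'.d (Finsupp.lmapDomain k k g))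
    (hdeg : ∀ x, C.deg (f x) = C.deg x) :
    Commute (C.prod C').d (Finsupp.lmapDomain k k (Prod.map f g)) := by
  have hσ : Commute (parityOp k C.deg) (Finsupp.lmapDomain k k f) :=
    end_ext_single fun x => by simp [parityOp_single, hdeg]
  rw [← leftOp_lmapDomain_mul_rightOp_lmapDomain]
  exact (((hf.map _).mul_right (commute_leftOp_rightOp _ _)).add_left
    (((hσ.map _).mul_right (commute_leftOp_rightOp _ _)).mul_left
    ((commute_leftOp_rightOp _ _).symm.mul_right (hg.map _))))

end ContractedComplex

end ContractedComplexes

section Resolutions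

open Finsupp (single)

variable {k G X : Type u} [CommRing k] [Group G]

/-- The permutation representation on finitely supported functions on a `G`-set. -/
noncomputable def permRep (k G X : Type*) [CommRing k] [Group G] [MulAction G X] :
    Representation k G (X →₀ k) where
  toFun g := Finsupp.lmapDomain k k (g • ·)
  map_one' := by ext; simp
  map_mul' g h := by ext; simp [mul_smul]

theorem permRep_single [MulAction G X] (g : G) (x : X) (a : k) :
    permRep k G X g (single x a) = single (g • x) a := by
  simp [permRep]

theorem permRep_exists_lift [MulAction G X] (γ : X →[G] G) {E B : Type u} [AddCommGroup E]
    [AddCommGroup B] [Module k E] [Module k B] {ρE : Representation k G E}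
    {ρB : Representation k G B} (f : (permRep k G X).IntertwiningMap ρB)
    (e : ρE.IntertwiningMap ρB) (he : Function.Surjective e) :
    ∃ f' : (permRep k G X).IntertwiningMap ρE, e.comp f' = f := by
  choose v hv using fun x : X => he (f (single x 1))
  have hlift (x : X) : e (ρE (γ x) (v ((γ x)⁻¹ • x))) = f (single x 1) := by
    rw [e.isIntertwining, hv, ← f.isIntertwining, permRep_single, smul_inv_smul]
  refine ⟨⟨Finsupp.linearCombination k fun x => ρE (γ x) (v ((γ x)⁻¹ • x)), fun g => ?_⟩, ?_⟩
  · ext x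
    simp [permRep_single, smul_smul]
  · ext x
    simpa using hlift x

/-- An equivariant map `X → G` splits `X` into free orbits. -/
theorem projective_permRep [MulAction G X] (γ : X →[G] G) :
    Projective (Rep.of (permRep k G X)) := by
  refine ⟨fun {E B} f e he => ?_⟩
  rw [Rep.epi_iff_surjective] at he
  obtain ⟨f', hf'⟩ := permRep_exists_lift γ f.hom e.hom he
  exact ⟨Rep.ofHom f', Rep.hom_ext hf'⟩

/-- A projective resolution of the trivial representation from an explicit exact sequence. -/
noncomputable def resolutionOfExact (P : ℕ → Rep.{u} k G) (hP : ∀ n, Projective (P n))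
    (d : ∀ n, P (n + 1) ⟶ P n) (hd : ∀ n, d (n + 1) ≫ d n = 0) (ε : P 0 ⟶ Rep.trivial k G k)
    (hdε : d 0 ≫ ε = 0) (hε : Function.Surjective ε.hom)
    (exact₀ : ∀ v, ε.hom v = 0 → ∃ w, (d 0).hom w = v)
    (exact : ∀ n v, (d n).hom v = 0 → ∃ w, (d (n + 1)).hom w = v) :
    ProjectiveResolution (Rep.trivial k G k) where
  complex := ChainComplex.of P d hd
  projective := hP
  π := ((ChainComplex.of P d hd).toSingle₀Equiv _).symm
    ⟨ε, (congrArg (· ≫ ε) (ChainComplex.of_d P d 0)).trans hdε⟩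
  quasiIso := by
    refine ⟨fun n => ?_⟩
    cases n with
    | zero =>
      rw [ChainComplex.quasiIsoAt₀_iff, ShortComplex.quasiIso_iff_of_zeros' _ rfl rfl rfl]
      constructor
      · apply (forget₂ _ (ModuleCat k)).reflects_exact_of_faithful
        rw [ShortComplex.moduleCat_exact_iff]
        intro v hv
        obtain ⟨w, hw⟩ := exact₀ v (by simpa [ChainComplex.toSingle₀Equiv] using! hv)
        exact ⟨w, by simpa [ChainComplex.of_d P d 0] using! hw⟩
      · rw [Rep.epi_iff_surjective]
        simpa [ChainComplex.toSingle₀Equiv] using! hε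
    | succ n =>
      rw [quasiIsoAt_iff_exactAt' (hL := ChainComplex.exactAt_succ_single_obj ..),
        HomologicalComplex.exactAt_iff' _ (n + 2) (n + 1) n (by simp) (by simp)]
      apply (forget₂ _ (ModuleCat k)).reflects_exact_of_faithful
      rw [ShortComplex.moduleCat_exact_iff]
      intro v hv
      obtain ⟨w, hw⟩ := exact n v (by simpa using! hv)
      have h : ChainComplex.of.d P d (n + 2) (n + 1) = d (n + 1) := ChainComplex.of_d P d (n + 1)
      exact ⟨w, by simpa [h] using! hw⟩

theorem nonempty_groupCohomology_iso_of_cochains {G' : Type u} [Group G']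
    (P : ProjectiveResolution (Rep.trivial k G k)) (P' : ProjectiveResolution (Rep.trivial k G' k))
    (Θ : ∀ n, (P.complex.X n ⟶ Rep.trivial k G k) ≃ₗ[k] (P'.complex.X n ⟶ Rep.trivial k G' k))
    (hΘ : ∀ n f, Θ (n + 1) (P.complex.d (n + 1) n ≫ f) = P'.complex.d (n + 1) n ≫ Θ n f) (n : ℕ) :
    Nonempty (groupCohomology (Rep.trivial k G k) n ≅ groupCohomology (Rep.trivial k G' k) n) := by
  refine ⟨groupCohomologyIso _ n P ≪≫ ?_ ≪≫ (groupCohomologyIso _ n P').symm⟩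
  refine HomologicalComplex.homologyMapIso (HomologicalComplex.Hom.isoOfComponents
    (fun n => (Θ n).toModuleIso) ?_) n
  rintro i j h
  obtain rfl : i + 1 = j := h
  ext f
  exact (hΘ i f).symm

namespace ContractedComplex

variable (C : ContractedComplex k X)

/-- The chains of degree `n`. -/
abbrev chains (n : ℕ) : Submodule k (X →₀ k) := Finsupp.supported k k {x | C.deg x = n}

/-- The differential on chains of degree `n + 1`. -/
noncomputable def chainsD (n : ℕ) : C.chains (n + 1) →ₗ[k] C.chains n :=
  C.d.restrict fun _ => map_mem_supported fun x (hx : C.deg x = n + 1) y hy => by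
    have := C.deg_of_d_ne_zero hy
    change C.deg y = n
    omega

theorem s_mem_chains {n : ℕ} {v : X →₀ k} (hv : v ∈ C.chains n) : C.s v ∈ C.chains (n + 1) :=
  map_mem_supported (fun x (hx : C.deg x = n) y hy => by
    rw [Set.mem_ofPred_eq, C.deg_of_s_ne_zero hy, hx]) hv

variable {C} in
theorem map_eq_map_of_mem_chains {M : Type*} [AddCommGroup M] [Module k M]
    {F F' : (X →₀ k) →ₗ[k] M} {n : ℕ}
    (h : ∀ x, C.deg x = n → F (single x 1) = F' (single x 1)) {v : X →₀ k}
    (hv : v ∈ C.chains n) : F v = F' v := by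
  suffices C.chains n ≤ LinearMap.eqLocus F F' from this hv
  rw [chains, Finsupp.supported_eq_span_single, Submodule.span_le]
  rintro _ ⟨x, hx, rfl⟩
  exact h x hx

theorem proj_apply {v : X →₀ k} (hv : v ∈ C.chains 0) :
    augmentationProj k C.deg C.base v =
      Finsupp.linearCombination k (fun _ => (1 : k)) v • single C.base 1 :=
  map_eq_map_of_mem_chains (F' := (Finsupp.linearCombination k fun _ => (1 : k)).smulRight _)
    (fun x hx => by simp [augmentationProj_single, hx]) hv

theorem proj_eq_zero {n : ℕ} {v : X →₀ k} (hv : v ∈ C.chains (n + 1)) :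
    augmentationProj k C.deg C.base v = 0 :=
  map_eq_map_of_mem_chains (F' := 0) (fun x hx => by simp [augmentationProj_single, hx]) hv

theorem d_eq_zero {v : X →₀ k} (hv : v ∈ C.chains 0) : C.d v = 0 :=
  map_eq_map_of_mem_chains (F' := 0) (fun _ hx => C.d_single_of_deg_eq_zero hx) hv

theorem d_s_apply {v : X →₀ k} (hd : C.d v = 0)
    (hv : augmentationProj k C.deg C.base v = 0) : C.d (C.s v) = v := by
  simpa [hd, hv] using LinearMap.congr_fun C.homotopy v

/-- The action of `G` on the basis preserves degrees and commutes with the differential. -/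
structure IsEquivariant (G : Type*) [Group G] [MulAction G X] : Prop where
  deg_smul : ∀ (g : G) (x : X), C.deg (g • x) = C.deg x
  commute_d : ∀ g : G, Commute C.d (permRep k G X g)

variable {C} [MulAction G X]

namespace IsEquivariant

theorem permRep_mem_chains (hC : C.IsEquivariant G) {n : ℕ} (g : G) {v : X →₀ k}
    (hv : v ∈ C.chains n) : permRep k G X g v ∈ C.chains n :=
  map_mem_supported (fun x (hx : C.deg x = n) y hy => by
    rw [permRep_single, Finsupp.single_apply_ne_zero] at hy
    rw [Set.mem_ofPred_eq, hy.1, hC.deg_smul, hx]) hv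

/-- The representation on chains of degree `n`. -/
noncomputable abbrev chainsRep (hC : C.IsEquivariant G) (n : ℕ) : Rep.{u} k G :=
  Rep.of (X := C.chains n)
    ((permRep k G X).subrepresentation (C.chains n) fun g _ => hC.permRep_mem_chains g)

theorem filter_permRep (hC : C.IsEquivariant G) (n : ℕ) (g : G) (v : X →₀ k) :
    (permRep k G X g v).filter (C.deg · = n) = permRep k G X g (v.filter (C.deg · = n)) := by
  induction v using Finsupp.induction_linear with
  | zero => simp [Finsupp.filter_zero]
  | add v w hv hw => simp only [map_add, Finsupp.filter_add, hv, hw]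
  | single x a =>
    by_cases hx : C.deg x = n <;> simp [permRep_single, hC.deg_smul, hx]

theorem projective_chainsRep (hC : C.IsEquivariant G) (γ : X →[G] G) (n : ℕ) :
    Projective (hC.chainsRep n) := by
  have := projective_permRep (k := k) γ
  exact Retract.projective (Y := Rep.of (permRep k G X))
    ⟨Rep.ofHom ⟨(C.chains n).subtype, fun g => rfl⟩,
      Rep.ofHom ⟨Finsupp.restrictDom k k {x | C.deg x = n}, fun g => LinearMap.ext fun v =>
        Subtype.ext (hC.filter_permRep n g v)⟩,
      Rep.hom_ext <| Representation.IntertwiningMap.toLinearMap_injective _ _ <|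
        Finsupp.restrictDom_comp_subtype _⟩

/-- The differential as a morphism of representations. -/
noncomputable def dHom (hC : C.IsEquivariant G) (n : ℕ) : hC.chainsRep (n + 1) ⟶ hC.chainsRep n :=
  Rep.ofHom ⟨C.chainsD n, fun g => LinearMap.ext fun v =>
    Subtype.ext (LinearMap.congr_fun (hC.commute_d g).eq v.1)⟩

/-- The augmentation on chains of degree zero. -/
noncomputable def augmentation (hC : C.IsEquivariant G) : hC.chainsRep 0 ⟶ Rep.trivial k G k :=
  Rep.ofHom ⟨Finsupp.linearCombination k (fun _ => (1 : k)) ∘ₗ (C.chains 0).subtype,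
    fun g => LinearMap.ext fun v => by
      change Finsupp.linearCombination k _ (Finsupp.mapDomain _ v.1) = _
      rw [Finsupp.linearCombination_mapDomain]
      rfl⟩

theorem d_augmentation (hC : C.IsEquivariant G) : hC.dHom 0 ≫ hC.augmentation = 0 := by
  refine Rep.hom_ext <| Representation.IntertwiningMap.toLinearMap_injective _ _ <|
    LinearMap.ext fun v => ?_
  have h := DFunLike.congr_fun (C.proj_apply (C.chainsD 0 v).2) C.base
  rw [Finsupp.smul_apply, Finsupp.single_eq_same, smul_eq_mul, mul_one] at h
  exact h.symm.trans (DFunLike.congr_fun (LinearMap.congr_fun C.proj_mul_d v.1) C.base)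

/-- The resolution of the trivial representation by the chains of a contracted complex. -/
noncomputable def resolution (hC : C.IsEquivariant G) (γ : X →[G] G) :
    ProjectiveResolution (Rep.trivial k G k) :=
  resolutionOfExact hC.chainsRep (hC.projective_chainsRep γ) hC.dHom
    (fun n => Rep.hom_ext <| Representation.IntertwiningMap.toLinearMap_injective _ _ <|
      LinearMap.ext fun v => Subtype.ext (LinearMap.congr_fun C.d_mul_d v.1))
    hC.augmentation hC.d_augmentation
    (fun a => ⟨⟨single C.base a, Finsupp.single_mem_supported k a C.deg_base⟩, by
      simp [augmentation]⟩)
    (fun v hv => ⟨⟨C.s v.1, C.s_mem_chains v.2⟩, Subtype.ext <|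
      C.d_s_apply (C.d_eq_zero v.2) <|
        (C.proj_apply v.2).trans ((congrArg (· • _) hv).trans (zero_smul k _))⟩)
    (fun n v hv => ⟨⟨C.s v.1, C.s_mem_chains v.2⟩, Subtype.ext <|
      C.d_s_apply (congrArg Subtype.val hv) (C.proj_eq_zero v.2)⟩)

end IsEquivariant

variable (C G) in
/-- The `G`-invariant cochains of degree `n`, as functions on the whole basis vanishing outside
degree `n`. -/
def cochains (n : ℕ) : Submodule k (X → k) where
  carrier := {f | (∀ (g : G) x, f (g • x) = f x) ∧ ∀ x, C.deg x ≠ n → f x = 0}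
  add_mem' hf hf' := ⟨fun g x => by simp [hf.1, hf'.1], fun x hx => by simp [hf.2 x hx, hf'.2 x hx]⟩
  zero_mem' := ⟨fun _ _ => rfl, fun _ _ => rfl⟩
  smul_mem' a f hf := ⟨fun g x => by simp [hf.1], fun x hx => by simp [hf.2 x hx]⟩

namespace IsEquivariant

variable (hC : C.IsEquivariant G)

/-- The values of a morphism of representations on the basis, extended by zero. -/
noncomputable def toCochain {n : ℕ} (f : hC.chainsRep n ⟶ Rep.trivial k G k) (x : X) : k :=
  f.hom (Finsupp.restrictDom k k {x | C.deg x = n} (single x 1))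

theorem toCochain_mem {n : ℕ} (f : hC.chainsRep n ⟶ Rep.trivial k G k) :
    hC.toCochain f ∈ C.cochains G n := by
  refine ⟨fun g x => ?_, fun x hx => ?_⟩
  · have h : Finsupp.restrictDom k k {x | C.deg x = n} (single (g • x) 1) =
        (hC.chainsRep n).ρ g (Finsupp.restrictDom k k {x | C.deg x = n} (single x 1)) :=
      Subtype.ext <| (congrArg _ (permRep_single g x 1).symm).trans (hC.filter_permRep n g _)
    rw [toCochain, h]
    exact Rep.hom_comm_apply f g _
  · have h : Finsupp.restrictDom k k {x | C.deg x = n} (single x 1) = 0 :=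
      Subtype.ext <| Finsupp.filter_single_of_neg _ hx
    rw [toCochain, h]
    exact map_zero _

theorem linearCombination_toCochain {n : ℕ} (f : hC.chainsRep n ⟶ Rep.trivial k G k)
    (v : C.chains n) : Finsupp.linearCombination k (hC.toCochain f) v.1 = f.hom v := by
  have h : Finsupp.linearCombination k (hC.toCochain f) =
      f.hom.toLinearMap ∘ₗ Finsupp.restrictDom k k {x | C.deg x = n} :=
    Finsupp.lhom_ext' fun x => LinearMap.ext_ring <| by
      simp [toCochain]
  rw [h, LinearMap.comp_apply]
  exact congrArg f.hom (LinearMap.congr_fun (Finsupp.restrictDom_comp_subtype _) v)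

/-- Morphisms to the trivial representation are invariant cochains. -/
noncomputable def homEquiv (n : ℕ) :
    (hC.chainsRep n ⟶ Rep.trivial k G k) ≃ₗ[k] C.cochains G n where
  toFun f := ⟨hC.toCochain f, hC.toCochain_mem f⟩
  map_add' f f' := rfl
  map_smul' c f := rfl
  invFun f := Rep.ofHom ⟨Finsupp.linearCombination k f.1 ∘ₗ (C.chains n).subtype, fun g =>
    LinearMap.ext fun v => by
      change Finsupp.linearCombination k f.1 (Finsupp.mapDomain (g • ·) v.1) = _
      rw [Finsupp.linearCombination_mapDomain, show f.1 ∘ (g • ·) = f.1 from funext (f.2.1 g)]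
      rfl⟩
  left_inv f := Rep.hom_ext <| Representation.IntertwiningMap.toLinearMap_injective _ _ <|
    LinearMap.ext (hC.linearCombination_toCochain f)
  right_inv f := Subtype.ext <| funext fun x => by
    change Finsupp.linearCombination k f.1 (Finsupp.filter (C.deg · = n) (single x 1)) = f.1 x
    by_cases hx : C.deg x = n
    · simp [hx]
    · simp [hx, f.2.2 x hx]

theorem homEquiv_dHom_comp (n : ℕ) (f : hC.chainsRep n ⟶ Rep.trivial k G k) :
    (hC.homEquiv (n + 1) (hC.dHom n ≫ f) : X → k) = C.coboundary (hC.homEquiv n f) := by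
  ext x
  change f.hom (C.chainsD n (Finsupp.restrictDom k k {x | C.deg x = n + 1} (single x 1))) =
    Finsupp.linearCombination k (hC.toCochain f) (C.d (single x 1))
  rw [← hC.linearCombination_toCochain]
  change Finsupp.linearCombination k _ (C.d (Finsupp.filter (C.deg · = n + 1) (single x 1))) = _
  by_cases hx : C.deg x = n + 1
  · rw [Finsupp.filter_single_of_pos (C.deg · = n + 1) hx]
  · rw [Finsupp.filter_single_of_neg (C.deg · = n + 1) hx, map_zero, map_zero,
      Finsupp.linearCombination_apply]
    refine (Finset.sum_eq_zero fun y hy => ?_).symm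
    have hdeg := C.deg_of_d_ne_zero (Finsupp.mem_support_iff.1 hy)
    simp only [(hC.toCochain_mem f).2 y (by omega), smul_zero]

end IsEquivariant

theorem nonempty_groupCohomology_iso {G' X' : Type u} [Group G'] [MulAction G' X']
    {C' : ContractedComplex k X'} (hC : C.IsEquivariant G) (γ : X →[G] G)
    (hC' : C'.IsEquivariant G') (γ' : X' →[G'] G')
    (Θ : ∀ n, C.cochains G n ≃ₗ[k] C'.cochains G' n)
    (hΘ : ∀ n (f : C.cochains G n) (g : C.cochains G (n + 1)), g.1 = C.coboundary f.1 →
      (Θ (n + 1) g).1 = C'.coboundary (Θ n f).1) (n : ℕ) :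
    Nonempty (groupCohomology (Rep.trivial k G k) n ≅ groupCohomology (Rep.trivial k G' k) n) := by
  refine nonempty_groupCohomology_iso_of_cochains (hC.resolution γ) (hC'.resolution γ')
    (fun n => (hC.homEquiv n).trans ((Θ n).trans (hC'.homEquiv n).symm)) (fun n f => ?_) n
  have hcomp (f : hC.chainsRep n ⟶ Rep.trivial k G k) :
      (hC'.homEquiv (n + 1)).symm (Θ (n + 1) (hC.homEquiv (n + 1) (hC.dHom n ≫ f))) =
        hC'.dHom n ≫ (hC'.homEquiv n).symm (Θ n (hC.homEquiv n f)) := by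
    refine (hC'.homEquiv (n + 1)).injective (Subtype.ext ?_)
    rw [IsEquivariant.homEquiv_dHom_comp]
    simp only [LinearEquiv.apply_symm_apply]
    exact hΘ _ _ _ (hC.homEquiv_dHom_comp n f)
  have hd : (hC.resolution γ).complex.d (n + 1) n = hC.dHom n := ChainComplex.of_d _ hC.dHom n
  have hd' : (hC'.resolution γ').complex.d (n + 1) n = hC'.dHom n := ChainComplex.of_d _ hC'.dHom n
  rw [hd, hd']
  exact hcomp f

end ContractedComplex

end Resolutions

section CyclicGroups

open Finsupp (single)

theorem sum_zmod_eq_sum_range {M : Type*} [AddCommMonoid M] {n : ℕ} [NeZero n] (f : ZMod n → M) :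
    ∑ c, f c = ∑ b ∈ Finset.range n, f b :=
  Finset.sum_bij' (fun c _ => c.val) (fun b _ => b) (fun c _ => by simpa using ZMod.val_lt c)
    (by simp) (by simp) (fun b hb => ZMod.val_cast_of_lt (by simpa using hb)) (by simp)

theorem sum_range_val_add_one {M : Type*} [AddCommMonoid M] {n : ℕ} [NeZero n] (f : ZMod n → M)
    (c : ZMod n) :
    ∑ b ∈ Finset.range (c + 1).val, f b + (if c = -1 then ∑ x, f x else 0) =
      ∑ b ∈ Finset.range c.val, f b + f c := by
  obtain ⟨m, rfl⟩ := Nat.exists_eq_succ_of_ne_zero (NeZero.ne n)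
  split_ifs with hc
  · have hm : ((m : ℕ) : ZMod (m + 1)) = -1 := by
      rw [eq_neg_iff_add_eq_zero]
      exact_mod_cast ZMod.natCast_self (m + 1)
    rw [hc, neg_add_cancel, ZMod.val_zero, Finset.sum_range_zero, zero_add, sum_zmod_eq_sum_range,
      Finset.sum_range_succ, ZMod.val_neg_one, hm]
  · have hlast : c ≠ Fin.last m := fun h => hc <| ZMod.val_injective _ <|
      (congrArg Fin.val h).trans (ZMod.val_neg_one m).symm
    have hval : (c + 1).val = c.val + 1 := (Fin.val_add_one c).trans (if_neg hlast)
    rw [hval, Finset.sum_range_succ, ZMod.natCast_zmod_val, add_zero]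

theorem sum_range_add_one_sub_sum_range {M : Type*} [AddCommGroup M] {n : ℕ} (f : ZMod n → M)
    (m : ℕ) :
    ∑ b ∈ Finset.range m, f (b + 1) - ∑ b ∈ Finset.range m, f b = f m - f 0 := by
  simpa using Finset.sum_range_sub (fun b : ℕ => f b) m

variable {k : Type*} [CommRing k] {n : ℕ} [NeZero n]

/-- The differential of the periodic resolution of a cyclic group on a basis element: translation by
the generator minus the identity and the norm, alternately. -/
noncomputable def cyclicBoundary (k : Type*) [CommRing k] {n : ℕ} [NeZero n] :
    ℕ × ZMod n → (ℕ × ZMod n →₀ k)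
  | (0, _) => 0
  | (i + 1, c) => if Even i then single (i, c + 1) 1 - single (i, c) 1 else ∑ x, single (i, x) 1

/-- The contracting homotopy of the periodic resolution of a cyclic group on a basis element. -/
noncomputable def cyclicHomotopy (k : Type*) [CommRing k] {n : ℕ} (z : ℕ × ZMod n) :
    ℕ × ZMod n →₀ k :=
  if Even z.1 then ∑ b ∈ Finset.range z.2.val, single (z.1 + 1, (b : ZMod n)) 1
  else if z.2 = -1 then single (z.1 + 1, 0) 1 else 0

theorem cyclicBoundary_mem_supported (z : ℕ × ZMod n) :
    cyclicBoundary k z ∈ Finsupp.supported k k {y | z.1 = y.1 + 1} := by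
  obtain ⟨_ | i, c⟩ := z
  · exact zero_mem _
  · rw [cyclicBoundary]
    split_ifs
    · exact sub_mem (Finsupp.single_mem_supported k _ rfl) (Finsupp.single_mem_supported k _ rfl)
    · exact sum_mem fun x _ => Finsupp.single_mem_supported k _ rfl

omit [NeZero n] in
theorem cyclicHomotopy_mem_supported (z : ℕ × ZMod n) :
    cyclicHomotopy k z ∈ Finsupp.supported k k {y | y.1 = z.1 + 1} := by
  rw [cyclicHomotopy]
  split_ifs
  · exact sum_mem fun b _ => Finsupp.single_mem_supported k _ rfl
  · exact Finsupp.single_mem_supported k _ rfl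
  · exact zero_mem _

theorem linearCombination_cyclicBoundary_comp (z : ℕ × ZMod n) :
    Finsupp.linearCombination k (cyclicBoundary k) (cyclicBoundary k z) = 0 := by
  obtain ⟨_ | _ | i, c⟩ := z
  · simp [cyclicBoundary]
  · simp [cyclicBoundary]
  · by_cases h : Even i
    · simpa [cyclicBoundary, h, Nat.even_add_one, sub_eq_zero] using
        Equiv.sum_comp (Equiv.addRight 1) fun x => (single (i, x) 1 : ℕ × ZMod n →₀ k)
    · simp [cyclicBoundary, h, Nat.even_add_one]

theorem cyclicBoundary_homotopy (z : ℕ × ZMod n) :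
    Finsupp.linearCombination k (cyclicBoundary k) (cyclicHomotopy k z) +
      Finsupp.linearCombination k (cyclicHomotopy k) (cyclicBoundary k z) +
      (if z.1 = 0 then single (0, 0) 1 else 0) = single z 1 := by
  obtain ⟨_ | i, c⟩ := z
  · have hsum := sum_range_add_one_sub_sum_range
      (fun x => (single (0, x) 1 : ℕ × ZMod n →₀ k)) c.val
    simp [cyclicBoundary, cyclicHomotopy, hsum]
  · by_cases h : Even i
    · have hsum := sum_range_val_add_one (fun x => (single (i + 1, x) 1 : ℕ × ZMod n →₀ k)) c
      have hs : Finsupp.linearCombination k (cyclicBoundary k) (cyclicHomotopy k (i + 1, c)) =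
          if c = -1 then ∑ x, single (i + 1, x) 1 else 0 := by
        split_ifs with hc <;> simp [cyclicHomotopy, cyclicBoundary, h, hc, Nat.even_add_one]
      rw [hs, cyclicBoundary, if_pos h]
      simp only [← sub_eq_iff_eq_add', sub_eq_add_neg] at hsum
      simpa [cyclicHomotopy, h, sub_eq_add_neg, add_assoc, add_comm, add_left_comm] using hsum
    · have hsum := sum_range_add_one_sub_sum_range
        (fun x => (single (i + 1, x) 1 : ℕ × ZMod n →₀ k)) c.val
      simp [cyclicBoundary, cyclicHomotopy, h, Nat.even_add_one, hsum]

/-- The periodic resolution of the cyclic group of order `n`. -/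
noncomputable def cyclicComplex (k : Type*) [CommRing k] (n : ℕ) [NeZero n] :
    ContractedComplex k (ℕ × ZMod n) where
  deg := Prod.fst
  base := (0, 0)
  deg_base := rfl
  d := Finsupp.linearCombination k (cyclicBoundary k)
  s := Finsupp.linearCombination k (cyclicHomotopy k)
  deg_of_d_ne_zero {x y} h := cyclicBoundary_mem_supported (k := k) x <|
    Finsupp.mem_support_iff.2 (by simpa using h)
  deg_of_s_ne_zero {x y} h := cyclicHomotopy_mem_supported (k := k) x <|
    Finsupp.mem_support_iff.2 (by simpa using h)
  d_mul_d := end_ext_single fun z => by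
    simpa using linearCombination_cyclicBoundary_comp z
  homotopy := end_ext_single fun z => by
    simpa [augmentationProj_single] using cyclicBoundary_homotopy z

theorem commute_cyclicComplex_d (c : ZMod n) :
    Commute (cyclicComplex k n).d (Finsupp.lmapDomain k k (Prod.map id (c + ·))) :=
  end_ext_single fun z => by
    obtain ⟨_ | i, x⟩ := z
    · simp [cyclicComplex, cyclicBoundary]
    · by_cases h : Even i
      · simp [cyclicComplex, cyclicBoundary, h, Finsupp.mapDomain_sub, add_assoc]
      · simpa [cyclicComplex, cyclicBoundary, h, Finsupp.mapDomain_finsetSum] using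
          (Equiv.sum_comp (Equiv.addLeft c) fun x => (single (i, x) 1 : ℕ × ZMod n →₀ k)).symm

end CyclicGroups

section BarComplex

open Finsupp (single)

variable {A : Type*} {k : Type*} [CommRing k]

/-- The cone over a chain with apex `a`. -/
noncomputable def cone (k : Type*) [CommRing k] (a : A) : Module.End k (A × List A →₀ k) :=
  Finsupp.lmapDomain k k fun z => (a, z.1 :: z.2)

/-- The boundary of the simplex with vertices `a` and the elements of the list. -/
noncomputable def barBoundary (k : Type*) [CommRing k] : A → List A → (A × List A →₀ k)
  | _, [] => 0
  | a, b :: l => single (b, l) 1 - cone k a (barBoundary k b l) -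
      if l = [] then single (a, []) 1 else 0

/-- The differential of the homogeneous bar complex. -/
noncomputable def barD (k : Type*) [CommRing k] (A : Type*) : Module.End k (A × List A →₀ k) :=
  Finsupp.linearCombination k fun z => barBoundary k z.1 z.2

theorem barD_single (a : A) (l : List A) : barD k A (single (a, l) 1) = barBoundary k a l := by
  simp [barD]

theorem cone_single (a b : A) (l : List A) :
    cone k a (single (b, l) 1) = single (a, b :: l) 1 := by
  simp [cone]

theorem barD_cone (a : A) (v : A × List A →₀ k) : barD k A (cone k a v) =
    v - cone k a (barD k A v) - augmentationProj k (fun z => z.2.length) (a, []) v := by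
  suffices barD k A ∘ₗ cone k a = LinearMap.id - cone k a ∘ₗ barD k A -
      augmentationProj k (fun z => z.2.length) (a, []) from LinearMap.congr_fun this v
  refine end_ext_single fun ⟨b, l⟩ => ?_
  simp [barD_single, cone_single, barBoundary, augmentationProj_single]

theorem augmentationProj_cone (a b : A) (v : A × List A →₀ k) :
    augmentationProj k (fun z => z.2.length) (a, []) (cone k b v) = 0 := by
  suffices augmentationProj k (fun z => z.2.length) (a, []) ∘ₗ cone k b = 0 from
    LinearMap.congr_fun this v
  refine end_ext_single fun ⟨c, l⟩ => ?_
  simp [cone_single, augmentationProj_single]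

theorem augmentationProj_barBoundary (a b : A) (l : List A) :
    augmentationProj k (fun z => z.2.length) (a, []) (barBoundary k b l) = 0 := by
  rcases l with _ | ⟨c, _ | ⟨c', l⟩⟩
  · simp [barBoundary]
  · simp [barBoundary, augmentationProj_single]
  · simp [barBoundary, augmentationProj_single, augmentationProj_cone]

theorem barD_barBoundary (a : A) (l : List A) : barD k A (barBoundary k a l) = 0 := by
  induction l generalizing a with
  | nil => simp [barBoundary]
  | cons b l ih =>
    rw [barBoundary, map_sub, map_sub, barD_single, barD_cone, ih, augmentationProj_barBoundary]
    split_ifs <;> simp [barD_single, barBoundary]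

theorem barBoundary_mem_supported (a : A) (l : List A) :
    barBoundary k a l ∈ Finsupp.supported k k {y | l.length = y.2.length + 1} := by
  induction l generalizing a with
  | nil => exact zero_mem _
  | cons b l ih =>
    refine sub_mem (sub_mem (Finsupp.single_mem_supported k _ rfl) ?_) ?_
    · refine map_mem_supported (fun x hx y hy => ?_) (ih b)
      rw [cone_single, Finsupp.single_apply_ne_zero] at hy
      simpa [hy.1] using hx
    · split_ifs with hl
      · exact Finsupp.single_mem_supported k _ (by simp [hl])
      · exact zero_mem _

/-- The homogeneous bar complex. -/
noncomputable def barComplex (k : Type*) [CommRing k] (A : Type*) [One A] :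
    ContractedComplex k (A × List A) where
  deg z := z.2.length
  base := (1, [])
  deg_base := rfl
  d := barD k A
  s := cone k 1
  deg_of_d_ne_zero {x y} h := barBoundary_mem_supported (k := k) x.1 x.2 <|
    Finsupp.mem_support_iff.2 (by simpa [barD] using h)
  deg_of_s_ne_zero {x y} h := by
    rw [cone_single, Finsupp.single_apply_ne_zero] at h
    simp [h.1]
  d_mul_d := end_ext_single fun z => by
    rw [Module.End.mul_apply, barD_single, barD_barBoundary, LinearMap.zero_apply]
  homotopy := LinearMap.ext fun v => by
    simp only [LinearMap.add_apply, Module.End.mul_apply, barD_cone, Module.End.one_apply]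
    abel

theorem mapDomain_barBoundary {B : Type*} (f : A → B) (a : A) (l : List A) :
    Finsupp.mapDomain (Prod.map f (List.map f)) (barBoundary k a l) =
      barBoundary k (f a) (l.map f) := by
  induction l generalizing a with
  | nil => simp [barBoundary]
  | cons b l ih =>
    have hcone (v : A × List A →₀ k) : Finsupp.mapDomain (Prod.map f (List.map f)) (cone k a v) =
        cone k (f a) (Finsupp.mapDomain (Prod.map f (List.map f)) v) := by
      simp [cone, ← Finsupp.mapDomain_comp, Function.comp_def]
    simp only [barBoundary, Finsupp.mapDomain_sub, hcone, ih, List.map_cons, List.map_eq_nil_iff]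
    split_ifs <;> simp

theorem commute_barComplex_d [One A] (f : A → A) :
    Commute (barComplex k A).d (Finsupp.lmapDomain k k (Prod.map f (List.map f))) :=
  end_ext_single fun z => by
    simp [barComplex, barD, mapDomain_barBoundary]

end BarComplex

section NormHomotopy

variable {Q R : Type*} [Ring Q] [Ring R] {d e h T S : Q} {m : ℕ}

/-- `h` is a homotopy from `0` to multiplication by `m` away from the idempotent `e`. -/
structure IsTransferHomotopy (d e h : Q) (m : ℕ) : Prop where
  e_mul_e : e * e = e
  d_mul_e : d * e = 0
  e_mul_d : e * d = 0
  h_mul_e : h * e = 0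
  e_mul_h : e * h = 0
  homotopy : h * d + d * h = m * (1 - e)

/-- The automorphism `T` respects `d` and `h` and is the identity on the image of `e`. -/
structure IsCompatible (d e h T : Q) : Prop where
  commute_d : Commute T d
  commute_h : Commute T h
  mul_e : T * e = e
  e_mul : e * T = e

theorem isTransferHomotopy_one_sub_mul (hee : e * e = e) (hde : d * e = 0) (hed : e * d = 0)
    (hhe : h * e = 0) (hhd : h * d + d * h = m * (1 - e)) :
    IsTransferHomotopy d e ((1 - e) * h) m where
  e_mul_e := hee
  d_mul_e := hde
  e_mul_d := hed
  h_mul_e := by rw [mul_assoc, hhe, mul_zero]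
  e_mul_h := by rw [← mul_assoc, mul_sub, hee, mul_one, sub_self, zero_mul]
  homotopy := by
    have hehd : e * (h * d) = 0 := by
      rw [eq_sub_of_add_eq hhd, mul_sub, ← mul_assoc, ← mul_assoc, ← Nat.cast_comm, mul_assoc,
        mul_sub, hee, hed]
      simp
    calc (1 - e) * h * d + d * ((1 - e) * h) = h * d + d * h - e * (h * d) - d * e * h := by
          simp only [sub_mul, mul_sub, one_mul, ← mul_assoc]
          abel
      _ = m * (1 - e) := by rw [hhd, hehd, hde]; simp

theorem isCompatible_one_sub_mul (hd : Commute T d) (hh : Commute T h) (hTe : T * e = e)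
    (heT : e * T = e) : IsCompatible d e ((1 - e) * h) T where
  commute_d := hd
  commute_h := ((Commute.one_right T).sub_right (hTe.trans heT.symm)).mul_right hh
  mul_e := hTe
  e_mul := heT

theorem isCompatible_one : IsCompatible d e h 1 :=
  ⟨.one_left _, .one_left _, one_mul e, mul_one e⟩

theorem sum_range_mul_pow (hT : T ^ m = 1) (c : ℕ) :
    ∑ b ∈ Finset.range (m * c), T ^ b = c * ∑ b ∈ Finset.range m, T ^ b := by
  induction c with
  | zero => simp
  | succ c ih => simp [Nat.mul_succ, Finset.sum_range_add, ih, pow_add, pow_mul, hT, add_mul]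

/-- A homotopy between the norm `1 + T + ⋯ + T ^ (n - 1)` and `n * e`, for `n = q * (m * c)`. -/
def normHomotopy (T h : Q) (q c : ℕ) : Q := c * (∑ b ∈ Finset.range q, T ^ b) * h

theorem commute_normHomotopy (hT : Commute S T) (hh : Commute S h) (q c : ℕ) :
    Commute S (normHomotopy T h q c) :=
  ((Nat.commute_cast S c).mul_right
    (Commute.sum_right _ _ _ fun b _ => hT.pow_right b)).mul_right hh

theorem sub_one_mul_normHomotopy {q : ℕ} (hq : T ^ q = 1) (c : ℕ) :
    (T - 1) * normHomotopy T h q c = 0 := by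
  rw [normHomotopy, ← mul_assoc, ← mul_assoc, ← Nat.cast_comm, mul_assoc (c : Q), mul_geom_sum, hq]
  simp

theorem normHomotopy_mul_sub_one {q : ℕ} (hq : T ^ q = 1) (hh : Commute T h) (c : ℕ) :
    normHomotopy T h q c * (T - 1) = 0 := by
  rw [← sub_one_mul_normHomotopy hq c]
  exact ((commute_normHomotopy (.refl T) hh q c).sub_left (.one_left _)).symm

theorem normHomotopy_mul_d_add {q : ℕ} (hq : T ^ q = 1) (H : IsTransferHomotopy d e h m)
    (hT : IsCompatible d e h T) (c : ℕ) :
    normHomotopy T h q c * d + d * normHomotopy T h q c =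
      ∑ b ∈ Finset.range (q * (m * c)), T ^ b - (q * (m * c) : ℕ) * e := by
  have hd : d * normHomotopy T h q c = c * (∑ b ∈ Finset.range q, T ^ b) * (d * h) := by
    rw [normHomotopy, ← mul_assoc, ← mul_assoc _ d]
    exact congrArg (· * h) ((Nat.commute_cast d c).mul_right
      (Commute.sum_right _ _ _ fun b _ => hT.commute_d.symm.pow_right b))
  have he : (∑ b ∈ Finset.range q, T ^ b) * e = q * e := by
    have hpow (b : ℕ) : T ^ b * e = e := by
      induction b with
      | zero => simp
      | succ b ih => rw [pow_succ, mul_assoc, hT.mul_e, ih]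
    simp [Finset.sum_mul, hpow]
  rw [hd, normHomotopy, mul_assoc _ h, ← mul_add, H.homotopy, sum_range_mul_pow hq]
  set N := ∑ b ∈ Finset.range q, T ^ b
  calc c * N * (m * (1 - e)) = (m * c : ℕ) * (N * (1 - e)) := by
        rw [← mul_assoc, ← Nat.cast_comm m, Nat.cast_mul]
        simp only [mul_assoc]
    _ = (m * c : ℕ) * N - (q * (m * c) : ℕ) * e := by
        rw [mul_sub, mul_one, he, mul_sub, ← mul_assoc, ← Nat.cast_mul, mul_comm (m * c) q]

theorem mul_map_mul_mul_map (ι : Q →+* R) (x : R) {y : R} (hy : ∀ F, Commute y (ι F)) (F F' : Q) :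
    x * ι F * (y * ι F') = x * y * ι (F * F') := by
  rw [mul_assoc, ← (hy F).left_comm, map_mul, mul_assoc]

theorem semiconjBy_one_sub {D κ y : R} (h : κ * D = D * κ + y) (hy : y * κ = 0) :
    SemiconjBy (1 - κ) D (D - y) := by
  rw [SemiconjBy, sub_mul, h, sub_mul, mul_sub, mul_sub, hy, one_mul, mul_one, mul_one, sub_zero]
  abel

/-- A homotopy `K` between `N` and `N'` gives an isomorphism between a complex with a summand `N`
and the complex with `N'` in its place. -/
theorem semiconjBy_replace_norm (ι : Q →+* R) {a b z Y : R} {N N' K : Q}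
    (ha : ∀ F, Commute a (ι F)) (hb : ∀ F, Commute b (ι F)) (hz : ∀ F, Commute z (ι F))
    (hbb : b * b = 0) (hzz : z * z = 1) (hzb : z * b = -(b * z)) (hKT : K * (T - 1) = 0)
    (hTK : (T - 1) * K = 0) (hK : K * d + d * K = N - N') (hY : Commute (b * z * ι K) Y) :
    SemiconjBy (1 - b * z * ι K) (a * ι (T - 1) + b * ι N + z * ι d + Y)
      (a * ι (T - 1) + b * ι N' + z * ι d + Y) := by
  have hmul := mul_map_mul_mul_map ι
  have hbz (F : Q) : Commute (b * z) (ι F) := (hb F).mul_left (hz F)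
  have hbzb : b * z * b = 0 := by rw [mul_assoc, hzb, mul_neg, ← mul_assoc, hbb]; simp
  have hzbz : z * (b * z) = -b := by rw [← mul_assoc, hzb, neg_mul, mul_assoc, hzz, mul_one]
  have hcomm : b * z * ι K * (a * ι (T - 1) + b * ι N + z * ι d + Y) =
      (a * ι (T - 1) + b * ι N + z * ι d + Y) * (b * z * ι K) + b * ι (N - N') := by
    simp only [mul_add, add_mul, hY.eq, hmul _ ha, hmul _ hb, hmul _ hz, hmul _ hbz, hKT,
      hTK, hbzb, ← mul_assoc b b z, hbb, mul_assoc b z z, hzz, hzbz, ← hK, map_add, map_zero]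
    simp only [mul_zero, zero_mul, mul_one, neg_mul]
    abel
  convert semiconjBy_one_sub hcomm ?_ using 1
  · rw [map_sub ι N, mul_sub]
    abel
  · rw [hmul _ hbz, ← mul_assoc, hbb]
    simp

/-- The involution which is the identity on the image of `e` and `X` on the image of `1 - e`
exchanges the roles of `a` and `a'`. -/
theorem semiconjBy_swap (ι : Q →+* R) {a a' z X Y : R} (ha : ∀ F, Commute a (ι F))
    (hz : ∀ F, Commute z (ι F)) (hX : ∀ F, Commute X (ι F))
    (hXa : X * a = a' * X) (hXz : Commute X z) (hee : e * e = e) (hde : d * e = 0)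
    (hed : e * d = 0) (hTe : T * e = e) (heT : e * T = e) (hY : ∀ F, Commute Y (ι F)) :
    SemiconjBy (ι e + X * ι (1 - e)) (a * ι (T - 1) + z * ι d + Y * ι e)
      (a' * ι (T - 1) + z * ι d + Y * ι e) := by
  have hmul' (y : R) (hy : ∀ F, Commute y (ι F)) (F F' : Q) :
      ι F * (y * ι F') = y * ι (F * F') := by
    simpa using mul_map_mul_mul_map ι 1 hy F F'
  have hmul := mul_map_mul_mul_map ι
  simp only [SemiconjBy, add_mul, mul_add, hmul _ ha, hmul _ hz, hmul _ hX,
    hmul _ hY, hmul' _ ha, hmul' _ hz, hmul' _ hY, mul_assoc _ (ι _) (ι _), ← map_mul,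
    mul_sub, sub_mul, hee, hde, hed, hTe, heT, hXa, hXz.eq, mul_one, one_mul, sub_self, map_zero,
    mul_zero, sub_zero, zero_add, add_zero, sub_sub_sub_cancel_right]
  abel

theorem map_add_mul_map_mul_self (ι : Q →+* R) {X : R} (hX : ∀ F, Commute X (ι F)) (hXX : X * X = 1)
    (he : IsIdempotentElem e) : (ι e + X * ι (1 - e)) * (ι e + X * ι (1 - e)) = 1 := by
  rw [add_mul, mul_add, mul_add, (hX (1 - e)).eq, ← mul_assoc, ← map_mul, ← map_mul, he.eq,
    he.mul_one_sub_self, mul_assoc, (hX e).eq, ← mul_assoc, ← map_mul, he.one_sub_mul_self,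
    ← (hX (1 - e)).eq, mul_map_mul_mul_map ι X hX, hXX, he.one_sub.eq]
  simp

end NormHomotopy

section DoubleShifts

variable {Q R : Type*} [Ring Q] [Ring R]

/-- `D` and `D'` are conjugate by a unit of degree `0`; for the differentials of two complexes this
is an isomorphism of complexes. -/
def IsGradedConj (ℛ : ℤ → AddSubgroup R) (D D' : R) : Prop :=
  ∃ u : Rˣ, ↑u ∈ ℛ 0 ∧ ↑u⁻¹ ∈ ℛ 0 ∧ SemiconjBy ↑u D D'

section IsGradedConj

variable {ℛ : ℤ → AddSubgroup R} {D D' D'' : R}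

theorem IsGradedConj.of_involution {σ : R} (hσ : σ ∈ ℛ 0) (hσσ : σ * σ = 1)
    (h : SemiconjBy σ D D') : IsGradedConj ℛ D D' :=
  ⟨⟨σ, σ, hσσ, hσσ⟩, hσ, hσ, h⟩

theorem IsGradedConj.symm : IsGradedConj ℛ D D' → IsGradedConj ℛ D' D
  | ⟨u, hu, hu', h⟩ => ⟨u⁻¹, hu', by rwa [inv_inv], h.units_inv_symm_left⟩

variable [SetLike.GradedMonoid ℛ]

theorem IsGradedConj.trans :
    IsGradedConj ℛ D D' → IsGradedConj ℛ D' D'' → IsGradedConj ℛ D D''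
  | ⟨u, hu, hu', h⟩, ⟨v, hv, hv', h'⟩ =>
    ⟨v * u, by simpa using SetLike.mul_mem_graded hv hu,
      by simpa using SetLike.mul_mem_graded hu' hv', h'.mul_left h⟩

theorem IsGradedConj.of_one_sub {κ : R} (hκ : κ ∈ ℛ 0) (hκκ : κ * κ = 0)
    (h : SemiconjBy (1 - κ) D D') : IsGradedConj ℛ D D' :=
  ⟨⟨1 - κ, 1 + κ, by simp [sub_mul, mul_add, hκκ], by simp [mul_sub, add_mul, hκκ]⟩,
    sub_mem (SetLike.GradedOne.one_mem) hκ, add_mem (SetLike.GradedOne.one_mem) hκ, h⟩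

theorem normHomotopy_mem_degree {T h : R} (hT : T ∈ ℛ 0) {r : ℤ} (hh : h ∈ ℛ r) (q c : ℕ) :
    normHomotopy T h q c ∈ ℛ r := by
  have hsum : ∑ b ∈ Finset.range q, T ^ b ∈ ℛ 0 := sum_mem fun b _ => by
    simpa using SetLike.pow_mem_graded b hT
  simpa [normHomotopy] using SetLike.mul_mem_graded
    (SetLike.mul_mem_graded (SetLike.natCast_mem_graded ℛ c) hsum) hh

end IsGradedConj

/-- The index-shifting operators on double sequences with entries acted on by `Q`, as far as they
enter the differential of the tensor product of two periodic resolutions. The two directions are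
labelled by `Bool`; `trans i` and `norm i` lower the index `i` at the steps where a periodic
resolution has a translation minus the identity, respectively a norm. -/
structure DoubleShift (ι : Q →+* R) (𝒬 : ℤ → AddSubgroup Q) (ℛ : ℤ → AddSubgroup R) where
  trans : Bool → R
  norm : Bool → R
  sign : R
  swap : R
  commute_trans : ∀ i F, Commute (trans i) (ι F)
  commute_norm : ∀ i F, Commute (norm i) (ι F)
  commute_sign : ∀ F, Commute sign (ι F)
  commute_swap : ∀ F, Commute swap (ι F)
  norm_mul_norm : ∀ i, norm i * norm i = 0
  norm_mul_norm_not : ∀ i, norm i * norm (!i) = -(norm (!i) * norm i)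
  norm_mul_trans_not : ∀ i, norm i * trans (!i) = -(trans (!i) * norm i)
  sign_mul_trans : ∀ i, sign * trans i = -(trans i * sign)
  sign_mul_norm : ∀ i, sign * norm i = -(norm i * sign)
  sign_mul_sign : sign * sign = 1
  swap_mul_trans : ∀ i, swap * trans i = trans (!i) * swap
  commute_swap_sign : Commute swap sign
  swap_mul_swap : swap * swap = 1
  map_mem : ∀ r, ∀ F ∈ 𝒬 r, ι F ∈ ℛ r
  norm_mem : ∀ i, norm i ∈ ℛ 1
  sign_mem : sign ∈ ℛ 0
  swap_mem : swap ∈ ℛ 0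

namespace DoubleShift

variable {ι : Q →+* R} {𝒬 : ℤ → AddSubgroup Q} {ℛ : ℤ → AddSubgroup R}
  (S : DoubleShift ι 𝒬 ℛ) {d e h T K : Q} {N N' V : Bool → Q} {m : ℕ}

/-- The differential which combines `d` with the periodic differentials built from `T i - 1` and
`N i` for the two directions `i`. -/
def differential (d : Q) (T N : Bool → Q) : R :=
  ∑ i, (S.trans i * ι (T i - 1) + S.norm i * ι (N i)) + S.sign * ι d

theorem differential_eq_add (d : Q) (T N : Bool → Q) (i : Bool) :
    S.differential d T N = S.trans i * ι (T i - 1) + S.norm i * ι (N i) + S.sign * ι d +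
      (S.trans (!i) * ι (T (!i) - 1) + S.norm (!i) * ι (N (!i))) := by
  rw [differential, Fintype.sum_bool]
  cases i <;> simp only [Bool.not_true, Bool.not_false] <;> abel

theorem commute_norm_mul_sign_mul_map (i : Bool) {y : R} (hby : S.norm i * y = -(y * S.norm i))
    (hzy : S.sign * y = -(y * S.sign)) (hy : ∀ F, Commute y (ι F)) {F : Q} (hK : Commute K F) :
    Commute (S.norm i * S.sign * ι K) (y * ι F) := by
  have hbz : Commute (S.norm i * S.sign) y := by
    rw [Commute, SemiconjBy, mul_assoc, hzy, mul_neg, ← mul_assoc, hby, neg_mul, neg_neg, mul_assoc]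
  exact (hbz.mul_left (hy K).symm).mul_right
    (((S.commute_norm i F).mul_left (S.commute_sign F)).mul_left (hK.map ι))

theorem norm_mul_sign_mul_map_mul_self (i : Bool) :
    S.norm i * S.sign * ι K * (S.norm i * S.sign * ι K) = 0 := by
  rw [mul_map_mul_mul_map _ _ fun F => (S.commute_norm i F).mul_left (S.commute_sign F),
    mul_assoc (S.norm i), ← mul_assoc _ (S.norm i), S.sign_mul_norm, neg_mul, mul_neg, mul_assoc,
    ← mul_assoc, S.norm_mul_norm, zero_mul, neg_zero, zero_mul]

variable [SetLike.GradedMonoid ℛ]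

theorem isGradedConj_replace_norm (i : Bool) (hN : N' (!i) = N (!i)) (hKdeg : K ∈ 𝒬 (-1))
    (hKT : K * (V i - 1) = 0) (hTK : (V i - 1) * K = 0) (hK : K * d + d * K = N i - N' i)
    (hKV : Commute K (V (!i))) (hKN : Commute K (N (!i))) :
    IsGradedConj ℛ (S.differential d V N) (S.differential d V N') := by
  rw [S.differential_eq_add d V N i, S.differential_eq_add d V N' i, hN]
  have hY := (S.commute_norm_mul_sign_mul_map i (S.norm_mul_trans_not i) (S.sign_mul_trans _)
    (S.commute_trans _) (hKV.sub_right (.one_right K))).add_right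
    (S.commute_norm_mul_sign_mul_map i (S.norm_mul_norm_not i) (S.sign_mul_norm _)
    (S.commute_norm _) hKN)
  exact .of_one_sub (SetLike.mul_mem_graded (SetLike.mul_mem_graded (S.norm_mem i) S.sign_mem)
    (S.map_mem _ _ hKdeg)) (S.norm_mul_sign_mul_map_mul_self i)
    (semiconjBy_replace_norm ι (S.commute_trans i) (S.commute_norm i) S.commute_sign
      (S.norm_mul_norm i) S.sign_mul_sign (S.sign_mul_norm i) hKT hTK hK hY)

theorem isGradedConj_norm {q : ℕ} (H : IsTransferHomotopy d e h m)
    (hV : ∀ i, IsCompatible d e h (V i)) (hVq : ∀ i, V i ^ q = 1) (hVV : ∀ i j, Commute (V i) (V j))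
    (hVdeg : ∀ i, V i ∈ 𝒬 0) (hdeg : h ∈ 𝒬 (-1)) (c : Bool → ℕ) [SetLike.GradedMonoid 𝒬] :
    IsGradedConj ℛ
      (S.differential d V fun i => ∑ b ∈ Finset.range (q * (m * c i)), V i ^ b)
      (S.differential d V fun i => (q * (m * c i) : ℕ) * e) := by
  have hKdeg (i : Bool) : normHomotopy (V i) h q (c i) ∈ 𝒬 (-1) :=
    normHomotopy_mem_degree (hVdeg i) hdeg q (c i)
  have hKT (i : Bool) := normHomotopy_mul_sub_one (hVq i) (hV i).commute_h (c i)
  have hTK (i : Bool) := sub_one_mul_normHomotopy (h := h) (hVq i) (c i)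
  have hK (i : Bool) := normHomotopy_mul_d_add (hVq i) H (hV i) (c i)
  have hKV (i : Bool) : Commute (normHomotopy (V i) h q (c i)) (V (!i)) :=
    (commute_normHomotopy (hVV _ _) (hV _).commute_h q (c i)).symm
  have hKe (i : Bool) : Commute (normHomotopy (V i) h q (c i)) e :=
    (commute_normHomotopy ((hV i).e_mul.trans (hV i).mul_e.symm) (H.e_mul_h.trans H.h_mul_e.symm)
      q (c i)).symm
  exact (S.isGradedConj_replace_norm (N' := fun i =>
        bif i then ∑ b ∈ Finset.range (q * (m * c i)), V i ^ b else (q * (m * c i) : ℕ) * e)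
      false rfl (hKdeg false) (hKT _) (hTK _) (hK false) (hKV _)
      (Commute.sum_right _ _ _ fun b _ => (hKV false).pow_right b)).trans
    (S.isGradedConj_replace_norm true rfl (hKdeg true) (hKT _) (hTK _) (hK true) (hKV _)
      ((Nat.commute_cast _ _).mul_right (hKe true)))

theorem isGradedConj_swap {V' : Bool → Q} (i : Bool) (hV : V i = T) (hV_not : V (!i) = 1)
    (hV' : V' i = 1) (hV'_not : V' (!i) = T) (hee : e * e = e) (hde : d * e = 0) (hed : e * d = 0)
    (hTe : T * e = e) (heT : e * T = e) (hdeg : e ∈ 𝒬 0) (n : Bool → ℕ)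
    [SetLike.GradedMonoid 𝒬] :
    IsGradedConj ℛ (S.differential d V fun i => n i * e)
      (S.differential d V' fun i => n i * e) := by
  have hσ : ι e + S.swap * ι (1 - e) ∈ ℛ 0 := add_mem (S.map_mem _ _ hdeg) <| by
    simpa using SetLike.mul_mem_graded S.swap_mem
      (S.map_mem _ _ (sub_mem SetLike.GradedOne.one_mem hdeg))
  have hY (j : Bool) (F : Q) : Commute (S.norm j * ι (n j)) (ι F) :=
    (S.commute_norm j F).mul_left ((Nat.cast_commute (n j) F).map ι)
  refine .of_involution hσ (map_add_mul_map_mul_self ι S.commute_swap S.swap_mul_swap hee) ?_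
  convert semiconjBy_swap ι (S.commute_trans i) S.commute_sign S.commute_swap (S.swap_mul_trans i)
    S.commute_swap_sign hee hde hed hTe heT fun F => (hY i F).add_left (hY (!i) F) using 1
  · simp only [S.differential_eq_add d V _ i, hV, hV_not, sub_self, map_zero, mul_zero, map_mul,
      ← mul_assoc, add_mul]
    abel
  · simp only [S.differential_eq_add d V' _ i, hV', hV'_not, sub_self, map_zero, mul_zero, map_mul,
      ← mul_assoc, add_mul]
    abel

/-- The homotopy `h` allows to move the automorphism `T` from one direction to the other. -/
theorem isGradedConj_exchange {V' : Bool → Q} {q : ℕ} (i : Bool) (H : IsTransferHomotopy d e h m)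
    (hT : IsCompatible d e h T) (hTq : T ^ q = 1) (hV : V i = T) (hV_not : V (!i) = 1)
    (hV' : V' i = 1) (hV'_not : V' (!i) = T) (hTdeg : T ∈ 𝒬 0) (hedeg : e ∈ 𝒬 0)
    (hhdeg : h ∈ 𝒬 (-1)) (c : Bool → ℕ) [SetLike.GradedMonoid 𝒬] :
    IsGradedConj ℛ
      (S.differential d V fun i => ∑ b ∈ Finset.range (q * (m * c i)), V i ^ b)
      (S.differential d V' fun i => ∑ b ∈ Finset.range (q * (m * c i)), V' i ^ b) := by
  have hnorm {U : Bool → Q} (hU : ∀ i, U i = T ∨ U i = 1) := S.isGradedConj_norm (V := U) H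
    (fun i => by obtain h | h := hU i <;> rw [h]; exacts [hT, isCompatible_one])
    (fun i => by obtain h | h := hU i <;> rw [h]; exacts [hTq, one_pow q])
    (fun i j => by
      obtain h | h := hU i <;> obtain h' | h' := hU j <;> rw [h, h']
      exacts [.one_right T, .one_left T])
    (fun i => by obtain h | h := hU i <;> rw [h]; exacts [hTdeg, SetLike.GradedOne.one_mem]) hhdeg c
  exact ((hnorm (by cases i <;> simp_all)).trans
    (S.isGradedConj_swap i hV hV_not hV' hV'_not H.e_mul_e H.d_mul_e H.e_mul_d hT.mul_e hT.e_mul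
      hedeg _)).trans (hnorm (by cases i <;> simp_all)).symm

end DoubleShift

end DoubleShifts

section HomogeneousOperators

variable {k V : Type*} [CommRing k] [AddCommGroup V] [Module k V]

/-- The operators of degree `r` for a family of subspaces indexed by degree. -/
def homogeneousEnd (𝒱 : ℤ → Submodule k V) (r : ℤ) : AddSubgroup (Module.End k V) where
  carrier := {F | ∀ n, ∀ v ∈ 𝒱 n, F v ∈ 𝒱 (r + n)}
  add_mem' hF hG n v hv := add_mem (hF n v hv) (hG n v hv)
  zero_mem' _ _ _ := zero_mem _
  neg_mem' hF n v hv := neg_mem (hF n v hv)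

instance (𝒱 : ℤ → Submodule k V) : SetLike.GradedMonoid (homogeneousEnd 𝒱) where
  one_mem n v hv := by rwa [zero_add]
  mul_mem r s F G hF hG n v hv := by
    rw [add_assoc]
    exact hF _ _ (hG n v hv)

/-- A unit which is homogeneous of degree zero, together with its inverse, acts on each degree. -/
def homogeneousUnitEquiv {𝒱 : ℤ → Submodule k V} {u : (Module.End k V)ˣ}
    (hu : ↑u ∈ homogeneousEnd 𝒱 0) (hu' : ↑u⁻¹ ∈ homogeneousEnd 𝒱 0) (n : ℤ) : 𝒱 n ≃ₗ[k] 𝒱 n :=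
  .ofLinearMap (u.1.restrict fun v hv => zero_add n ▸ hu n v hv)
    (u⁻¹.1.restrict fun v hv => zero_add n ▸ hu' n v hv)
    (LinearMap.ext fun v => Subtype.ext (LinearMap.congr_fun u.mul_inv v.1))
    (LinearMap.ext fun v => Subtype.ext (LinearMap.congr_fun u.inv_mul v.1))

end HomogeneousOperators

section TotalComplex

variable {k W I : Type*} [CommRing k] [AddCommGroup W] [Module k W]

/-- The operator `ψ ↦ (i ↦ w i • ψ (f i))`. -/
def weightedComp (k W : Type*) [CommRing k] [AddCommGroup W] [Module k W] (w : I → ℤ) (f : I → I) :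
    Module.End k (I → W) where
  toFun ψ i := w i • ψ (f i)
  map_add' ψ ψ' := funext fun i => smul_add (w i) (ψ (f i)) (ψ' (f i))
  map_smul' c ψ := funext fun i => smul_comm (w i) c (ψ (f i))

@[simp]
theorem weightedComp_apply (w : I → ℤ) (f : I → I) (ψ : I → W) (i : I) :
    weightedComp k W w f ψ i = w i • ψ (f i) :=
  rfl

/-- An operator on `W` acts pointwise on functions with values in `W`. -/
def pointwise (k W I : Type*) [CommRing k] [AddCommGroup W] [Module k W] :
    Module.End k W →+* Module.End k (I → W) where
  toFun F := F.compLeft I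
  map_one' := rfl
  map_mul' _ _ := rfl
  map_zero' := rfl
  map_add' _ _ := rfl

@[simp]
theorem pointwise_apply (F : Module.End k W) (ψ : I → W) (i : I) :
    pointwise k W I F ψ i = F (ψ i) :=
  rfl

theorem commute_weightedComp_pointwise (w : I → ℤ) (f : I → I) (F : Module.End k W) :
    Commute (weightedComp k W w f) (pointwise k W I F) :=
  LinearMap.ext fun ψ => funext fun i => (map_zsmul F (w i) (ψ (f i))).symm

/-- The functions of total degree `n` on a set graded by `deg`, with values in a graded module. -/
def totalDegree (𝒲 : ℤ → Submodule k W) (deg : I → ℕ) (n : ℤ) : Submodule k (I → W) where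
  carrier := {ψ | ∀ i, ψ i ∈ 𝒲 (n - deg i)}
  add_mem' h h' i := add_mem (h i) (h' i)
  zero_mem' _ := zero_mem _
  smul_mem' c _ h i := Submodule.smul_mem _ c (h i)

variable {𝒲 : ℤ → Submodule k W} {deg : I → ℕ}

theorem pointwise_mem_homogeneousEnd {r : ℤ} {F : Module.End k W} (hF : F ∈ homogeneousEnd 𝒲 r) :
    pointwise k W I F ∈ homogeneousEnd (totalDegree 𝒲 deg) r := fun n ψ hψ i => by
  rw [add_sub_assoc]
  exact hF _ _ (hψ i)

theorem weightedComp_mem_homogeneousEnd {w : I → ℤ} {f : I → I} {r : ℤ}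
    (h : ∀ i, w i ≠ 0 → (deg i : ℤ) = deg (f i) + r) :
    weightedComp k W w f ∈ homogeneousEnd (totalDegree 𝒲 deg) r := fun n ψ hψ i => by
  by_cases hi : w i = 0
  · simp [hi]
  · have hdeg : r + n - deg i = n - deg (f i) := by rw [h i hi]; ring
    exact hdeg ▸ zsmul_mem (hψ (f i)) (w i)

/-- Lowers the first index; a step down from `i` is weighted by `u i`. -/
def shiftFst (k W : Type*) [CommRing k] [AddCommGroup W] [Module k W] (u : ℕ → ℤ) :
    Module.End k (ℕ × ℕ → W) :=
  weightedComp k W (fun i => u i.1) fun i => (i.1 - 1, i.2)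

/-- Lowers the second index; a step down from `j` is weighted by `u j` and the Koszul sign. -/
def shiftSnd (k W : Type*) [CommRing k] [AddCommGroup W] [Module k W] (u : ℕ → ℤ) :
    Module.End k (ℕ × ℕ → W) :=
  weightedComp k W (fun i => (-1) ^ i.1 * u i.2) fun i => (i.1, i.2 - 1)

/-- The sign of the total degree. -/
def totalSign (k W : Type*) [CommRing k] [AddCommGroup W] [Module k W] :
    Module.End k (ℕ × ℕ → W) :=
  weightedComp k W (fun i => (-1) ^ (i.1 + i.2)) id

/-- Exchanges the two indices, with the Koszul sign. -/
def koszulSwap (k W : Type*) [CommRing k] [AddCommGroup W] [Module k W] :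
    Module.End k (ℕ × ℕ → W) :=
  weightedComp k W (fun i => (-1) ^ (i.1 * i.2)) Prod.swap

theorem totalSign_mul_totalSign : totalSign k W * totalSign k W = 1 := by
  ext ψ i
  simp [totalSign, smul_smul, ← mul_pow]

theorem koszulSwap_mul_koszulSwap : koszulSwap k W * koszulSwap k W = 1 := by
  ext ψ i
  simp [koszulSwap, smul_smul, mul_comm i.2, ← mul_pow]

theorem commute_koszulSwap_totalSign : Commute (koszulSwap k W) (totalSign k W) := by
  ext ψ i
  simp [koszulSwap, totalSign, smul_smul, add_comm i.2, mul_comm]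

theorem koszulSwap_mul_shiftFst {u : ℕ → ℤ} (hu : u 0 = 0) :
    koszulSwap k W * shiftFst k W u = shiftSnd k W u * koszulSwap k W := by
  ext ψ ⟨i, j⟩
  cases j with
  | zero => simp [koszulSwap, shiftFst, shiftSnd, hu]
  | succ j =>
    simp [koszulSwap, shiftFst, shiftSnd, smul_smul, mul_add, pow_add, mul_right_comm _ (u _),
      mul_comm]

theorem koszulSwap_mul_shiftSnd {u : ℕ → ℤ} (hu : u 0 = 0) :
    koszulSwap k W * shiftSnd k W u = shiftFst k W u * koszulSwap k W := by
  rw [← mul_one (koszulSwap k W * _), ← koszulSwap_mul_koszulSwap, ← mul_assoc,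
    mul_assoc (koszulSwap k W), ← koszulSwap_mul_shiftFst hu, ← mul_assoc,
    koszulSwap_mul_koszulSwap, one_mul]

theorem shiftFst_mul_shiftFst {u v : ℕ → ℤ} (h : ∀ i, u i * v (i - 1) = 0) :
    shiftFst k W u * shiftFst k W v = 0 := by
  ext ψ i
  simp [shiftFst, smul_smul, h]

theorem shiftSnd_mul_shiftSnd {u v : ℕ → ℤ} (h : ∀ i, u i * v (i - 1) = 0) :
    shiftSnd k W u * shiftSnd k W v = 0 := by
  ext ψ i
  simp [shiftSnd, smul_smul, mul_mul_mul_comm _ (u i.2), h]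

theorem shiftFst_mul_shiftSnd {u v : ℕ → ℤ} (hu : u 0 = 0) :
    shiftFst k W u * shiftSnd k W v = -(shiftSnd k W v * shiftFst k W u) := by
  ext ψ ⟨i, j⟩
  cases i with
  | zero => simp [shiftFst, shiftSnd, hu]
  | succ i => simp [shiftFst, shiftSnd, smul_smul, pow_succ, mul_comm]

theorem totalSign_mul_shiftFst {u : ℕ → ℤ} (hu : u 0 = 0) :
    totalSign k W * shiftFst k W u = -(shiftFst k W u * totalSign k W) := by
  ext ψ ⟨i, j⟩
  cases i with
  | zero => simp [shiftFst, totalSign, hu]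
  | succ i => simp [shiftFst, totalSign, smul_smul, pow_succ, pow_add, mul_comm]

theorem totalSign_mul_shiftSnd {u : ℕ → ℤ} (hu : u 0 = 0) :
    totalSign k W * shiftSnd k W u = -(shiftSnd k W u * totalSign k W) := by
  ext ψ ⟨i, j⟩
  cases j with
  | zero => simp [shiftSnd, totalSign, hu]
  | succ j => simp [shiftSnd, totalSign, smul_smul, pow_succ, pow_add, mul_comm, mul_left_comm]

/-- The weights of the steps of the periodic resolution given by a translation minus the
identity. -/
def translationWeight : ℕ → ℤ
  | 0 => 0
  | i + 1 => if Even i then 1 else 0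

/-- The weights of the steps of the periodic resolution given by a norm. -/
def normWeight : ℕ → ℤ
  | 0 => 0
  | i + 1 => if Even i then 0 else 1

theorem normWeight_mul_normWeight (i : ℕ) : normWeight i * normWeight (i - 1) = 0 := by
  obtain _ | _ | i := i
  · rfl
  · rfl
  · by_cases h : Even i <;> simp [normWeight, h, Nat.even_add_one]

/-- The double sequences of total degree `n`. -/
abbrev doubleDegree (𝒲 : ℤ → Submodule k W) : ℤ → Submodule k (ℕ × ℕ → W) :=
  totalDegree 𝒲 fun i => i.1 + i.2

theorem shiftFst_mem_homogeneousEnd {u : ℕ → ℤ} (hu : u 0 = 0) :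
    shiftFst k W u ∈ homogeneousEnd (doubleDegree 𝒲) 1 :=
  weightedComp_mem_homogeneousEnd fun ⟨i, j⟩ hi => by
    obtain _ | i := i
    · exact absurd hu hi
    · push_cast [Nat.add_sub_cancel]
      ring

theorem shiftSnd_mem_homogeneousEnd {u : ℕ → ℤ} (hu : u 0 = 0) :
    shiftSnd k W u ∈ homogeneousEnd (doubleDegree 𝒲) 1 :=
  weightedComp_mem_homogeneousEnd fun ⟨i, j⟩ hj => by
    obtain _ | j := j
    · exact absurd (by simp [hu]) hj
    · push_cast [Nat.add_sub_cancel]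
      ring

theorem totalSign_mem_homogeneousEnd : totalSign k W ∈ homogeneousEnd (doubleDegree 𝒲) 0 :=
  weightedComp_mem_homogeneousEnd fun _ _ => (add_zero _).symm

theorem koszulSwap_mem_homogeneousEnd : koszulSwap k W ∈ homogeneousEnd (doubleDegree 𝒲) 0 :=
  weightedComp_mem_homogeneousEnd fun i _ => by simp [add_comm]

/-- The concrete double shift on double sequences of elements of `W`. -/
def doubleSequenceShift (𝒲 : ℤ → Submodule k W) :
    DoubleShift (pointwise k W (ℕ × ℕ)) (homogeneousEnd 𝒲) (homogeneousEnd (doubleDegree 𝒲)) where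
  trans i := bif i then shiftSnd k W translationWeight else shiftFst k W translationWeight
  norm i := bif i then shiftSnd k W normWeight else shiftFst k W normWeight
  sign := totalSign k W
  swap := koszulSwap k W
  commute_trans := by rintro (_ | _) F <;> exact commute_weightedComp_pointwise _ _ F
  commute_norm := by rintro (_ | _) F <;> exact commute_weightedComp_pointwise _ _ F
  commute_sign := commute_weightedComp_pointwise _ _
  commute_swap := commute_weightedComp_pointwise _ _
  norm_mul_norm := by
    rintro (_ | _)
    exacts [shiftFst_mul_shiftFst normWeight_mul_normWeight,
      shiftSnd_mul_shiftSnd normWeight_mul_normWeight]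
  norm_mul_norm_not := by
    rintro (_ | _)
    exacts [shiftFst_mul_shiftSnd rfl,
      neg_eq_iff_eq_neg.1 (shiftFst_mul_shiftSnd (u := normWeight) rfl).symm]
  norm_mul_trans_not := by
    rintro (_ | _)
    exacts [shiftFst_mul_shiftSnd rfl,
      neg_eq_iff_eq_neg.1 (shiftFst_mul_shiftSnd (u := translationWeight) rfl).symm]
  sign_mul_trans := by
    rintro (_ | _)
    exacts [totalSign_mul_shiftFst rfl, totalSign_mul_shiftSnd rfl]
  sign_mul_norm := by
    rintro (_ | _)
    exacts [totalSign_mul_shiftFst rfl, totalSign_mul_shiftSnd rfl]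
  sign_mul_sign := totalSign_mul_totalSign
  swap_mul_trans := by
    rintro (_ | _)
    exacts [koszulSwap_mul_shiftFst rfl, koszulSwap_mul_shiftSnd rfl]
  commute_swap_sign := commute_koszulSwap_totalSign
  swap_mul_swap := koszulSwap_mul_koszulSwap
  map_mem _ _ := pointwise_mem_homogeneousEnd
  norm_mem := by
    rintro (_ | _)
    exacts [shiftFst_mem_homogeneousEnd rfl, shiftSnd_mem_homogeneousEnd rfl]
  sign_mem := totalSign_mem_homogeneousEnd
  swap_mem := koszulSwap_mem_homogeneousEnd

theorem doubleSequenceShift_differential_apply (d : Module.End k W) (T N : Bool → Module.End k W)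
    (ψ : ℕ × ℕ → W) (i j : ℕ) :
    (doubleSequenceShift 𝒲).differential d T N ψ (i, j) =
      translationWeight i • (T false - 1) (ψ (i - 1, j)) + normWeight i • N false (ψ (i - 1, j)) +
        (-1 : ℤ) ^ i • (translationWeight j • (T true - 1) (ψ (i, j - 1)) +
          normWeight j • N true (ψ (i, j - 1)) + (-1 : ℤ) ^ j • d (ψ (i, j))) := by
  simp only [DoubleShift.differential, Fintype.sum_bool, doubleSequenceShift, cond_true, cond_false,
    LinearMap.add_apply, Pi.add_apply, Module.End.mul_apply, shiftFst, shiftSnd, totalSign,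
    weightedComp_apply, pointwise_apply, smul_add, smul_smul, pow_add, id_eq]
  abel

end TotalComplex

section BarCochains

open Finsupp (linearCombination)

variable (k A : Type*) [CommRing k] [Group A]

/-- The invariant functions on the simplices of the homogeneous bar complex, of all degrees. -/
def barCochains : Submodule k (A × List A → k) where
  carrier := {χ | ∀ a z, χ (Prod.map (a * ·) (List.map (a * ·)) z) = χ z}
  add_mem' hf hg a z := congrArg₂ (· + ·) (hf a z) (hg a z)
  zero_mem' _ _ := rfl
  smul_mem' c _ hf a z := congrArg (c * ·) (hf a z)

/-- The invariant functions which are supported on the `n`-simplices. -/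
def barDegree (n : ℤ) : Submodule k (barCochains k A) where
  carrier := {χ | ∀ z : A × List A, (z.2.length : ℤ) ≠ n → χ.1 z = 0}
  add_mem' hf hg z hz := by simp [hf z hz, hg z hz]
  zero_mem' _ _ := rfl
  smul_mem' c _ hf z hz := by simp [hf z hz]

/-- The coboundary operator of the homogeneous bar complex. -/
noncomputable def barDifferential : Module.End k (barCochains k A) where
  toFun χ := ⟨fun z => linearCombination k χ.1 (barBoundary k z.1 z.2), fun a z => by
    dsimp only [Prod.map_fst, Prod.map_snd]
    rw [← mapDomain_barBoundary, Finsupp.linearCombination_mapDomain]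
    exact congrArg (linearCombination k · _) (funext (χ.2 a))⟩
  map_add' χ χ' := Subtype.ext <| funext fun z => by
    simp [Finsupp.linearCombination_apply, Finsupp.sum_add, mul_add]
  map_smul' c χ := Subtype.ext <| funext fun z => by
    simp [Finsupp.linearCombination_apply, Finsupp.sum, Finset.mul_sum, mul_left_comm]

/-- The projection onto the invariant functions supported on the vertices. -/
def barProj : Module.End k (barCochains k A) where
  toFun χ := ⟨fun z => if z.2 = [] then χ.1 z else 0, fun a z => by
    simp [χ.2 a z]⟩
  map_add' χ χ' := Subtype.ext <| funext fun z => by by_cases h : z.2 = [] <;> simp [h]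
  map_smul' c χ := Subtype.ext <| funext fun z => by by_cases h : z.2 = [] <;> simp [h]

/-- The sum over all cones, a transfer for the trivial subgroup. -/
def barTransfer [Fintype A] : Module.End k (barCochains k A) where
  toFun χ := ⟨fun z => ∑ x, χ.1 (x, z.1 :: z.2), fun a z =>
    (Fintype.sum_equiv (Equiv.mulLeft a) _ _ fun x => (χ.2 a (x, z.1 :: z.2)).symm).symm⟩
  map_add' _ _ := Subtype.ext <| funext fun _ => Finset.sum_add_distrib
  map_smul' c _ := Subtype.ext <| funext fun _ => (Finset.mul_sum _ _ c).symm

/-- The action of the automorphisms of the group on the bar cochains. -/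
def barAut : MulAut A →* Module.End k (barCochains k A) where
  toFun α :=
    { toFun := fun χ => ⟨fun z => χ.1 (Prod.map α.symm (List.map α.symm) z), fun a z => by
        simpa [Prod.map, Function.comp_def] using
          χ.2 (α.symm a) (Prod.map α.symm (List.map α.symm) z)⟩
      map_add' := fun _ _ => rfl
      map_smul' := fun _ _ => rfl }
  map_one' := by
    ext χ z
    exact congrArg χ.1 (Prod.ext rfl (List.map_id _))
  map_mul' α β := by
    ext χ z
    exact congrArg χ.1 (Prod.ext rfl (List.map_map (l := z.2) (f := α.symm) (g := β.symm)).symm)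

variable {k A}

theorem barDifferential_apply (χ : barCochains k A) (z : A × List A) :
    (barDifferential k A χ).1 z = linearCombination k χ.1 (barBoundary k z.1 z.2) :=
  rfl

theorem barProj_apply (χ : barCochains k A) (z : A × List A) :
    (barProj k A χ).1 z = if z.2 = [] then χ.1 z else 0 :=
  rfl

theorem barTransfer_apply [Fintype A] (χ : barCochains k A) (z : A × List A) :
    (barTransfer k A χ).1 z = ∑ x, χ.1 (x, z.1 :: z.2) :=
  rfl

theorem barAut_apply (α : MulAut A) (χ : barCochains k A) (z : A × List A) :
    (barAut k A α χ).1 z = χ.1 (Prod.map α.symm (List.map α.symm) z) :=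
  rfl

theorem barCochains_vertex_eq (χ : barCochains k A) (a b : A) : χ.1 (a, []) = χ.1 (b, []) := by
  simpa using χ.2 (a * b⁻¹) (b, [])

theorem barEnd_ext {F G : Module.End k (barCochains k A)}
    (h : ∀ χ a l, (F χ).1 (a, l) = (G χ).1 (a, l)) : F = G :=
  LinearMap.ext fun χ => Subtype.ext <| funext fun z => h χ z.1 z.2

omit [Group A] in
theorem linearCombination_cone (χ : A × List A → k) (a : A) (v : A × List A →₀ k) :
    linearCombination k χ (cone k a v) = linearCombination k (fun z => χ (a, z.1 :: z.2)) v := by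
  rw [cone, Finsupp.lmapDomain_apply, Finsupp.linearCombination_mapDomain, Function.comp_def]

theorem barProj_mul_barProj : barProj k A * barProj k A = barProj k A :=
  barEnd_ext fun χ a l => by by_cases h : l = [] <;> simp [barProj, h]

theorem barDifferential_mul_barProj : barDifferential k A * barProj k A = 0 :=
  barEnd_ext fun χ a l => by
    rw [Module.End.mul_apply, barDifferential_apply]
    cases l with
    | nil => simp [barBoundary]
    | cons b l =>
      have hcone (v : A × List A →₀ k) :
          linearCombination k (barProj k A χ).1 (cone k a v) = 0 := by
        rw [linearCombination_cone]
        simp [barProj_apply, Finsupp.linearCombination_apply]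
      by_cases hl : l = []
      · simp [barBoundary, hl, barProj_apply, barCochains_vertex_eq χ b a]
      · simp [barBoundary, hcone, hl, barProj_apply]

theorem barProj_mul_barDifferential : barProj k A * barDifferential k A = 0 :=
  barEnd_ext fun χ a l => by
    by_cases h : l = [] <;> simp [barProj, barDifferential, barBoundary, h]

theorem barAut_mul_barProj (α : MulAut A) : barAut k A α * barProj k A = barProj k A :=
  barEnd_ext fun χ a l => by
    by_cases h : l = []
    · simpa [barProj, barAut, h] using barCochains_vertex_eq χ _ a
    · simp [barProj, barAut, h]

theorem barProj_mul_barAut (α : MulAut A) : barProj k A * barAut k A α = barProj k A :=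
  barEnd_ext fun χ a l => by
    by_cases h : l = []
    · simpa [barProj, barAut, h] using barCochains_vertex_eq χ _ a
    · simp [barProj, h]

theorem commute_barAut_barDifferential (α : MulAut A) :
    Commute (barAut k A α) (barDifferential k A) :=
  barEnd_ext fun χ a l => by
    change linearCombination k χ.1 (barBoundary k (α.symm a) (l.map α.symm)) = _
    rw [← mapDomain_barBoundary, Finsupp.linearCombination_mapDomain]
    rfl

variable [Fintype A]

theorem commute_barAut_barTransfer (α : MulAut A) : Commute (barAut k A α) (barTransfer k A) :=
  barEnd_ext fun χ a l => by
    simpa [barAut, barTransfer] using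
      (Equiv.sum_comp α.symm.toEquiv fun x => χ.1 (x, α.symm a :: l.map α.symm)).symm

theorem barTransfer_mul_barProj : barTransfer k A * barProj k A = 0 :=
  barEnd_ext fun χ a l => by simp [barTransfer, barProj]

theorem barTransfer_homotopy :
    barTransfer k A * barDifferential k A + barDifferential k A * barTransfer k A =
      Fintype.card A * (1 - barProj k A) :=
  barEnd_ext fun χ a l => by
    have hcone : ∑ x, linearCombination k χ.1 (cone k x (barBoundary k a l)) =
        (barDifferential k A (barTransfer k A χ)).1 (a, l) := by
      simp only [linearCombination_cone, barDifferential_apply]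
      simp only [Finsupp.linearCombination_apply, Finsupp.sum, barTransfer_apply, Finset.smul_sum]
      exact Finset.sum_comm
    have hvertex : ∑ x, linearCombination k χ.1 (if l = [] then Finsupp.single (x, []) 1 else 0) =
        Fintype.card A * (barProj k A χ).1 (a, l) := by
      by_cases hl : l = []
      · simp [barProj_apply, hl, barCochains_vertex_eq χ _ a]
      · simp [barProj_apply, hl]
    calc (barTransfer k A (barDifferential k A χ)).1 (a, l) +
          (barDifferential k A (barTransfer k A χ)).1 (a, l)
      _ = Fintype.card A * (χ.1 (a, l) - (barProj k A χ).1 (a, l)) := by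
        simp [barTransfer_apply, barDifferential_apply _ (_, _ :: _), barBoundary,
          Finset.sum_sub_distrib, hcone, hvertex, mul_sub]
        ring
      _ = (((Fintype.card A : Module.End k (barCochains k A)) * (1 - barProj k A)) χ).1 (a, l) := by
        simp [Module.End.natCast_apply]

theorem isTransferHomotopy_bar :
    IsTransferHomotopy (barDifferential k A) (barProj k A) ((1 - barProj k A) * barTransfer k A)
      (Fintype.card A) :=
  isTransferHomotopy_one_sub_mul barProj_mul_barProj barDifferential_mul_barProj
    barProj_mul_barDifferential barTransfer_mul_barProj barTransfer_homotopy

theorem isCompatible_barAut (α : MulAut A) :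
    IsCompatible (barDifferential k A) (barProj k A) ((1 - barProj k A) * barTransfer k A)
      (barAut k A α) :=
  isCompatible_one_sub_mul (commute_barAut_barDifferential α) (commute_barAut_barTransfer α)
    (barAut_mul_barProj α) (barProj_mul_barAut α)

omit [Fintype A] in
theorem barAut_mem_homogeneousEnd (α : MulAut A) :
    barAut k A α ∈ homogeneousEnd (barDegree k A) 0 := fun n χ hχ z hz =>
  hχ _ (by simpa using hz)

omit [Fintype A] in
theorem barProj_mem_homogeneousEnd : barProj k A ∈ homogeneousEnd (barDegree k A) 0 :=
  fun n χ hχ z hz => by simp [barProj_apply, hχ z (by simpa using hz)]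

theorem barTransfer_mem_homogeneousEnd :
    barTransfer k A ∈ homogeneousEnd (barDegree k A) (-1) := fun n χ hχ z hz =>
  Finset.sum_eq_zero fun x _ => hχ _ fun h => hz (by simp [← h])

theorem one_sub_barProj_mul_barTransfer_mem_homogeneousEnd :
    (1 - barProj k A) * barTransfer k A ∈ homogeneousEnd (barDegree k A) (-1) :=
  zero_add (-1 : ℤ) ▸ SetLike.mul_mem_graded
    (sub_mem (SetLike.one_mem_graded _) barProj_mem_homogeneousEnd) barTransfer_mem_homogeneousEnd

end BarCochains

section Cells

theorem coboundary_cyclicComplex {k : Type*} [CommRing k] {n : ℕ} [NeZero n] {W : Type*}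
    [AddCommGroup W] [Module k W] {L : W →ₗ[k] k} {T : Module.End k W} {χ : ℕ → W}
    {f : ℕ × ZMod n → k} {c : ZMod n} (hf : ∀ i (b : ℕ), f (i, c + b) = L ((T ^ b) (χ i))) (i : ℕ) :
    (cyclicComplex k n).coboundary f (i, c) = L (translationWeight i • (T - 1) (χ (i - 1)) +
      normWeight i • (∑ b ∈ Finset.range n, T ^ b) (χ (i - 1))) := by
  have hd : (cyclicComplex k n).d (Finsupp.single (i, c) 1) = cyclicBoundary k (i, c) := by
    simp [cyclicComplex]
  rw [ContractedComplex.coboundary, hd]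
  obtain _ | i := i
  · simp [cyclicBoundary, translationWeight, normWeight]
  · by_cases h : Even i
    · simpa [cyclicBoundary, translationWeight, normWeight, h] using
        congrArg₂ (· - ·) (hf i 1) (hf i 0)
    · simp only [cyclicBoundary, translationWeight, normWeight, h, if_false, zero_smul, one_smul,
        zero_add, Nat.add_sub_cancel, map_sum, LinearMap.sum_apply,
        Finsupp.linearCombination_single]
      rw [← Equiv.sum_comp (Equiv.addLeft c), sum_zmod_eq_sum_range]
      exact Finset.sum_congr rfl fun b _ => hf i b

open Multiplicative (ofAdd toAdd)

/-- The cells of `C_{n₁} × C_{n₂} × A`: a cell of either periodic resolution, which is a degree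
together with an element of the cyclic group, and a simplex of the bar complex of `A`. -/
abbrev Cell (A : Type*) (n₁ n₂ : ℕ) := (ℕ × ZMod n₁) × (ℕ × ZMod n₂) × (A × List A)

variable {A : Type u} [Group A] {n₁ n₂ : ℕ}
  {φ : Multiplicative (ZMod n₁) × Multiplicative (ZMod n₂) →* MulAut A}

/-- The action of `A ⋊[φ] Q` on `A ≃ (A ⋊[φ] Q) ⧸ Q`. -/
def affineMap {Q : Type*} [Group Q] {φ : Q →* MulAut A} (g : A ⋊[φ] Q) (x : A) : A :=
  g.left * φ g.right x

theorem affineMap_one {Q : Type*} [Group Q] {φ : Q →* MulAut A} :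
    affineMap (1 : A ⋊[φ] Q) = id :=
  funext fun x => by simp [affineMap]

theorem affineMap_mul {Q : Type*} [Group Q] {φ : Q →* MulAut A} (g h : A ⋊[φ] Q) :
    affineMap (g * h) = affineMap g ∘ affineMap h :=
  funext fun x => by simp [affineMap, mul_assoc]

theorem affineMap_inl {Q : Type*} [Group Q] {φ : Q →* MulAut A} (a : A) :
    affineMap (SemidirectProduct.inl a : A ⋊[φ] Q) = (a * ·) :=
  funext fun x => by simp [affineMap]

instance : SMul (A ⋊[φ] (Multiplicative (ZMod n₁) × Multiplicative (ZMod n₂))) (Cell A n₁ n₂) where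
  smul g z := ((z.1.1, toAdd g.right.1 + z.1.2), (z.2.1.1, toAdd g.right.2 + z.2.1.2),
    affineMap g z.2.2.1, z.2.2.2.map (affineMap g))

theorem smul_cell (g : A ⋊[φ] (Multiplicative (ZMod n₁) × Multiplicative (ZMod n₂)))
    (z : Cell A n₁ n₂) : g • z = ((z.1.1, toAdd g.right.1 + z.1.2),
      (z.2.1.1, toAdd g.right.2 + z.2.1.2), affineMap g z.2.2.1, z.2.2.2.map (affineMap g)) :=
  rfl

instance : MulAction (A ⋊[φ] (Multiplicative (ZMod n₁) × Multiplicative (ZMod n₂)))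
    (Cell A n₁ n₂) where
  one_smul z := by simp [smul_cell, affineMap_one]
  mul_smul g h z := by simp [smul_cell, affineMap_mul, add_assoc]

variable (φ) in
/-- The equivariant map which sends a cell to its first vertex. -/
def cellVertex :
    Cell A n₁ n₂ →[A ⋊[φ] (Multiplicative (ZMod n₁) × Multiplicative (ZMod n₂))]
      A ⋊[φ] (Multiplicative (ZMod n₁) × Multiplicative (ZMod n₂)) where
  toFun z := ⟨z.2.2.1, ofAdd z.1.2, ofAdd z.2.1.2⟩
  map_smul' _ _ := rfl

variable {k : Type u} [CommRing k]

variable (φ) in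
/-- The double sequence `ψ` determines the values of an equivariant function at the cells with
trivial coordinates in the two cyclic groups. -/
def equivariantExtension (ψ : ℕ × ℕ → barCochains k A) (z : Cell A n₁ n₂) : k :=
  (barAut k A (φ (ofAdd z.1.2, ofAdd z.2.1.2)) (ψ (z.1.1, z.2.1.1))).1 z.2.2

theorem equivariantExtension_smul (ψ : ℕ × ℕ → barCochains k A)
    (g : A ⋊[φ] (Multiplicative (ZMod n₁) × Multiplicative (ZMod n₂))) (z : Cell A n₁ n₂) :
    equivariantExtension φ ψ (g • z) = equivariantExtension φ ψ z := by
  have hφ : φ (ofAdd (toAdd g.right.1 + z.1.2), ofAdd (toAdd g.right.2 + z.2.1.2)) =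
      φ g.right * φ (ofAdd z.1.2, ofAdd z.2.1.2) := by
    rw [← map_mul]
    rfl
  rw [equivariantExtension, equivariantExtension, smul_cell, hφ, map_mul, Module.End.mul_apply,
    barAut_apply]
  refine Eq.trans (congrArg _ ?_) ((barAut k A _ _).2 ((φ g.right).symm g.left) z.2.2)
  simp [Prod.map, affineMap]

theorem equivariantExtension_zero (ψ : ℕ × ℕ → barCochains k A) (i j : ℕ) (z : A × List A) :
    equivariantExtension φ ψ ((i, 0), (j, 0), z) = (ψ (i, j)).1 z := by
  have hφ : φ (ofAdd 0, ofAdd 0) = 1 := map_one φ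
  rw [equivariantExtension, hφ, map_one]
  rfl

theorem equivariantExtension_add_fst (ψ : ℕ × ℕ → barCochains k A) {α : MulAut A}
    (hα : α = φ (ofAdd 1, 1)) (c : ZMod n₁) (c' : ZMod n₂) (z : A × List A) (i j b : ℕ) :
    equivariantExtension φ ψ ((i, c + b), (j, c'), z) =
      (barAut k A (φ (ofAdd c, ofAdd c')) ((barAut k A α ^ b) (ψ (i, j)))).1 z := by
  have hφ : φ (ofAdd (c + b), ofAdd c') = φ (ofAdd c, ofAdd c') * α ^ b := by
    rw [hα, ← map_pow, ← map_mul]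
    simp [← ofAdd_nsmul, ofAdd_add]
  simp only [equivariantExtension, hφ, map_mul, map_pow]
  rfl

theorem equivariantExtension_add_snd (ψ : ℕ × ℕ → barCochains k A) {α : MulAut A}
    (hα : α = φ (1, ofAdd 1)) (c : ZMod n₁) (c' : ZMod n₂) (z : A × List A) (i j b : ℕ) :
    equivariantExtension φ ψ ((i, c), (j, c' + b), z) =
      (barAut k A (φ (ofAdd c, ofAdd c')) ((barAut k A α ^ b) (ψ (i, j)))).1 z := by
  have hφ : φ (ofAdd c, ofAdd (c' + b)) = φ (ofAdd c, ofAdd c') * α ^ b := by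
    rw [hα, ← map_pow, ← map_mul]
    simp [← ofAdd_nsmul, ofAdd_add]
  simp only [equivariantExtension, hφ, map_mul, map_pow]
  rfl

theorem coboundary_barComplex_equivariantExtension (ψ : ℕ × ℕ → barCochains k A) (c : ZMod n₁)
    (c' : ZMod n₂) (z : A × List A) (i j : ℕ) :
    (barComplex k A).coboundary (fun z => equivariantExtension φ ψ ((i, c), (j, c'), z)) z =
      (barAut k A (φ (ofAdd c, ofAdd c')) (barDifferential k A (ψ (i, j)))).1 z := by
  rw [← Module.End.mul_apply, (commute_barAut_barDifferential _).eq]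
  simp [ContractedComplex.coboundary, barComplex, barD, barDifferential_apply,
    equivariantExtension]

/-- The tensor product of two periodic resolutions and the bar complex of `A`. -/
noncomputable def cellComplex (k : Type u) [CommRing k] (A : Type u) [Group A] (n₁ n₂ : ℕ)
    [NeZero n₁] [NeZero n₂] : ContractedComplex k (Cell A n₁ n₂) :=
  (cyclicComplex k n₁).prod ((cyclicComplex k n₂).prod (barComplex k A))

variable [NeZero n₁] [NeZero n₂]

theorem deg_cellComplex (z : Cell A n₁ n₂) :
    (cellComplex k A n₁ n₂).deg z = z.1.1 + (z.2.1.1 + z.2.2.2.length) :=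
  rfl

variable (φ) in
theorem isEquivariant_cellComplex : (cellComplex k A n₁ n₂).IsEquivariant
    (A ⋊[φ] (Multiplicative (ZMod n₁) × Multiplicative (ZMod n₂))) where
  deg_smul g z := by simp [deg_cellComplex, smul_cell]
  commute_d g := by
    have hg : (fun z : Cell A n₁ n₂ => g • z) = Prod.map (Prod.map id (toAdd g.right.1 + ·))
      (Prod.map (Prod.map id (toAdd g.right.2 + ·))
        (Prod.map (affineMap g) (List.map (affineMap g)))) := rfl
    change Commute _ (Finsupp.lmapDomain k k fun z : Cell A n₁ n₂ => g • z)
    rw [hg]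
    exact ContractedComplex.commute_prod_d _ _ (commute_cyclicComplex_d _)
      (ContractedComplex.commute_prod_d _ _ (commute_cyclicComplex_d _) (commute_barComplex_d _)
        fun _ => rfl) fun _ => rfl

variable (φ) in
/-- Equivariant cochains are double sequences of bar cochains. -/
def cochainsEquiv (n : ℕ) : doubleDegree (barDegree k A) n ≃ₗ[k] (cellComplex k A n₁ n₂).cochains
    (A ⋊[φ] (Multiplicative (ZMod n₁) × Multiplicative (ZMod n₂))) n where
  toFun ψ := ⟨equivariantExtension φ ψ.1, equivariantExtension_smul ψ.1, fun z hz =>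
    ψ.2 (z.1.1, z.2.1.1) _ fun h => hz <| by
      simp only [Prod.map_snd, List.length_map] at h
      rw [deg_cellComplex]
      omega⟩
  map_add' ψ ψ' := Subtype.ext <| funext fun z => by simp [equivariantExtension]
  map_smul' c ψ := Subtype.ext <| funext fun z => by simp [equivariantExtension]
  invFun f := ⟨fun i => ⟨fun z => f.1 ((i.1, 0), (i.2, 0), z), fun a z => by
      simpa [smul_cell, affineMap_inl, Prod.map] using
        f.2.1 (SemidirectProduct.inl a) ((i.1, 0), (i.2, 0), z)⟩,
    fun i z hz => f.2.2 _ fun h => hz <| by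
      rw [deg_cellComplex] at h
      simp only at h ⊢
      omega⟩
  left_inv ψ := Subtype.ext <| funext fun i => Subtype.ext <| funext fun z =>
    equivariantExtension_zero ψ.1 i.1 i.2 z
  right_inv f := Subtype.ext <| funext fun z => by
    let α := φ (ofAdd z.1.2, ofAdd z.2.1.2)
    refine (f.2.1 ⟨1, ofAdd z.1.2, ofAdd z.2.1.2⟩
      ((z.1.1, 0), (z.2.1.1, 0), Prod.map α.symm (List.map α.symm) z.2.2)).symm.trans
      (congrArg f.1 ?_)
    simp [smul_cell, affineMap, α, Function.comp_def]

theorem coboundary_equivariantExtension (ψ : ℕ × ℕ → barCochains k A) {V : Bool → MulAut A}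
    (hV : V false = φ (ofAdd 1, 1)) (hV' : V true = φ (1, ofAdd 1)) :
    (cellComplex k A n₁ n₂).coboundary (equivariantExtension φ ψ) = equivariantExtension φ
      ((doubleSequenceShift (barDegree k A)).differential (barDifferential k A)
        (fun i => barAut k A (V i))
        (fun i => ∑ b ∈ Finset.range (bif i then n₂ else n₁), barAut k A (V i) ^ b) ψ) := by
  funext ⟨⟨i, c⟩, ⟨j, c'⟩, z⟩
  let L : barCochains k A →ₗ[k] k :=
    LinearMap.proj z ∘ₗ (barCochains k A).subtype ∘ₗ barAut k A (φ (ofAdd c, ofAdd c'))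
  have h₁ (i b : ℕ) : equivariantExtension φ ψ ((i, c + b), (j, c'), z) =
      L ((barAut k A (V false) ^ b) (ψ (i, j))) :=
    equivariantExtension_add_fst ψ hV c c' z i j b
  have h₂ (j b : ℕ) : equivariantExtension φ ψ ((i, c), (j, c' + b), z) =
      L ((barAut k A (V true) ^ b) (ψ (i, j))) :=
    equivariantExtension_add_snd ψ hV' c c' z i j b
  have h₃ : (barComplex k A).coboundary (fun z => equivariantExtension φ ψ ((i, c), (j, c'), z)) z =
      L (barDifferential k A (ψ (i, j))) :=
    coboundary_barComplex_equivariantExtension ψ c c' z i j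
  refine Eq.trans ?_ (congrArg L (doubleSequenceShift_differential_apply ..)).symm
  rw [cellComplex, ContractedComplex.coboundary_prod, ContractedComplex.coboundary_prod]
  dsimp only
  rw [coboundary_cyclicComplex h₁, coboundary_cyclicComplex h₂, h₃, map_add, map_zsmul L,
    map_add L (_ + _), map_zsmul L]
  simp only [cyclicComplex, map_add, map_sub, map_sum, LinearMap.map_smul_of_tower,
    LinearMap.sub_apply, LinearMap.coe_sum, Finset.sum_apply, Module.End.one_apply, zsmul_eq_mul,
    cond_false, cond_true, mul_add]
  push_cast
  ring

end Cells

section SemidirectProducts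

open Multiplicative (ofAdd)

theorem cochainsEquiv_symm_eq {k A : Type u} [CommRing k] [Group A] {n₁ n₂ : ℕ} [NeZero n₁]
    [NeZero n₂] {φ : Multiplicative (ZMod n₁) × Multiplicative (ZMod n₂) →* MulAut A} {n : ℕ}
    {g : (cellComplex k A n₁ n₂).cochains
      (A ⋊[φ] (Multiplicative (ZMod n₁) × Multiplicative (ZMod n₂))) n}
    {ψ : ℕ × ℕ → barCochains k A} (h : g.1 = equivariantExtension φ ψ) :
    ((cochainsEquiv φ n).symm g).1 = ψ :=
  funext fun i => Subtype.ext <| funext fun z =>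
    (congrFun h _).trans (equivariantExtension_zero ψ i.1 i.2 z)

theorem nonempty_groupCohomology_semidirectProduct_iso (k : Type u) [CommRing k] {A : Type u}
    [Group A] [Fintype A] {n₁ n₂ : ℕ} [NeZero n₁] [NeZero n₂]
    {φ φ' : Multiplicative (ZMod n₁) × Multiplicative (ZMod n₂) →* MulAut A} {τ : MulAut A}
    (hφ : φ (ofAdd 1, 1) = τ) (hφ_one : φ (1, ofAdd 1) = 1)
    (hφ'_one : φ' (ofAdd 1, 1) = 1) (hφ' : φ' (1, ofAdd 1) = τ) {q : ℕ} (hτ : τ ^ q = 1)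
    (hn₁ : q * Fintype.card A ∣ n₁) (hn₂ : q * Fintype.card A ∣ n₂) (n : ℕ) :
    Nonempty (groupCohomology (Rep.trivial k
        (A ⋊[φ] (Multiplicative (ZMod n₁) × Multiplicative (ZMod n₂))) k) n ≅
      groupCohomology (Rep.trivial k
        (A ⋊[φ'] (Multiplicative (ZMod n₁) × Multiplicative (ZMod n₂))) k) n) := by
  obtain ⟨c₁, hc₁⟩ := hn₁
  obtain ⟨c₂, hc₂⟩ := hn₂
  have hc (i : Bool) : (bif i then n₂ else n₁) = q * (Fintype.card A * bif i then c₂ else c₁) := by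
    cases i <;> simp [hc₁, hc₂, mul_assoc]
  obtain ⟨u, hu, hu', hconj⟩ := (doubleSequenceShift (barDegree k A)).isGradedConj_exchange
    (V := fun i => barAut k A (bif i then 1 else τ))
    (V' := fun i => barAut k A (bif i then τ else 1)) (q := q) false isTransferHomotopy_bar
    (isCompatible_barAut τ) (by rw [← map_pow, hτ, map_one]) rfl (map_one _) (map_one _) rfl
    (barAut_mem_homogeneousEnd τ) barProj_mem_homogeneousEnd
    one_sub_barProj_mul_barTransfer_mem_homogeneousEnd (fun i => bif i then c₂ else c₁)
  simp only [← hc] at hconj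
  refine ContractedComplex.nonempty_groupCohomology_iso (isEquivariant_cellComplex φ)
    (cellVertex φ) (isEquivariant_cellComplex φ') (cellVertex φ') (fun n =>
      (cochainsEquiv φ n).symm ≪≫ₗ homogeneousUnitEquiv hu hu' n ≪≫ₗ cochainsEquiv φ' n) ?_ n
  intro n f g hfg
  obtain ⟨ψ, rfl⟩ := (cochainsEquiv φ n).surjective f
  have hg := cochainsEquiv_symm_eq (hfg.trans (coboundary_equivariantExtension ψ.1
    (V := fun i => bif i then 1 else τ) hφ.symm hφ_one.symm))
  simp only [LinearEquiv.trans_apply, LinearEquiv.symm_apply_apply]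
  refine .trans ?_ (coboundary_equivariantExtension (u.1 ψ.1)
    (V := fun i => bif i then τ else 1) hφ'_one.symm hφ'.symm).symm
  rw [← Module.End.mul_apply, ← hconj.eq, Module.End.mul_apply, ← hg]
  rfl

end SemidirectProducts

section Centers

theorem semidirectProduct_pow_eq {A Q : Type*} [Group A] [Group Q] {φ : Q →* MulAut A}
    {g : A ⋊[φ] Q} (hg : φ g.right = 1) (m : ℕ) : g ^ m = ⟨g.left ^ m, g.right ^ m⟩ := by
  induction m with
  | zero => simp only [pow_zero]; rfl
  | succ m ih =>
    rw [pow_succ, ih]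
    ext
    · simp only [SemidirectProduct.mul_left, map_pow, hg, one_pow, MulAut.one_apply, pow_succ]
    · simp only [SemidirectProduct.mul_right, pow_succ]

variable {A Q : Type*} [CommGroup Q]

theorem inr_mem_center [Group A] {φ : Q →* MulAut A} {c : Q} (hc : φ c = 1) :
    (SemidirectProduct.inr c : A ⋊[φ] Q) ∈ Subgroup.center (A ⋊[φ] Q) :=
  Subgroup.mem_center_iff.2 fun g => by
    ext <;> simp [hc, mul_comm]

variable [CommGroup A] {φ : Q →* MulAut A}

theorem map_right_eq_one_of_mem_center {w : A ⋊[φ] Q} (hw : w ∈ Subgroup.center (A ⋊[φ] Q)) :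
    φ w.right = 1 := by
  ext a
  have h := congrArg SemidirectProduct.left (Subgroup.mem_center_iff.1 hw (.inl a))
  simpa [mul_comm a] using h.symm

theorem pow_eq_one_of_mem_center {N : ℕ} (hA : ∀ a : A, a ^ N = 1)
    (hQ : ∀ c, φ c = 1 → c ^ N = 1) {w : A ⋊[φ] Q} (hw : w ∈ Subgroup.center (A ⋊[φ] Q)) :
    w ^ N = 1 := by
  have hφ := map_right_eq_one_of_mem_center hw
  rw [semidirectProduct_pow_eq hφ, hA, hQ _ hφ]
  rfl

theorem isEmpty_semidirectProduct_mulEquiv {φ' : Q →* MulAut A} {N : ℕ} (hA : ∀ a : A, a ^ N = 1)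
    {c : Q} (hc : φ c = 1) (hcN : c ^ N ≠ 1) (hQ : ∀ c, φ' c = 1 → c ^ N = 1) :
    IsEmpty (A ⋊[φ] Q ≃* A ⋊[φ'] Q) where
  false e := hcN <| by
    have he : e (.inr c) ∈ Subgroup.center (A ⋊[φ'] Q) :=
      Subgroup.mem_center_iff.2 fun g => by
        obtain ⟨g, rfl⟩ := e.surjective g
        rw [← map_mul, ← map_mul, Subgroup.mem_center_iff.1 (inr_mem_center hc)]
    have hpow := pow_eq_one_of_mem_center hA hQ he
    rw [← map_pow, map_eq_one_iff e e.injective, ← map_pow] at hpow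
    exact SemidirectProduct.inr_injective (hpow.trans (map_one SemidirectProduct.inr).symm)

end Centers

section CyclicActions

open Multiplicative (ofAdd toAdd)

variable {M : Type*} [Group M] {n : ℕ} [NeZero n] {τ : M}

/-- The homomorphism from a cyclic group which sends the generator `1` to `τ`. -/
def zmodPowHom (hτ : τ ^ n = 1) : Multiplicative (ZMod n) →* M where
  toFun c := τ ^ (toAdd c).val
  map_one' := by simp
  map_mul' a b := by
    rw [← pow_add, toAdd_mul, ZMod.val_add]
    exact (pow_eq_pow_mod _ hτ).symm

theorem zmodPowHom_ofAdd_one (hτ : τ ^ n = 1) : zmodPowHom hτ (ofAdd 1) = τ := by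
  change τ ^ (1 : ZMod n).val = τ
  rw [ZMod.val_one_eq_one_mod, ← pow_eq_pow_mod _ hτ, pow_one]

theorem pow_eq_one_of_zmodPowHom_eq_one {m : ℕ} (hn : n = orderOf τ * m) (hτ : τ ^ n = 1)
    {c : Multiplicative (ZMod n)} (hc : zmodPowHom hτ c = 1) : c ^ m = 1 := by
  obtain ⟨b, hb⟩ := orderOf_dvd_of_pow_eq_one hc
  apply toAdd.injective
  rw [toAdd_pow, toAdd_one, nsmul_eq_mul, ← ZMod.natCast_zmod_val (toAdd c), hb, ← Nat.cast_mul,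
    ZMod.natCast_eq_zero_iff, hn]
  exact ⟨b, by ring⟩

theorem isEmpty_semidirectProduct_fst_mulEquiv_snd {A : Type*} [CommGroup A] {τ : MulAut A}
    {m n : ℕ} [NeZero m] [NeZero n] (hA : ∀ a : A, a ^ m = 1) (hτ : τ ≠ 1)
    (hn : n = orderOf τ * m) (hτm : τ ^ m = 1) (hτn : τ ^ n = 1) :
    IsEmpty (A ⋊[(zmodPowHom hτm).comp (.fst _ (Multiplicative (ZMod n)))] _ ≃*
      A ⋊[(zmodPowHom hτn).comp (.snd (Multiplicative (ZMod m)) _)] _) := by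
  refine isEmpty_semidirectProduct_mulEquiv hA (c := (1, ofAdd 1)) (map_one (zmodPowHom hτm))
    (fun h => ?_) fun c hc => Prod.ext ?_ (pow_eq_one_of_zmodPowHom_eq_one hn hτn hc)
  · have hdvd : n ∣ m := by
      simpa [← ofAdd_nsmul, ZMod.natCast_eq_zero_iff] using congrArg Prod.snd h
    exact hτ (orderOf_eq_one_iff.1 (Nat.dvd_one.1
      (Nat.dvd_of_mul_dvd_mul_right (NeZero.pos m) (by rwa [one_mul, ← hn]))))
  · simpa [Nat.card_zmod] using pow_card_eq_one' (x := c.1)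

theorem exists_not_isomorphic_groupCohomology_iso {A : Type u} [CommGroup A] [Finite A]
    {τ : MulAut A} (hτ : τ ≠ 1) :
    ∃ (G₁ G₂ : Type u) (_ : Group G₁) (_ : Group G₂) (_ : Finite G₁) (_ : Finite G₂),
      Nat.card G₁ = orderOf τ ^ 3 * Nat.card A ^ 3 ∧ Nat.card G₂ = orderOf τ ^ 3 * Nat.card A ^ 3 ∧
      IsEmpty (G₁ ≃* G₂) ∧ ∀ (k : Type u) [CommRing k] (n : ℕ),
        Nonempty (groupCohomology (Rep.trivial k G₁ k) n ≅
          groupCohomology (Rep.trivial k G₂ k) n) := by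
  have := Fintype.ofFinite A
  have hq : orderOf τ ≠ 0 := (orderOf_pos τ).ne'
  let m := orderOf τ * Nat.card A
  let n := orderOf τ * m
  have : NeZero m := ⟨mul_ne_zero hq Nat.card_pos.ne'⟩
  have : NeZero n := ⟨mul_ne_zero hq (NeZero.ne m)⟩
  have hτm : τ ^ m = 1 := orderOf_dvd_iff_pow_eq_one.1 ⟨_, rfl⟩
  have hτn : τ ^ n = 1 := orderOf_dvd_iff_pow_eq_one.1 ⟨_, rfl⟩
  have hA (a : A) : a ^ m = 1 :=
    orderOf_dvd_iff_pow_eq_one.1 ((orderOf_dvd_natCard a).trans (Nat.dvd_mul_left _ _))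
  have hm : orderOf τ * Fintype.card A ∣ m := by rw [← Nat.card_eq_fintype_card]
  let Q := Multiplicative (ZMod m) × Multiplicative (ZMod n)
  have hQ : Nat.card A * Nat.card Q = orderOf τ ^ 3 * Nat.card A ^ 3 := by
    simp only [Q, Nat.card_prod, Nat.card_congr Multiplicative.toAdd, Nat.card_zmod, n, m]
    ring
  exact ⟨A ⋊[(zmodPowHom hτm).comp (.fst _ _)] Q, A ⋊[(zmodPowHom hτn).comp (.snd _ _)] Q,
    inferInstance, inferInstance, .of_equiv _ SemidirectProduct.equivProd.symm,
    .of_equiv _ SemidirectProduct.equivProd.symm, SemidirectProduct.card.trans hQ,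
    SemidirectProduct.card.trans hQ, isEmpty_semidirectProduct_fst_mulEquiv_snd hA hτ rfl hτm hτn,
    fun k _ => nonempty_groupCohomology_semidirectProduct_iso k (zmodPowHom_ofAdd_one hτm)
      (map_one (zmodPowHom hτm)) (map_one (zmodPowHom hτn)) (zmodPowHom_ofAdd_one hτn)
      (pow_orderOf_eq_one τ) hm (hm.mul_left _)⟩

end CyclicActions

theorem exists_mulAut_orderOf_eq_prime {p : ℕ} (hp : p.Prime) :
    ∃ τ : MulAut (Multiplicative (ZMod (p ^ 2))), orderOf τ = p := by
  have : Fact p.Prime := ⟨hp⟩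
  have : NeZero (p ^ 2) := ⟨pow_ne_zero 2 hp.ne_zero⟩
  refine exists_prime_orderOf_dvd_card' p ?_
  rw [IsCyclic.card_mulAut, Nat.card_congr Multiplicative.toAdd, Nat.card_zmod,
    Nat.totient_prime_pow hp two_pos]
  exact ⟨p - 1, by simp⟩

theorem p_groups_not_determined_by_integral_cohomology_general (p : ℕ) (hp : p.Prime) :
    ∃ (G₁ G₂ : Type) (_ : Group G₁) (_ : Group G₂) (_ : Finite G₁) (_ : Finite G₂),
      Nat.card G₁ = p ^ 9 ∧ Nat.card G₂ = p ^ 9 ∧ IsEmpty (G₁ ≃* G₂) ∧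
      ∀ (k : Type) [CommRing k] (n : ℕ), Nonempty (groupCohomology (Rep.trivial k G₁ k) n ≅
        groupCohomology (Rep.trivial k G₂ k) n) := by
  obtain ⟨τ, hτ⟩ := exists_mulAut_orderOf_eq_prime hp
  have : NeZero (p ^ 2) := ⟨pow_ne_zero 2 hp.ne_zero⟩
  have hτ_ne : τ ≠ 1 := by
    rintro rfl
    exact hp.ne_one (hτ.symm.trans orderOf_one)
  have hcard : orderOf τ ^ 3 * Nat.card (Multiplicative (ZMod (p ^ 2))) ^ 3 = p ^ 9 := by
    rw [hτ, Nat.card_congr Multiplicative.toAdd, Nat.card_zmod]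
    ring
  exact hcard ▸ exists_not_isomorphic_groupCohomology_iso hτ_ne

/-- For every prime `p` there exist finite groups `G₁`, `G₂` of the same order, a power of `p`,
which are not isomorphic but have isomorphic integral cohomology groups in every degree. -/
theorem p_groups_not_determined_by_integral_cohomology (p : ℕ) (hp : p.Prime) :
    ∃ (G₁ G₂ : Type) (_ : Group G₁) (_ : Group G₂) (_ : Finite G₁) (_ : Finite G₂),
      (∃ i : ℕ, Nat.card G₁ = p ^ i) ∧
      Nat.card G₁ = Nat.card G₂ ∧
      (¬ Nonempty (G₁ ≃* G₂)) ∧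
      ∀ k : ℕ, Nonempty
        ((groupCohomology (Rep.trivial ℤ G₁ ℤ) k) ≃+ (groupCohomology (Rep.trivial ℤ G₂ ℤ) k)) := by
  obtain ⟨G₁, G₂, _, _, hf₁, hf₂, hG₁, hG₂, hG, e⟩ :=
    p_groups_not_determined_by_integral_cohomology_general p hp
  exact ⟨G₁, G₂, _, _, hf₁, hf₂, ⟨9, hG₁⟩, hG₁.trans hG₂.symm, not_nonempty_iff.2 hG,
    fun k => (e ℤ k).map fun f => f.toLinearEquiv.toAddEquiv⟩
end

section
/- Let p be a prime, m a natural number, and let A and B be finite abelian p-groups such that the subgroups pᵐ·A and pᵐ·B are cyclic. If A and B have the same order, and for every k with 1 ≤ k ≤ m the quotients A/pᵏA and B/pᵏB have the same order, then A and B are isomorphic. -/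
/-- The subgroup `n • A = {n • a : a ∈ A}` of an abelian group `A`. -/
def smulSubgroup (n : ℕ) (A : Type) [AddCommGroup A] : AddSubgroup A :=
  AddMonoidHom.range (n • AddMonoidHom.id A)

/-!
A finite abelian group is a product of cyclic groups of prime power orders `qᵢ`, and then
`A / nA` has order `∏ᵢ gcd (qᵢ, n)`. For a prime `r`, the exponent of `r` in `∏ᵢ gcd (qᵢ, rᵏ)` is
concave in `k`, and its slope drops at `k` by the number of indices `i` with `qᵢ = rᵏ`. Hence the
indices of the subgroups `rᵏA`, for all prime powers `rᵏ`, determine `A`.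

If `pᵐA` is cyclic, its order `N` determines `[A : rᵏA]` wherever it is not already given:
`[A : pᵐ⁺ᵈA] = gcd (N, pᵈ) · [A : pᵐA]`, and `[A : rᵏA] = gcd (N, rᵏ)` for `r ≠ p`.
-/

section NsmulRange

variable {A B : Type*} [AddCommGroup A] [AddCommGroup B]

variable (A) in
/-- The subgroup `nA` of an abelian group `A` in an arbitrary universe, written with Mathlib's
multiplication-by-`n` map; for `A : Type` it is definitionally `smulSubgroup n A`. -/
def nsmulRange (n : ℕ) : AddSubgroup A :=
  (nsmulAddMonoidHom n).range

theorem index_nsmulRange_congr (e : A ≃+ B) (n : ℕ) :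
    (nsmulRange A n).index = (nsmulRange B n).index := by
  rw [nsmulRange, nsmulRange, ← e.map_range_nsmulAddMonoidHom, AddSubgroup.index_map_equiv]

theorem index_nsmulRange_pi {ι : Type*} [Fintype ι] (G : ι → Type*) [∀ i, AddCommGroup (G i)]
    (n : ℕ) : (nsmulRange (∀ i, G i) n).index = ∏ i, (nsmulRange (G i) n).index :=
  (Nat.card_congr (QuotientAddGroup.addEquivPiModRangeNSMulAddMonoidHom G n).toEquiv).trans
    Nat.card_pi

theorem index_nsmulRange_of_isAddCyclic [Finite A] [IsAddCyclic A] (n : ℕ) :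
    (nsmulRange A n).index = (Nat.card A).gcd n :=
  IsAddCyclic.index_nsmulAddMonoidHom_range A n

theorem index_nsmulRange_pi_zmod {ι : Type*} [Fintype ι] (q : ι → ℕ) [∀ i, NeZero (q i)] (n : ℕ) :
    (nsmulRange (∀ i, ZMod (q i)) n).index = ∏ i, (q i).gcd n := by
  simp only [index_nsmulRange_pi, index_nsmulRange_of_isAddCyclic, Nat.card_zmod]

theorem index_nsmulRange_one : (nsmulRange A 1).index = 1 :=
  AddSubgroup.index_eq_one.2 (eq_top_iff.2 fun a _ => ⟨a, one_nsmul a⟩)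

theorem map_subtype_nsmulRange (n d : ℕ) :
    (nsmulRange (nsmulRange A n) d).map (nsmulRange A n).subtype = nsmulRange A (n * d) := by
  ext x
  constructor
  · rintro ⟨_, ⟨⟨_, a, rfl⟩, rfl⟩, rfl⟩
    exact ⟨a, mul_nsmul a n d⟩
  · rintro ⟨a, rfl⟩
    exact ⟨d • ⟨n • a, a, rfl⟩, ⟨_, rfl⟩, (mul_nsmul a n d).symm⟩

theorem index_nsmulRange_mul (n d : ℕ) :
    (nsmulRange A (n * d)).index =
      (nsmulRange (nsmulRange A n) d).index * (nsmulRange A n).index := by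
  rw [← map_subtype_nsmulRange, AddSubgroup.index_map_subtype]

theorem nsmul_gcdA_smul_add_nsmul_gcdB_smul {n d : ℕ} (h : n.Coprime d) (x : A) :
    n • n.gcdA d • x + d • n.gcdB d • x = x := by
  have bezout : (n : ℤ) * n.gcdA d + d * n.gcdB d = 1 := by
    rw [← Nat.gcd_eq_gcd_ab, h.gcd_eq_one, Nat.cast_one]
  rw [← natCast_zsmul, ← natCast_zsmul, ← mul_smul, ← mul_smul, ← add_smul, bezout, one_smul]

theorem nsmulRange_sup_of_coprime {n d : ℕ} (h : n.Coprime d) :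
    nsmulRange A n ⊔ nsmulRange A d = ⊤ := by
  refine eq_top_iff.2 fun x _ => ?_
  rw [← nsmul_gcdA_smul_add_nsmul_gcdB_smul h x]
  exact AddSubgroup.add_mem_sup ⟨_, rfl⟩ ⟨_, rfl⟩

theorem nsmulRange_inf_of_coprime {n d : ℕ} (h : n.Coprime d) :
    nsmulRange A n ⊓ nsmulRange A d = nsmulRange A (n * d) := by
  apply le_antisymm
  · rintro x ⟨⟨a, ha : n • a = x⟩, ⟨b, hb : d • b = x⟩⟩
    refine ⟨n.gcdA d • b + n.gcdB d • a, ?_⟩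
    calc (n * d) • (n.gcdA d • b + n.gcdB d • a)
        = n • n.gcdA d • d • b + d • n.gcdB d • n • a := by module
      _ = x := by rw [ha, hb, nsmul_gcdA_smul_add_nsmul_gcdB_smul h]
  · rintro _ ⟨a, rfl⟩
    exact ⟨⟨d • a, (mul_nsmul' a n d).symm⟩, ⟨n • a, (mul_nsmul a n d).symm⟩⟩

theorem index_inf_of_sup_eq_top {H K : AddSubgroup A} (h : H ⊔ K = ⊤) :
    (H ⊓ K).index = H.index * K.index := by
  rw [← AddSubgroup.relIndex_mul_index inf_le_right, AddSubgroup.inf_relIndex_right,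
    ← AddSubgroup.relIndex_sup_left, h, AddSubgroup.relIndex_top_right]

theorem index_nsmulRange_mul_of_isAddCyclic {n : ℕ} [Finite (nsmulRange A n)]
    (hn : IsAddCyclic (nsmulRange A n)) (d : ℕ) :
    (nsmulRange A (n * d)).index =
      (Nat.card (nsmulRange A n)).gcd d * (nsmulRange A n).index := by
  rw [index_nsmulRange_mul, index_nsmulRange_of_isAddCyclic]

theorem index_nsmulRange_of_isAddCyclic_of_coprime [Finite A] {n d : ℕ}
    (hn : IsAddCyclic (nsmulRange A n)) (h : n.Coprime d) :
    (nsmulRange A d).index = (Nat.card (nsmulRange A n)).gcd d := by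
  apply Nat.eq_of_mul_eq_mul_left (Nat.pos_of_ne_zero (nsmulRange A n).index_ne_zero_of_finite)
  rw [← index_inf_of_sup_eq_top (nsmulRange_sup_of_coprime h), nsmulRange_inf_of_coprime h,
    index_nsmulRange_mul_of_isAddCyclic hn, mul_comm]

end NsmulRange

section PrimePower

theorem gcd_pow_pow_same (s e k : ℕ) : (s ^ e).gcd (s ^ k) = s ^ min e k := by
  obtain h | h := le_total e k
  · rw [min_eq_left h, Nat.gcd_eq_left (pow_dvd_pow s h)]
  · rw [min_eq_right h, Nat.gcd_eq_right (pow_dvd_pow s h)]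

-- Multiplicative form, free of subtraction, of: `k ↦ min e k` has second difference `-1` at
-- `k + 1 = e` and `0` elsewhere.
theorem pow_mul_gcd_mul_gcd_eq_sq {q r : ℕ} (hq : IsPrimePow q) (hr : r.Prime) (k : ℕ) :
    r ^ (if q = r ^ (k + 1) then 1 else 0) * (q.gcd (r ^ k) * q.gcd (r ^ (k + 2))) =
      q.gcd (r ^ (k + 1)) ^ 2 := by
  obtain ⟨s, e, hs, he, rfl⟩ := (isPrimePow_nat_iff q).1 hq
  obtain rfl | hsr := eq_or_ne s r
  · simp only [gcd_pow_pow_same, sq, ← pow_add, Nat.pow_right_inj hs.one_lt]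
    split_ifs <;> omega
  · have gcd_eq_one (j : ℕ) : (s ^ e).gcd (r ^ j) = 1 := Nat.coprime_pow_primes e j hs hr hsr
    have pow_ne : s ^ e ≠ r ^ (k + 1) := fun h =>
      hsr ((Nat.prime_dvd_prime_iff_eq hs hr).1
        (hs.dvd_of_dvd_pow (h ▸ dvd_pow_self s he.ne')))
    simp only [gcd_eq_one, if_neg pow_ne, pow_zero, mul_one, one_pow]

theorem pow_card_mul_prod_gcd {ι : Type*} [Fintype ι] {q : ι → ℕ} (hq : ∀ i, IsPrimePow (q i))
    {r : ℕ} (hr : r.Prime) (k : ℕ) :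
    r ^ Fintype.card {i // q i = r ^ (k + 1)} *
        ((∏ i, (q i).gcd (r ^ k)) * ∏ i, (q i).gcd (r ^ (k + 2))) =
      (∏ i, (q i).gcd (r ^ (k + 1))) ^ 2 := by
  rw [Fintype.card_subtype, Finset.card_filter, ← Finset.prod_pow_eq_pow_sum,
    ← Finset.prod_mul_distrib, ← Finset.prod_mul_distrib, ← Finset.prod_pow]
  exact Finset.prod_congr rfl fun i _ => pow_mul_gcd_mul_gcd_eq_sq (hq i) hr k

theorem card_fiber_eq_of_prod_gcd_eq {ι κ : Type*} [Fintype ι] [Fintype κ] {q : ι → ℕ} {q' : κ → ℕ}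
    (hq : ∀ i, IsPrimePow (q i)) (hq' : ∀ j, IsPrimePow (q' j))
    (h : ∀ r k : ℕ, r.Prime → ∏ i, (q i).gcd (r ^ k) = ∏ j, (q' j).gcd (r ^ k)) (c : ℕ) :
    Fintype.card {i // q i = c} = Fintype.card {j // q' j = c} := by
  by_cases hc : IsPrimePow c
  · obtain ⟨r, k, r_prime, rfl⟩ := (isPrimePow_iff_pow_succ c).1 hc
    have hr : r.Prime := r_prime.nat_prime
    have prod_pos (j : ℕ) : 0 < ∏ i, (q i).gcd (r ^ j) :=
      Finset.prod_pos fun i _ => Nat.gcd_pos_of_pos_left _ (hq i).pos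
    apply Nat.pow_right_injective hr.two_le
    apply Nat.eq_of_mul_eq_mul_right (Nat.mul_pos (prod_pos k) (prod_pos (k + 2)))
    calc _ = (∏ i, (q i).gcd (r ^ (k + 1))) ^ 2 := pow_card_mul_prod_gcd hq hr k
      _ = _ := by rw [h _ _ hr, h _ _ hr, h _ _ hr, pow_card_mul_prod_gcd hq' hr k]
  · have : IsEmpty {i // q i = c} := ⟨fun i => hc (i.2 ▸ hq i)⟩
    have : IsEmpty {j // q' j = c} := ⟨fun j => hc (j.2 ▸ hq' j)⟩
    simp only [Fintype.card_eq_zero]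

end PrimePower

section Classification

theorem nonempty_addEquiv_pi_zmod {ι κ : Type*} [Fintype ι] [Fintype κ] {q : ι → ℕ} {q' : κ → ℕ}
    (h : ∀ c, Fintype.card {i // q i = c} = Fintype.card {j // q' j = c}) :
    Nonempty ((∀ i, ZMod (q i)) ≃+ ∀ j, ZMod (q' j)) := by
  let σ : ι ≃ κ := Equiv.ofFiberEquiv fun c => Fintype.equivOfCardEq (h c)
  have q_eq (i : ι) : q i = q' (σ i) := (Equiv.ofFiberEquiv_map _ i).symm
  exact ⟨(RingEquiv.piCongrRight fun i => ZMod.ringEquivCongr (q_eq i)).trans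
    (RingEquiv.piCongrLeft (fun j => ZMod (q' j)) σ) |>.toAddEquiv⟩

theorem exists_addEquiv_pi_zmod_isPrimePow (A : Type*) [AddCommGroup A] [Finite A] :
    ∃ (ι : Type) (_ : Fintype ι) (q : ι → ℕ),
      (∀ i, IsPrimePow (q i)) ∧ Nonempty (A ≃+ ∀ i, ZMod (q i)) := by
  classical
  obtain ⟨ι, _, p, hp, e, ⟨f⟩⟩ := AddCommGroup.equiv_directSum_zmod_of_finite A
  let q (i : ι) : ℕ := p i ^ e i
  have trivial_factor (i : {i // ¬ e i ≠ 0}) : Unique (ZMod (q i)) := by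
    have q_eq_one : q i = 1 := by simp only [q, not_not.1 i.2, pow_zero]
    rw [q_eq_one]
    infer_instance
  let g := (RingEquiv.piEquivPiSubtypeProd (fun i => e i ≠ 0) fun i => ZMod (q i)).toAddEquiv
  exact ⟨{i // e i ≠ 0}, inferInstance, fun i => q i, fun i => (hp i).isPrimePow.pow i.2,
    ⟨(f.trans (DirectSum.addEquivProd _)).trans (g.trans AddEquiv.prodUnique)⟩⟩

theorem nonempty_addEquiv_iff_index_nsmulRange {A B : Type*} [AddCommGroup A] [AddCommGroup B]
    [Finite A] [Finite B] :
    Nonempty (A ≃+ B) ↔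
      ∀ r k : ℕ, r.Prime → (nsmulRange A (r ^ k)).index = (nsmulRange B (r ^ k)).index := by
  refine ⟨fun ⟨e⟩ r k _ => index_nsmulRange_congr e (r ^ k), fun h => ?_⟩
  obtain ⟨ι, _, q, hq, ⟨f⟩⟩ := exists_addEquiv_pi_zmod_isPrimePow A
  obtain ⟨κ, _, q', hq', ⟨g⟩⟩ := exists_addEquiv_pi_zmod_isPrimePow B
  have (i : ι) : NeZero (q i) := ⟨(hq i).ne_zero⟩
  have (j : κ) : NeZero (q' j) := ⟨(hq' j).ne_zero⟩
  have prod_gcd_eq (r k : ℕ) (hr : r.Prime) :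
      ∏ i, (q i).gcd (r ^ k) = ∏ j, (q' j).gcd (r ^ k) := by
    rw [← index_nsmulRange_pi_zmod, ← index_nsmulRange_pi_zmod, ← index_nsmulRange_congr f,
      ← index_nsmulRange_congr g, h r k hr]
  obtain ⟨φ⟩ := nonempty_addEquiv_pi_zmod (card_fiber_eq_of_prod_gcd_eq hq hq' prod_gcd_eq)
  exact ⟨(f.trans φ).trans g.symm⟩

end Classification

theorem abelian_p_group_determined_general {p : ℕ} (hp : p.Prime) {m : ℕ} {A B : Type*}
    [AddCommGroup A] [AddCommGroup B] [Finite A] [Finite B]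
    (hcycA : IsAddCyclic (nsmulRange A (p ^ m))) (hcycB : IsAddCyclic (nsmulRange B (p ^ m)))
    (hcard : Nat.card A = Nat.card B)
    (hindex : ∀ k : ℕ, 1 ≤ k → k ≤ m →
      (nsmulRange A (p ^ k)).index = (nsmulRange B (p ^ k)).index) :
    Nonempty (A ≃+ B) := by
  have index_eq (k : ℕ) (hk : k ≤ m) :
      (nsmulRange A (p ^ k)).index = (nsmulRange B (p ^ k)).index := by
    obtain rfl | hk0 := Nat.eq_zero_or_pos k
    · rw [pow_zero, index_nsmulRange_one, index_nsmulRange_one]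
    · exact hindex k hk0 hk
  have card_eq : Nat.card (nsmulRange A (p ^ m)) = Nat.card (nsmulRange B (p ^ m)) := by
    apply Nat.eq_of_mul_eq_mul_right
      (Nat.pos_of_ne_zero (nsmulRange A (p ^ m)).index_ne_zero_of_finite)
    rw [AddSubgroup.card_mul_index, index_eq m le_rfl, AddSubgroup.card_mul_index, hcard]
  refine nonempty_addEquiv_iff_index_nsmulRange.2 fun r k hr => ?_
  obtain rfl | hrp := eq_or_ne r p
  · obtain hk | hk := le_total k m
    · exact index_eq k hk
    · obtain ⟨d, rfl⟩ := Nat.exists_eq_add_of_le hk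
      rw [pow_add, index_nsmulRange_mul_of_isAddCyclic hcycA,
        index_nsmulRange_mul_of_isAddCyclic hcycB, card_eq, index_eq m le_rfl]
  · have pow_coprime : (p ^ m).Coprime (r ^ k) := Nat.coprime_pow_primes m k hp hr hrp.symm
    rw [index_nsmulRange_of_isAddCyclic_of_coprime hcycA pow_coprime,
      index_nsmulRange_of_isAddCyclic_of_coprime hcycB pow_coprime, card_eq]

/-- If `A`, `B` are finite abelian `p`-groups with `pᵐ·A` and `pᵐ·B` cyclic, `A` and `B` have the
same order, and `A/pᵏA` and `B/pᵏB` have the same order for all `1 ≤ k ≤ m`, then `A ≅ B`. -/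
theorem abelian_p_group_determined (p : ℕ) (hp : p.Prime) (m : ℕ)
    (A B : Type) [AddCommGroup A] [AddCommGroup B] [Finite A] [Finite B]
    (hA : ∃ i : ℕ, Nat.card A = p ^ i) (hB : ∃ j : ℕ, Nat.card B = p ^ j)
    (hcycA : IsAddCyclic (smulSubgroup (p ^ m) A))
    (hcycB : IsAddCyclic (smulSubgroup (p ^ m) B))
    (hcard : Nat.card A = Nat.card B)
    (hquot : ∀ k : ℕ, 1 ≤ k → k ≤ m →
      Nat.card (A ⧸ smulSubgroup (p ^ k) A) = Nat.card (B ⧸ smulSubgroup (p ^ k) B)) :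
    Nonempty (A ≃+ B) := by
  exact abelian_p_group_determined_general hp hcycA hcycB hcard hquot
end

section
/- Let Q be a group of order 8 possessing subgroups Q₁ and Q₂ of order 4 that are not isomorphic to each other, let C₃ be the cyclic group of order 3, and for i = 1, 2 let G_i = C₃ ⋊ Q be the semidirect product given by a homomorphism Q → Aut(C₃) whose kernel is Q_i (such a homomorphism exists since Q/Q_i and Aut(C₃) both have order 2). Then G₁ and G₂ are non-isomorphic groups of order 24, yet for every natural number n the integral cohomology groups Hⁿ(G₁;ℤ) and Hⁿ(G₂;ℤ) are isomorphic as abelian groups. -/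
/-!
Inflation along a surjection `π` with finite kernel of order `m` is an isomorphism in positive
degrees away from the primes dividing `m`: on homogeneous cochains, summing over all lifts of the
variables is inverse to inflation up to powers of `m`, one composite being multiplication by a power
of `m` and the other being homotopic to it through cones.

For `G = N ⋊[f] Q` with `N` and `Q` of coprime orders, this applies to `G → Q`, whose kernel is `N`,
and to `G → N ⋊ f(Q)`, whose kernel embeds in `Q`. So the `|Q|`-torsion of the cohomology depends
only on `Q` and the `|N|`-torsion only on the image of `f`, and together they exhaust the positive
degrees, which `|G|` annihilates. With `N = C₃`, both actions have image `Aut(C₃)`.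

The groups are told apart by `ker f`: an isomorphism preserves `N`, the set of solutions of
`x ^ |N| = 1`, hence also its centralizer, whose image in `Q` is `ker f` when `N` is commutative.
-/

open CategoryTheory

/-- Functions of `n` variables in `G`, the homogeneous cochains of degree `n - 1`. Indexing by the
number of variables makes room for the constants (`n = 0`), the augmentation of the complex. -/
abbrev HomogeneousCochain (G M : Type*) (n : ℕ) := (Fin n → G) → M

namespace HomogeneousCochain

section Complex

variable (k : Type*) {G M : Type*} [CommRing k] [AddCommGroup M] [Module k M] {n : ℕ}

/-- The alternating sum over the omissions of one variable. -/
def coboundary : HomogeneousCochain G M n →ₗ[k] HomogeneousCochain G M (n + 1) :=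
  ∑ p : Fin (n + 1), (-1 : k) ^ (p : ℕ) • LinearMap.funLeft k M (· ∘ p.succAbove)

/-- Fixing the first variable, the contracting homotopy of the augmented complex. -/
def cone (v : G) : HomogeneousCochain G M (n + 1) →ₗ[k] HomogeneousCochain G M n :=
  LinearMap.funLeft k M fun x => Fin.cons v x

lemma coboundary_apply (F : HomogeneousCochain G M n) (x : Fin (n + 1) → G) :
    coboundary k F x = ∑ p : Fin (n + 1), (-1 : k) ^ (p : ℕ) • F (x ∘ p.succAbove) := by
  simp [coboundary, LinearMap.funLeft_apply]

@[simp]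
lemma cone_apply (v : G) (F : HomogeneousCochain G M (n + 1)) (x : Fin n → G) :
    cone k v F x = F (Fin.cons v x) := rfl

lemma cone_ext {F F' : HomogeneousCochain G M (n + 1)} (h : ∀ v, cone k v F = cone k v F') :
    F = F' := by
  funext x
  simpa using congrFun (h (x 0)) (Fin.tail x)

lemma cone_coboundary (v : G) (F : HomogeneousCochain G M (n + 1)) :
    cone k v (coboundary k F) = F - coboundary k (cone k v F) := by
  have cons_comp (x : Fin (n + 1) → G) (p : Fin (n + 1)) :
      (Fin.cons v x : Fin (n + 2) → G) ∘ p.succ.succAbove = Fin.cons v (x ∘ p.succAbove) := by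
    funext i
    cases i using Fin.cases <;> simp
  funext x
  simp only [cone_apply, Pi.sub_apply, coboundary_apply]
  rw [Fin.sum_univ_succ, sub_eq_add_neg, ← Finset.sum_neg_distrib]
  congr 1
  · simp [Function.comp_def]
  · simp [cons_comp, pow_succ]

lemma cone_coboundary_zero (v : G) (F : HomogeneousCochain G M 0) :
    cone k v (coboundary k F) = F := by
  funext x
  simp [coboundary_apply, Subsingleton.elim _ x]

@[simp]
lemma coboundary_coboundary (F : HomogeneousCochain G M n) :
    coboundary k (coboundary k F) = 0 := by
  induction n with
  | zero =>
    refine cone_ext k fun v => ?_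
    rw [cone_coboundary, cone_coboundary_zero, sub_self, map_zero]
  | succ n ih =>
    refine cone_ext k fun v => ?_
    rw [cone_coboundary, cone_coboundary, map_sub, ih, sub_zero, sub_self, map_zero]

variable {k}

/-- A null-homotopy, built recursively through cones, of a family of operators `T` that vanishes on
constants and commutes with the coboundary up to the factor `m`. -/
def coneHomotopy (T : ∀ n, HomogeneousCochain G M n →ₗ[k] HomogeneousCochain G M n) (m : k) :
    ∀ n, HomogeneousCochain G M (n + 1) →ₗ[k] HomogeneousCochain G M n
  | 0 => 0
  | n + 1 => LinearMap.pi fun x => LinearMap.proj x ∘ₗ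
      (T (n + 1) - m • coboundary k ∘ₗ coneHomotopy T m n) ∘ₗ cone k (x 0)

section coneHomotopy

variable {T : ∀ n, HomogeneousCochain G M n →ₗ[k] HomogeneousCochain G M n} {m : k}

lemma coneHomotopy_succ_apply (F : HomogeneousCochain G M (n + 2)) (x : Fin (n + 1) → G) :
    coneHomotopy T m (n + 1) F x = (T (n + 1) (cone k (x 0) F) -
      m • coboundary k (coneHomotopy T m n (cone k (x 0) F))) x := rfl

lemma coneHomotopy_coboundary_add (h_zero : T 0 = 0)
    (h_coboundary : ∀ n F, T (n + 1) (coboundary k F) = m • coboundary k (T n F))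
    (F : HomogeneousCochain G M (n + 1)) :
    coneHomotopy T m (n + 1) (coboundary k F) + m • coboundary k (coneHomotopy T m n F) =
      T (n + 1) F := by
  induction n with
  | zero =>
    funext x
    rw [Pi.add_apply, coneHomotopy_succ_apply, cone_coboundary, map_sub, h_coboundary, h_zero]
    simp [coneHomotopy]
  | succ n ih =>
    funext x
    have ih_cone := eq_sub_of_add_eq (ih (cone k (x 0) F))
    rw [Pi.add_apply, coneHomotopy_succ_apply, cone_coboundary, map_sub, map_sub, h_coboundary,
      ih_cone]
    simp [smul_sub]

end coneHomotopy

end Complex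

section Equivariance

variable {k G M : Type*} [CommRing k] [Group G] [AddCommGroup M] [Module k M]
  (ρ : Representation k G M) {n : ℕ}

/-- The representation on cochains whose invariants are the `G`-equivariant ones. -/
def translation : Representation k G (HomogeneousCochain G M n) where
  toFun c := (ρ c).compLeft _ ∘ₗ LinearMap.funLeft k M (c⁻¹ • ·)
  map_one' := by ext; simp [LinearMap.funLeft_apply]
  map_mul' c c' := by ext; simp [LinearMap.funLeft_apply, mul_smul]

@[simp]
lemma translation_apply (c : G) (F : HomogeneousCochain G M n) (x : Fin n → G) :
    translation ρ c F x = ρ c (F (c⁻¹ • x)) := rfl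

lemma mem_invariants_translation {F : HomogeneousCochain G M n} :
    F ∈ (translation ρ).invariants ↔ ∀ (c : G) x, F (c • x) = ρ c (F x) := by
  simp only [Representation.mem_invariants, funext_iff, translation_apply]
  exact forall_congr' fun c => ⟨fun h x => by simpa using (h (c • x)).symm,
    fun h x => by simpa using (h (c⁻¹ • x)).symm⟩

lemma coboundary_translation (c : G) (F : HomogeneousCochain G M n) :
    coboundary k (translation ρ c F) = translation ρ c (coboundary k F) := by
  funext x
  simp only [coboundary_apply, translation_apply, map_sum, map_smul]
  rfl

lemma cone_translation (c v : G) (F : HomogeneousCochain G M (n + 1)) :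
    cone k v (translation ρ c F) = translation ρ c (cone k (c⁻¹ * v) F) := by
  funext x
  have smul_cons : c⁻¹ • (Fin.cons v x : Fin (n + 1) → G) = Fin.cons (c⁻¹ * v) (c⁻¹ • x) := by
    funext i
    cases i using Fin.cases <;> simp
  simp [smul_cons]

lemma coneHomotopy_translation {m : k}
    {T : ∀ n, HomogeneousCochain G M n →ₗ[k] HomogeneousCochain G M n}
    (hT : ∀ n c F, T n (translation ρ c F) = translation ρ c (T n F)) (c : G)
    (F : HomogeneousCochain G M (n + 1)) :
    coneHomotopy T m n (translation ρ c F) = translation ρ c (coneHomotopy T m n F) := by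
  induction n with
  | zero => simp [coneHomotopy]
  | succ n ih =>
    funext x
    rw [coneHomotopy_succ_apply, cone_translation, hT, ih, coboundary_translation, ← map_smul,
      ← map_sub]
    rfl

lemma coboundary_mem_invariants {F : HomogeneousCochain G M n}
    (hF : F ∈ (translation ρ).invariants) : coboundary k F ∈ (translation ρ).invariants :=
  fun c => by rw [← coboundary_translation, hF c]

/-- The equivariant homogeneous cocycles. -/
noncomputable def cocycles (n : ℕ) : Submodule k (HomogeneousCochain G M n) :=
  (translation ρ).invariants ⊓ (coboundary k).ker

end Equivariance

section Averaging

variable {k G M : Type*} [CommRing k] [Group G] [Finite G] [AddCommGroup M] [Module k M]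
  {ρ : Representation k G M} {n : ℕ}

lemma exists_coboundary_eq_card_smul {F : HomogeneousCochain G M (n + 1)}
    (hF : F ∈ cocycles ρ (n + 1)) :
    ∃ E ∈ (translation ρ).invariants, coboundary k E = (Nat.card G : k) • F := by
  have := Fintype.ofFinite G
  have coboundary_cone (v : G) : coboundary k (cone k v F) = F :=
    (sub_eq_zero.1 ((cone_coboundary k v F).symm.trans (by rw [hF.2, map_zero]))).symm
  refine ⟨∑ v, cone k v F, fun c => ?_, ?_⟩
  · rw [map_sum, ← Equiv.sum_comp (Equiv.mulLeft c⁻¹)]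
    simp [← cone_translation, hF.1 c]
  · simp [coboundary_cone, Nat.cast_smul_eq_nsmul]

end Averaging

section Inflation

variable (k : Type*) {G G' M : Type*} [CommRing k] [AddCommGroup M] [Module k M] {n : ℕ}

/-- Pullback of cochains along `π`. -/
def inflate (π : G → G') : HomogeneousCochain G' M n →ₗ[k] HomogeneousCochain G M n :=
  LinearMap.funLeft k M (π ∘ ·)

@[simp]
lemma inflate_apply (π : G → G') (F : HomogeneousCochain G' M n) (x : Fin n → G) :
    inflate k π F x = F (π ∘ x) := rfl

lemma inflate_coboundary (π : G → G') (F : HomogeneousCochain G' M n) :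
    inflate k π (coboundary k F) = coboundary k (inflate k π F) := by
  funext x
  simp [coboundary_apply, Function.comp_assoc]

/-- Pushforward of cochains along `π`: the sum over all lifts of the variables. -/
def fiberSum (π : G → G') [∀ h, Fintype (π ⁻¹' {h})] :
    HomogeneousCochain G M n →ₗ[k] HomogeneousCochain G' M n :=
  LinearMap.pi fun h => ∑ g : (i : Fin n) → π ⁻¹' {h i}, LinearMap.proj fun i => (g i : G)

lemma fiberSum_apply (π : G → G') [∀ h, Fintype (π ⁻¹' {h})] (F : HomogeneousCochain G M n)
    (h : Fin n → G') :
    fiberSum k π F h = ∑ g : (i : Fin n) → π ⁻¹' {h i}, F fun i => g i := by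
  simp [fiberSum]

section Group

variable {k} [Group G] [Group G'] (ρ : Representation k G' M) {π : G →* G'}

lemma inflate_translation (c : G) (F : HomogeneousCochain G' M n) :
    inflate k π (translation ρ (π c) F) =
      translation (ρ.comp π) c (inflate k π F) := by
  funext x
  have comp_smul : π ∘ (c⁻¹ • x) = (π c)⁻¹ • (π ∘ x) := by
    funext i
    simp
  simp [comp_smul]

lemma inflate_mem_cocycles {F : HomogeneousCochain G' M n} (hF : F ∈ cocycles ρ n) :
    inflate k π F ∈ cocycles (ρ.comp π) n := by
  have coboundary_eq_zero : coboundary k (inflate k π F) = 0 := by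
    rw [← inflate_coboundary, hF.2, map_zero]
  exact ⟨fun c => by rw [← inflate_translation, hF.1 (π c)], coboundary_eq_zero⟩

variable [∀ h, Fintype (π ⁻¹' {h})]

lemma fiberSum_translation (c : G) (F : HomogeneousCochain G M n) :
    fiberSum k π (translation (ρ.comp π) c F) =
      translation ρ (π c) (fiberSum k π F) := by
  funext h
  have mem_fiber_iff (i : Fin n) (g : G) :
      g ∈ π ⁻¹' {h i} ↔ c⁻¹ * g ∈ π ⁻¹' {((π c)⁻¹ • h) i} := by simp
  simp only [fiberSum_apply, translation_apply, map_sum]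
  exact Fintype.sum_equiv
    (.piCongrRight fun i => (Equiv.mulLeft c⁻¹).subtypeEquiv (mem_fiber_iff i)) _ _ fun g => rfl

lemma fiberSum_mem_invariants (hπ : Function.Surjective π) {F : HomogeneousCochain G M n}
    (hF : F ∈ (translation (ρ.comp π)).invariants) :
    fiberSum k π F ∈ (translation ρ).invariants := by
  intro c
  obtain ⟨c, rfl⟩ := hπ c
  rw [← fiberSum_translation, hF c]

lemma card_fiber (hπ : Function.Surjective π) (h : G') :
    Fintype.card (π ⁻¹' {h}) = Nat.card π.ker := by
  rw [← Nat.card_eq_fintype_card, Nat.card_congr (MonoidHom.fiberEquivKerOfSurjective hπ h)]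

lemma fiberSum_coboundary (hπ : Function.Surjective π)
    (F : HomogeneousCochain G M n) :
    fiberSum k π (coboundary k F) =
      (Nat.card π.ker : k) • coboundary k (fiberSum k π F) := by
  funext h
  have sum_succAbove (p : Fin (n + 1)) :
      ∑ g : (i : Fin (n + 1)) → π ⁻¹' {h i}, F ((fun i => (g i : G)) ∘ p.succAbove) =
        Nat.card π.ker • fiberSum k π F (h ∘ p.succAbove) := by
    rw [← Equiv.sum_comp (Fin.insertNthEquiv (fun i => π ⁻¹' {h i}) p), Fintype.sum_prod_type]
    simp [Function.comp_def, fiberSum_apply, card_fiber hπ]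
  rw [Pi.smul_apply, fiberSum_apply, coboundary_apply, Finset.smul_sum]
  simp only [coboundary_apply]
  rw [Finset.sum_comm]
  refine Finset.sum_congr rfl fun p _ => ?_
  rw [← Finset.smul_sum, sum_succAbove, ← Nat.cast_smul_eq_nsmul k, smul_comm]

lemma fiberSum_inflate (hπ : Function.Surjective π) (F : HomogeneousCochain G' M n) :
    fiberSum k π (inflate k π F) = (Nat.card π.ker : k) ^ n • F := by
  funext h
  have comp_lift (g : (i : Fin n) → π ⁻¹' {h i}) : π ∘ (fun i => (g i : G)) = h :=
    funext fun i => (g i).2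
  simp [fiberSum_apply, comp_lift, card_fiber hπ, ← Nat.cast_smul_eq_nsmul k]

variable (k M π) in
/-- The failure of `inflate` to be a left inverse of `fiberSum`, up to the number of lifts. -/
noncomputable def defect (n : ℕ) : HomogeneousCochain G M n →ₗ[k] HomogeneousCochain G M n :=
  inflate k π ∘ₗ fiberSum k π - (Nat.card π.ker : k) ^ n • LinearMap.id

lemma defect_apply (F : HomogeneousCochain G M n) :
    defect k M π n F =
      inflate k π (fiberSum k π F) - (Nat.card π.ker : k) ^ n • F := rfl

lemma defect_zero : defect k M π 0 = 0 := by
  refine LinearMap.ext fun F => funext fun x => ?_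
  simp [defect_apply, fiberSum_apply, Subsingleton.elim _ x]

lemma defect_translation (c : G) (F : HomogeneousCochain G M n) :
    defect k M π n (translation (ρ.comp π) c F) =
      translation (ρ.comp π) c (defect k M π n F) := by
  rw [defect_apply, fiberSum_translation, inflate_translation, defect_apply, map_sub, map_smul]

lemma defect_coboundary (hπ : Function.Surjective π) (F : HomogeneousCochain G M n) :
    defect k M π (n + 1) (coboundary k F) =
      (Nat.card π.ker : k) • coboundary k (defect k M π n F) := by
  rw [defect_apply, fiberSum_coboundary hπ, map_smul, inflate_coboundary, defect_apply, map_sub,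
    map_smul, smul_sub, smul_smul, pow_succ']

lemma exists_coboundary_eq_defect (hπ : Function.Surjective π)
    {F : HomogeneousCochain G M (n + 1)} (hF : F ∈ cocycles (ρ.comp π) (n + 1)) :
    ∃ E ∈ (translation (ρ.comp π)).invariants, coboundary k E = defect k M π (n + 1) F := by
  refine ⟨(Nat.card π.ker : k) • coneHomotopy (defect k M π) (Nat.card π.ker : k) n F,
    Submodule.smul_mem _ _ fun c => ?_, ?_⟩
  · rw [← coneHomotopy_translation _ fun n => defect_translation (n := n) ρ, hF.1 c]
  · have homotopy := coneHomotopy_coboundary_add (T := defect k M π) defect_zero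
      (fun n => defect_coboundary (n := n) hπ) F
    rwa [hF.2, map_zero, zero_add, ← map_smul] at homotopy

lemma card_smul_fiberSum_mem_cocycles (hπ : Function.Surjective π)
    {F : HomogeneousCochain G M n} (hF : F ∈ cocycles (ρ.comp π) n) :
    (Nat.card π.ker : k) • fiberSum k π F ∈ cocycles ρ n := by
  have coboundary_eq_zero : coboundary k ((Nat.card π.ker : k) • fiberSum k π F) = 0 := by
    rw [map_smul, ← fiberSum_coboundary hπ, hF.2, map_zero]
  exact ⟨Submodule.smul_mem _ _ (fiberSum_mem_invariants ρ hπ hF.1), coboundary_eq_zero⟩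

end Group

end Inflation

section Homogenization

universe u

variable {k G : Type u} [CommRing k] [Group G] (A : Rep.{u} k G)

/-- Homogeneous cochains of degree `n` are inhomogeneous ones in the successive ratios of the
variables. -/
noncomputable def homogenize (n : ℕ) :
    ((Fin n → G) → A) ≃ₗ[k] (translation (n := n + 1) A.ρ).invariants where
  toFun f := ⟨fun x => A.ρ (x 0) (f fun i => (x i.castSucc)⁻¹ * x i.succ),
    (mem_invariants_translation _).2 fun c x => by simp [mul_assoc]⟩
  invFun F g := F.1 (Fin.partialProd g)
  map_add' f f' := by ext; simp
  map_smul' r f := by ext; simp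
  left_inv f := by
    funext g
    simp [Fin.partialProd_right_inv]
  right_inv F := by
    ext x
    exact ((mem_invariants_translation _).1 F.2 (x 0) _).symm.trans
      (congrArg F.1 (Fin.partialProd_left_inv x))

@[simp]
lemma homogenize_symm_apply {n : ℕ} (F : (translation (n := n + 1) A.ρ).invariants)
    (g : Fin n → G) : (homogenize A n).symm F g = F.1 (Fin.partialProd g) := rfl

lemma d_homogenize_symm {n : ℕ} (F : (translation (n := n + 1) A.ρ).invariants) :
    inhomogeneousCochains.d A n ((homogenize A n).symm F) =
      (homogenize A (n + 1)).symm ⟨coboundary k F.1, coboundary_mem_invariants _ F.2⟩ := by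
  funext g
  have partialProd_comp_succ :
      Fin.partialProd g ∘ Fin.succAbove 0 = g 0 • Fin.partialProd (Fin.tail g) := by
    funext i
    simp [Fin.partialProd_succ']
  rw [inhomogeneousCochains.d_hom_apply, homogenize_symm_apply, homogenize_symm_apply]
  dsimp only
  conv_rhs =>
    rw [coboundary_apply, Fin.sum_univ_succ, partialProd_comp_succ,
      (mem_invariants_translation _).1 F.2]
  congr 1
  · simp [Fin.tail_def]
  · simp [Fin.partialProd_contractNth]

lemma d_homogenize_symm_eq_zero_iff {n : ℕ} (F : (translation (n := n + 1) A.ρ).invariants) :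
    inhomogeneousCochains.d A n ((homogenize A n).symm F) = 0 ↔ coboundary k F.1 = 0 := by
  rw [d_homogenize_symm, LinearEquiv.map_eq_zero_iff, Submodule.mk_eq_zero]

/-- The inhomogeneous form of an equivariant homogeneous cocycle. -/
noncomputable def dehomogenizeCocycle (n : ℕ) :
    ModuleCat.of k (cocycles A.ρ (n + 1)) ⟶ groupCohomology.cocycles A n :=
  (groupCohomology.inhomogeneousCochains A).liftCycles
    (ModuleCat.ofHom ((homogenize A n).symm.toLinearMap ∘ₗ Submodule.inclusion inf_le_left))
    (n + 1) (by simp) (by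
      ext z : 2
      rw [groupCohomology.inhomogeneousCochains.d_def]
      exact (d_homogenize_symm_eq_zero_iff A _).2 z.2.2)

lemma dehomogenizeCocycle_comp_iCocycles (n : ℕ) :
    dehomogenizeCocycle A n ≫ groupCohomology.iCocycles A n = ModuleCat.ofHom
      ((homogenize A n).symm.toLinearMap ∘ₗ Submodule.inclusion inf_le_left) :=
  HomologicalComplex.liftCycles_i ..

lemma iCocycles_dehomogenizeCocycle {n : ℕ} (z : cocycles A.ρ (n + 1)) :
    groupCohomology.iCocycles A n (dehomogenizeCocycle A n z) = (homogenize A n).symm ⟨z, z.2.1⟩ :=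
  ConcreteCategory.congr_hom (dehomogenizeCocycle_comp_iCocycles A n) z

lemma iCocycles_injective (n : ℕ) : Function.Injective (groupCohomology.iCocycles A n) :=
  (ModuleCat.mono_iff_injective _).1 inferInstance

lemma dehomogenizeCocycle_surjective (n : ℕ) : Function.Surjective (dehomogenizeCocycle A n) := by
  intro z
  obtain ⟨F, hF⟩ := (homogenize A n).symm.surjective (groupCohomology.iCocycles A n z)
  have d_eq_zero : inhomogeneousCochains.d A n (groupCohomology.iCocycles A n z) = 0 := by
    rw [← groupCohomology.inhomogeneousCochains.d_def]
    exact ConcreteCategory.congr_hom (HomologicalComplex.iCycles_d ..) z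
  rw [← hF, d_homogenize_symm_eq_zero_iff] at d_eq_zero
  exact ⟨⟨F, F.2, d_eq_zero⟩,
    iCocycles_injective A n ((iCocycles_dehomogenizeCocycle A _).trans hF)⟩

/-- The cohomology class of a homogeneous cocycle. -/
noncomputable def cohomologyClass (n : ℕ) : cocycles A.ρ (n + 1) →ₗ[k] groupCohomology A n :=
  (groupCohomology.π A n).hom ∘ₗ (dehomogenizeCocycle A n).hom

lemma cohomologyClass_apply {n : ℕ} (z : cocycles A.ρ (n + 1)) :
    cohomologyClass A n z = groupCohomology.π A n (dehomogenizeCocycle A n z) := rfl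

lemma cohomologyClass_surjective (n : ℕ) : Function.Surjective (cohomologyClass A n) := by
  intro x
  induction x using groupCohomology_induction_on with | h z =>
  obtain ⟨F, rfl⟩ := dehomogenizeCocycle_surjective A n z
  exact ⟨F, rfl⟩

lemma π_eq_zero_iff {n : ℕ} (z : groupCohomology.cocycles A (n + 1)) :
    groupCohomology.π A (n + 1) z = 0 ↔
      ∃ f, inhomogeneousCochains.d A n f = groupCohomology.iCocycles A (n + 1) z := by
  have exact_π := (ShortComplex.moduleCat_exact_iff _).1 (ShortComplex.exact_of_g_is_cokernel
    (.mk _ _ (HomologicalComplex.toCycles_comp_homologyπ ..))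
    ((groupCohomology.inhomogeneousCochains A).homologyIsCokernel n (n + 1) (by simp)))
  have d_eq (f : (Fin n → G) → A) : inhomogeneousCochains.d A n f =
      groupCohomology.iCocycles A (n + 1) (groupCohomology.toCocycles A n (n + 1) f) := by
    rw [← groupCohomology.inhomogeneousCochains.d_def]
    exact (ConcreteCategory.congr_hom
      (HomologicalComplex.toCycles_i (groupCohomology.inhomogeneousCochains A) n (n + 1)) f).symm
  simp only [d_eq, (iCocycles_injective A _).eq_iff]
  refine ⟨exact_π z, ?_⟩
  rintro ⟨f, rfl⟩
  exact ConcreteCategory.congr_hom (HomologicalComplex.toCycles_comp_homologyπ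
    (groupCohomology.inhomogeneousCochains A) n (n + 1)) f

lemma cohomologyClass_eq_zero_iff {n : ℕ} {z : cocycles A.ρ (n + 2)} :
    cohomologyClass A (n + 1) z = 0 ↔
      ∃ F ∈ (translation A.ρ).invariants, coboundary k F = z.1 := by
  rw [cohomologyClass_apply, π_eq_zero_iff, iCocycles_dehomogenizeCocycle]
  constructor
  · rintro ⟨f, hf⟩
    obtain ⟨F, rfl⟩ := (homogenize A n).symm.surjective f
    rw [d_homogenize_symm, EmbeddingLike.apply_eq_iff_eq] at hf
    exact ⟨F, F.2, congrArg Subtype.val hf⟩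
  · rintro ⟨F, hF, hFz⟩
    refine ⟨(homogenize A n).symm ⟨F, hF⟩, ?_⟩
    rw [d_homogenize_symm]
    exact congrArg _ (Subtype.ext hFz)

end Homogenization

section InflationClass

universe u

variable {k G G' : Type u} [CommRing k] [Group G] [Group G'] {n : ℕ}
  (π : G →* G') (A : Rep.{u} k G')

lemma partialProd_comp {M M' : Type*} [Monoid M] [Monoid M'] (φ : M →* M') (g : Fin n → M) :
    Fin.partialProd (φ ∘ g) = φ ∘ Fin.partialProd g := by
  funext i
  induction i using Fin.induction with
  | zero => simp
  | succ i ih => simpa [Fin.partialProd_succ] using congrArg (· * φ (g i)) ih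

lemma map_cohomologyClass (z : cocycles A.ρ (n + 1)) :
    groupCohomology.map π (𝟙 (Rep.res π A)) n (cohomologyClass A n z) =
      cohomologyClass (Rep.res π A) n ⟨inflate k π z.1, inflate_mem_cocycles A.ρ z.2⟩ := by
  rw [cohomologyClass_apply, cohomologyClass_apply, groupCohomology.π_map_apply]
  congr 1
  apply iCocycles_injective
  rw [iCocycles_dehomogenizeCocycle]
  have cyclesMap_i := ConcreteCategory.congr_hom (HomologicalComplex.cyclesMap_i
    (groupCohomology.cochainsMap π (𝟙 (Rep.res π A))) n) (dehomogenizeCocycle A n z)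
  refine cyclesMap_i.trans ?_
  funext g
  change groupCohomology.iCocycles A n (dehomogenizeCocycle A n z) (π ∘ g) =
    z.1 (π ∘ Fin.partialProd g)
  rw [iCocycles_dehomogenizeCocycle, homogenize_symm_apply, partialProd_comp]

end InflationClass

end HomogeneousCochain

section Torsion

open Submodule

variable {R M N : Type*} [CommRing R] [AddCommGroup M] [Module R M] [AddCommGroup N] [Module R N]
  {a b : R}

lemma nonempty_torsionBy_linearEquiv_of_isCoprime (hab : IsCoprime a b) (f : M →ₗ[R] N)
    (hker : ∀ x, f x = 0 → b • x = 0) (hcoker : ∀ y, ∃ x, f x = b • y) :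
    Nonempty (torsionBy R M a ≃ₗ[R] torsionBy R N a) := by
  obtain ⟨u, v, huv⟩ := hab
  have map_torsionBy : ∀ x ∈ torsionBy R M a, f x ∈ torsionBy R N a := fun x hx => by
    rw [mem_torsionBy_iff] at hx ⊢
    rw [← map_smul, hx, map_zero]
  refine ⟨.ofBijective (f.restrict map_torsionBy) ⟨?_, ?_⟩⟩
  · refine (injective_iff_map_eq_zero _).2 fun ⟨x, hx⟩ hfx => Subtype.ext ?_
    rw [mem_torsionBy_iff] at hx
    calc x = u • a • x + v • b • x := by rw [smul_smul, smul_smul, ← add_smul, huv, one_smul]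
      _ = 0 := by rw [hx, hker x (congrArg Subtype.val hfx), smul_zero, smul_zero, add_zero]
  · rintro ⟨y, hy⟩
    rw [mem_torsionBy_iff] at hy
    have smul_eq_self : v • b • y = y := by
      calc v • b • y = u • a • y + v • b • y := by rw [hy, smul_zero, zero_add]
        _ = y := by rw [smul_smul, smul_smul, ← add_smul, huv, one_smul]
    obtain ⟨x, hx⟩ := hcoker y
    have smul_map_eq_zero : f (a • x) = 0 := by rw [map_smul, hx, smul_comm, hy, smul_zero]
    refine ⟨⟨v • b • v • x, ?_⟩, Subtype.ext ?_⟩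
    · rw [mem_torsionBy_iff, smul_comm b v, smul_comm a, smul_comm a, smul_comm a,
        hker _ smul_map_eq_zero, smul_zero, smul_zero]
    · simp [hx, smul_eq_self]

lemma isCompl_torsionBy (hab : IsCoprime a b) (hM : Module.IsTorsionBy R M (a * b)) :
    IsCompl (torsionBy R M a) (torsionBy R M b) := by
  obtain ⟨u, v, huv⟩ := hab
  have eq_add (x : M) : x = u • a • x + v • b • x := by
    rw [smul_smul, smul_smul, ← add_smul, huv, one_smul]
  refine ⟨disjoint_def.2 fun x hxa hxb => ?_, codisjoint_iff_exists_add_eq.2 fun x => ?_⟩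
  · rw [eq_add x, (mem_torsionBy_iff a x).1 hxa, (mem_torsionBy_iff b x).1 hxb]
    simp
  · refine ⟨v • b • x, u • a • x, ?_, ?_, ?_⟩
    · rw [mem_torsionBy_iff, smul_comm, smul_smul a, hM, smul_zero]
    · rw [mem_torsionBy_iff, smul_comm, smul_smul b, mul_comm, hM, smul_zero]
    · rw [add_comm, ← eq_add]

lemma nonempty_linearEquiv_of_torsionBy (hab : IsCoprime a b)
    (hM : Module.IsTorsionBy R M (a * b)) (hN : Module.IsTorsionBy R N (a * b))
    (ha : Nonempty (torsionBy R M a ≃ₗ[R] torsionBy R N a))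
    (hb : Nonempty (torsionBy R M b ≃ₗ[R] torsionBy R N b)) : Nonempty (M ≃ₗ[R] N) := by
  obtain ⟨ea⟩ := ha
  obtain ⟨eb⟩ := hb
  exact ⟨(prodEquivOfIsCompl _ _ (isCompl_torsionBy hab hM)).symm ≪≫ₗ ea.prodCongr eb ≪≫ₗ
    prodEquivOfIsCompl _ _ (isCompl_torsionBy hab hN)⟩

end Torsion

lemma range_eq_top_of_card_eq {G H : Type*} [Group G] [Group H] [Finite H] {f : G →* H}
    [Finite f.ker] (h : Nat.card G = Nat.card f.ker * Nat.card H) : f.range = ⊤ := by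
  rw [← f.ker.card_mul_index, Subgroup.index_ker] at h
  exact Subgroup.eq_top_of_card_eq _ (Nat.eq_of_mul_eq_mul_left Nat.card_pos h)

section SemidirectProduct

open SemidirectProduct

section Group

variable {N Q : Type*} [Group N] [Group Q]

/-- `N ⋊[f] Q → N ⋊ f(Q)`, through which the action of `Q` becomes faithful. -/
def toFaithful (f : Q →* MulAut N) : N ⋊[f] Q →* N ⋊[f.range.subtype] f.range :=
  SemidirectProduct.map (.id N) f.rangeRestrict fun _ => rfl

variable {f f₁ f₂ : Q →* MulAut N}

lemma card_ker_rightHom : Nat.card (rightHom : N ⋊[f] Q →* Q).ker = Nat.card N := by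
  rw [← range_inl_eq_ker_rightHom,
    Nat.card_congr (MonoidHom.ofInjective inl_injective).symm.toEquiv]

lemma toFaithful_surjective : Function.Surjective (toFaithful f) := by
  intro x
  obtain ⟨q, hq⟩ := f.rangeRestrict_surjective x.right
  exact ⟨⟨x.left, q⟩, SemidirectProduct.ext rfl hq⟩

lemma rightHom_injOn_ker_toFaithful :
    Set.InjOn (rightHom : N ⋊[f] Q →* Q) (toFaithful f).ker := fun _ hx _ hy hxy =>
  SemidirectProduct.ext ((congrArg left hx).trans (congrArg left hy).symm) hxy

lemma card_ker_toFaithful_dvd : Nat.card (toFaithful f).ker ∣ Nat.card Q :=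
  Subgroup.card_dvd_of_injective (rightHom.comp (toFaithful f).ker.subtype)
    rightHom_injOn_ker_toFaithful.injective

lemma right_eq_one_iff_pow_card_eq_one (hNQ : (Nat.card N).Coprime (Nat.card Q)) {x : N ⋊[f] Q} :
    x.right = 1 ↔ x ^ Nat.card N = 1 := by
  refine ⟨fun hx => ?_, fun hx => ?_⟩
  · have x_eq : x = inl x.left := SemidirectProduct.ext rfl hx
    rw [x_eq, ← map_pow, pow_card_eq_one', map_one]
  · refine (pow_eq_one_iff_of_coprime hNQ).1 ⟨?_, pow_card_eq_one'⟩
    rw [← rightHom_eq_right, ← map_pow, hx, map_one]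

lemma right_eq_one_iff_of_mulEquiv (hNQ : (Nat.card N).Coprime (Nat.card Q))
    (θ : N ⋊[f₁] Q ≃* N ⋊[f₂] Q) {x : N ⋊[f₁] Q} : (θ x).right = 1 ↔ x.right = 1 := by
  rw [right_eq_one_iff_pow_card_eq_one hNQ, right_eq_one_iff_pow_card_eq_one hNQ, ← map_pow,
    EmbeddingLike.map_eq_one_iff]

lemma exists_mulEquiv_right (hNQ : (Nat.card N).Coprime (Nat.card Q))
    (θ : N ⋊[f₁] Q ≃* N ⋊[f₂] Q) : ∃ e : Q ≃* Q, ∀ x, (θ x).right = e x.right := by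
  let φ : Q →* Q := (rightHom.comp θ.toMonoidHom).comp inr
  have right_map (x : N ⋊[f₁] Q) : (θ x).right = φ x.right := by
    have right_map_inl : (θ (inl x.left)).right = 1 :=
      (right_eq_one_iff_of_mulEquiv hNQ θ).2 (right_inl _)
    rw [← inl_left_mul_inr_right x, map_mul, mul_right, right_map_inl, one_mul]
    simp [φ]
  refine ⟨.ofBijective φ ⟨?_, fun q => ?_⟩, right_map⟩
  · refine (injective_iff_map_eq_one φ).2 fun q hq => ?_
    exact right_inr (φ := f₁) q ▸ (right_eq_one_iff_of_mulEquiv hNQ θ).1 hq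
  · exact ⟨(θ.symm (inr q)).right, by rw [← right_map, θ.apply_symm_apply, right_inr]⟩

end Group

section CommGroup

variable {N Q : Type*} [CommGroup N] [Group Q] {f f₁ f₂ : Q →* MulAut N}

lemma right_mem_ker_iff_forall_commute {x : N ⋊[f] Q} :
    x.right ∈ f.ker ↔ ∀ y : N ⋊[f] Q, y.right = 1 → Commute x y := by
  rw [MonoidHom.mem_ker]
  refine ⟨fun hx y hy => ?_, fun hx => MulEquiv.ext fun a => ?_⟩
  · ext <;> simp [hx, hy, mul_comm]
  · have left_eq := congrArg left (hx (inl a) (right_inl a)).eq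
    simpa [mul_comm a] using left_eq

lemma exists_mulEquiv_map_ker_eq (hNQ : (Nat.card N).Coprime (Nat.card Q))
    (θ : N ⋊[f₁] Q ≃* N ⋊[f₂] Q) : ∃ e : Q ≃* Q, f₁.ker.map e.toMonoidHom = f₂.ker := by
  obtain ⟨e, he⟩ := exists_mulEquiv_right hNQ θ
  refine ⟨e, Subgroup.ext fun q => ?_⟩
  obtain ⟨x, rfl⟩ : ∃ x, (θ x).right = q := ⟨θ.symm (inr q), by simp⟩
  rw [Subgroup.mem_map_equiv, he, e.symm_apply_apply, ← he, right_mem_ker_iff_forall_commute,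
    right_mem_ker_iff_forall_commute, ← θ.forall_congr_right]
  exact forall_congr' fun y =>
    imp_congr (right_eq_one_iff_of_mulEquiv hNQ θ).symm (commute_map_iff θ.injective).symm

end CommGroup

end SemidirectProduct

section Cohomology

open SemidirectProduct Submodule HomogeneousCochain

universe u

section Group

variable {k G G' : Type u} [CommRing k] [Group G] [Group G'] {n : ℕ}

lemma card_smul_groupCohomology_eq_zero [Finite G] {A : Rep.{u} k G}
    (x : groupCohomology A (n + 1)) : (Nat.card G : k) • x = 0 := by
  obtain ⟨z, rfl⟩ := cohomologyClass_surjective A (n + 1) x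
  rw [← map_smul, cohomologyClass_eq_zero_iff]
  exact exists_coboundary_eq_card_smul z.2

variable {π : G →* G'} {A : Rep.{u} k G'} [Finite π.ker]

lemma card_ker_pow_smul_eq_zero_of_groupCohomology_map_eq_zero (hπ : Function.Surjective π)
    {x : groupCohomology A (n + 1)}
    (hx : groupCohomology.map π (𝟙 (Rep.res π A)) (n + 1) x = 0) :
    (Nat.card π.ker : k) ^ (n + 2) • x = 0 := by
  have := Fintype.ofFinite π.ker
  have (h : G') : Fintype (π ⁻¹' {h}) :=
    Fintype.ofEquiv _ (MonoidHom.fiberEquivKerOfSurjective hπ h).symm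
  obtain ⟨z, rfl⟩ := cohomologyClass_surjective A (n + 1) x
  rw [map_cohomologyClass, cohomologyClass_eq_zero_iff] at hx
  obtain ⟨E, hE, hEz⟩ := hx
  rw [← map_smul, cohomologyClass_eq_zero_iff]
  refine ⟨(Nat.card π.ker : k) • fiberSum k π E,
    Submodule.smul_mem _ _ (fiberSum_mem_invariants A.ρ hπ hE), ?_⟩
  rw [map_smul, ← fiberSum_coboundary hπ, hEz, fiberSum_inflate hπ]
  rfl

lemma exists_groupCohomology_map_eq_card_ker_pow_smul (hπ : Function.Surjective π)
    (y : groupCohomology (Rep.res π A) (n + 1)) :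
    ∃ x, groupCohomology.map π (𝟙 (Rep.res π A)) (n + 1) x =
      (Nat.card π.ker : k) ^ (n + 3) • y := by
  have := Fintype.ofFinite π.ker
  have (h : G') : Fintype (π ⁻¹' {h}) :=
    Fintype.ofEquiv _ (MonoidHom.fiberEquivKerOfSurjective hπ h).symm
  obtain ⟨z, rfl⟩ := cohomologyClass_surjective (Rep.res π A) (n + 1) y
  obtain ⟨E, hE, hEz⟩ := exists_coboundary_eq_defect A.ρ hπ z.2
  refine ⟨cohomologyClass A (n + 1) ⟨_, card_smul_fiberSum_mem_cocycles A.ρ hπ z.2⟩, ?_⟩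
  rw [map_cohomologyClass, ← (cohomologyClass _ _).map_smul, ← sub_eq_zero, ← map_sub,
    cohomologyClass_eq_zero_iff]
  refine ⟨(Nat.card π.ker : k) • E, Submodule.smul_mem _ _ hE, ?_⟩
  rw [map_smul, hEz, defect_apply]
  simp [smul_sub, smul_smul, pow_succ']

variable (A) in
lemma nonempty_torsionBy_groupCohomology_res (hπ : Function.Surjective π) {m : ℕ}
    (hm : m.Coprime (Nat.card π.ker)) (n : ℕ) :
    Nonempty (torsionBy k (groupCohomology A (n + 1)) (m : k) ≃ₗ[k]
      torsionBy k (groupCohomology (Rep.res π A) (n + 1)) (m : k)) := by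
  refine nonempty_torsionBy_linearEquiv_of_isCoprime (b := (Nat.card π.ker : k) ^ (n + 3))
    hm.cast.pow_right (groupCohomology.map π (𝟙 (Rep.res π A)) (n + 1)).hom (fun x hx => ?_)
    (exists_groupCohomology_map_eq_card_ker_pow_smul hπ)
  rw [pow_succ', mul_smul, card_ker_pow_smul_eq_zero_of_groupCohomology_map_eq_zero hπ hx,
    smul_zero]

end Group

variable {k N Q A : Type u} [CommRing k] [Group N] [Group Q] [AddCommGroup A] [Module k A]
  {f f₁ f₂ : Q →* MulAut N}

lemma nonempty_torsionBy_card_right_groupCohomology [Finite N]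
    (hNQ : (Nat.card N).Coprime (Nat.card Q)) (n : ℕ) :
    Nonempty (torsionBy k (groupCohomology (Rep.trivial k Q A) (n + 1)) (Nat.card Q : k) ≃ₗ[k]
      torsionBy k (groupCohomology (Rep.trivial k (N ⋊[f] Q) A) (n + 1)) (Nat.card Q : k)) := by
  have : Finite (rightHom : N ⋊[f] Q →* Q).ker :=
    Nat.finite_of_card_ne_zero (card_ker_rightHom.trans_ne Nat.card_pos.ne')
  exact nonempty_torsionBy_groupCohomology_res (Rep.trivial k Q A) rightHom_surjective
    (by rw [card_ker_rightHom]; exact hNQ.symm) n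

lemma nonempty_torsionBy_card_left_groupCohomology [Finite Q]
    (hNQ : (Nat.card N).Coprime (Nat.card Q)) (n : ℕ) :
    Nonempty (torsionBy k (groupCohomology (Rep.trivial k (N ⋊[f.range.subtype] f.range) A) (n + 1))
      (Nat.card N : k) ≃ₗ[k]
      torsionBy k (groupCohomology (Rep.trivial k (N ⋊[f] Q) A) (n + 1)) (Nat.card N : k)) := by
  have : Finite (toFaithful f).ker := .of_injective _ rightHom_injOn_ker_toFaithful.injective
  exact nonempty_torsionBy_groupCohomology_res (Rep.trivial k _ A) toFaithful_surjective
    (hNQ.coprime_dvd_right card_ker_toFaithful_dvd) n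

variable [Finite N] [Finite Q]

lemma isTorsionBy_groupCohomology_semidirectProduct (B : Rep.{u} k (N ⋊[f] Q)) (n : ℕ) :
    Module.IsTorsionBy k (groupCohomology B (n + 1)) (Nat.card N * Nat.card Q : k) := by
  have : Finite (N ⋊[f] Q) := .of_equiv _ equivProd.symm
  intro x
  rw [← Nat.cast_mul, ← SemidirectProduct.card (φ := f), card_smul_groupCohomology_eq_zero]

theorem nonempty_groupCohomology_semidirectProduct_linearEquiv
    (hNQ : (Nat.card N).Coprime (Nat.card Q)) (hf : f₁.range = f₂.range) (n : ℕ) :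
    Nonempty (groupCohomology (Rep.trivial k (N ⋊[f₁] Q) A) n ≃ₗ[k]
      groupCohomology (Rep.trivial k (N ⋊[f₂] Q) A) n) := by
  cases n with
  | zero => exact ⟨(groupCohomology.H0IsoOfIsTrivial (Rep.trivial k (N ⋊[f₁] Q) A) ≪≫
      (groupCohomology.H0IsoOfIsTrivial (Rep.trivial k (N ⋊[f₂] Q) A)).symm).toLinearEquiv⟩
  | succ n =>
    refine nonempty_linearEquiv_of_torsionBy hNQ.cast
      (isTorsionBy_groupCohomology_semidirectProduct _ n)
      (isTorsionBy_groupCohomology_semidirectProduct _ n) ?_ ?_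
    · obtain ⟨e₁⟩ := nonempty_torsionBy_card_left_groupCohomology (k := k) (A := A) (f := f₁) hNQ n
      obtain ⟨e₂⟩ := nonempty_torsionBy_card_left_groupCohomology (k := k) (A := A) (f := f₂) hNQ n
      rw [← hf] at e₂
      exact ⟨e₁.symm ≪≫ₗ e₂⟩
    · obtain ⟨e₁⟩ := nonempty_torsionBy_card_right_groupCohomology (k := k) (A := A) (f := f₁) hNQ n
      obtain ⟨e₂⟩ := nonempty_torsionBy_card_right_groupCohomology (k := k) (A := A) (f := f₂) hNQ n
      exact ⟨e₁.symm ≪≫ₗ e₂⟩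

theorem order24_isomorphic_cohomology_general {k N Q A : Type u} [CommRing k] [CommGroup N]
    [Group Q] [AddCommGroup A] [Module k A] [Finite N] [Finite Q]
    (hNQ : (Nat.card N).Coprime (Nat.card Q)) {f₁ f₂ : Q →* MulAut N} (hf : f₁.range = f₂.range)
    (hker : ¬ ∃ e : Q ≃* Q, f₁.ker.map e.toMonoidHom = f₂.ker) :
    (¬ Nonempty (N ⋊[f₁] Q ≃* N ⋊[f₂] Q)) ∧ ∀ n : ℕ, Nonempty
      (groupCohomology (Rep.trivial k (N ⋊[f₁] Q) A) n ≃ₗ[k]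
        groupCohomology (Rep.trivial k (N ⋊[f₂] Q) A) n) :=
  ⟨fun ⟨θ⟩ => hker (exists_mulEquiv_map_ker_eq hNQ θ),
    nonempty_groupCohomology_semidirectProduct_linearEquiv hNQ hf⟩

end Cohomology

/-- Given a group `Q` of order 8 with non-isomorphic subgroups `Q₁`, `Q₂` of order 4, and
semidirect products `Gᵢ = C₃ ⋊ Q` via homomorphisms `Q → Aut(C₃)` with kernels `Q₁`, `Q₂`
respectively, the groups `G₁`, `G₂` are non-isomorphic of order 24 with isomorphic integral
cohomology in every degree. -/
theorem order24_isomorphic_cohomology (Q : Type) [Group Q] (hQ : Nat.card Q = 8)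
    (Q₁ Q₂ : Subgroup Q) (hQ₁ : Nat.card Q₁ = 4) (hQ₂ : Nat.card Q₂ = 4)
    (hQ₁₂ : ¬ Nonempty (Q₁ ≃* Q₂))
    (f₁ f₂ : Q →* MulAut (Multiplicative (ZMod 3)))
    (hf₁ : f₁.ker = Q₁) (hf₂ : f₂.ker = Q₂) :
    Nat.card (Multiplicative (ZMod 3) ⋊[f₁] Q) = 24 ∧
    Nat.card (Multiplicative (ZMod 3) ⋊[f₂] Q) = 24 ∧
    (¬ Nonempty ((Multiplicative (ZMod 3) ⋊[f₁] Q) ≃* (Multiplicative (ZMod 3) ⋊[f₂] Q))) ∧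
    ∀ n : ℕ, Nonempty
      ((groupCohomology (Rep.trivial ℤ (Multiplicative (ZMod 3) ⋊[f₁] Q) ℤ) n) ≃+
       (groupCohomology (Rep.trivial ℤ (Multiplicative (ZMod 3) ⋊[f₂] Q) ℤ) n)) := by
  subst hf₁ hf₂
  have card_C₃ : Nat.card (Multiplicative (ZMod 3)) = 3 := Nat.card_zmod 3
  have card_aut : Nat.card (MulAut (Multiplicative (ZMod 3))) = 2 := by
    rw [IsCyclic.card_mulAut, card_C₃, Nat.totient_prime Nat.prime_three]
  have := Nat.finite_of_card_ne_zero (hQ.trans_ne (by decide))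
  have range_eq_top (f : Q →* MulAut (Multiplicative (ZMod 3))) (hf : Nat.card f.ker = 4) :
      f.range = ⊤ :=
    range_eq_top_of_card_eq (by rw [hQ, hf, card_aut])
  have ⟨not_iso, cohomology_iso⟩ := order24_isomorphic_cohomology_general (k := ℤ) (A := ℤ)
    (by rw [card_C₃, hQ]; decide) ((range_eq_top f₁ hQ₁).trans (range_eq_top f₂ hQ₂).symm)
    fun ⟨e, he⟩ => hQ₁₂ ⟨(e.subgroupMap f₁.ker).trans (.subgroupCongr he)⟩
  have card_eq (f : Q →* MulAut (Multiplicative (ZMod 3))) :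
      Nat.card (Multiplicative (ZMod 3) ⋊[f] Q) = 24 := by
    rw [SemidirectProduct.card, card_C₃, hQ]
  exact ⟨card_eq f₁, card_eq f₂, not_iso, fun n => (cohomology_iso n).map (·.toAddEquiv)⟩
end
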